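/- arXiv:0907.3306 — 4 statements merged into one kernel-verified Lean document; each statement's English description precedes it below -/
import Mathlib

section
/- Let F be a field complete with respect to a nonarchimedean absolute value |·|, let q ∈ F with 0 < |q| < 1, let N ≥ 2 be an integer, and let a₁ ∈ ℚ with 0 ≤ a₁ < 1 and N·a₁ ∈ ℤ. Let ρ ∈ F with ρ^N = q^{N·a₁} (so |ρ| = |q|^{a₁}), with ρ = 1 in case a₁ = 0, and let ζ ∈ F be a root of unity of order dividing N, with ζ ≠ 1 in case a₁ = 0. Then the infinite product G = ∏_{n=0}^∞ (1 − qⁿρζ)(1 − q^{n+1}ρ^{−1}ζ^{−1}) converges in F, and: (i) if a₁ ≠ 0, then |G| = 1; (ii) if a₁ = 0 and there is no prime number p with |p| < 1 dividing the multiplicative order of ζ, then |G| = 1; (iii) if a₁ = 0 and p is a prime number with |p| < 1 dividing the multiplicative order of ζ, then |p|^{1/(p−1)} ≤ |G| ≤ 1. -/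
/-! For `‖x‖ ≤ 1` and `‖q y‖ < 1`, every factor of `∏ (1 - qⁿ x)(1 - qⁿ⁺¹ y)` other than `1 - x` has
absolute value one by the ultrametric inequality, so the product has absolute value `‖1 - x‖`.
This is one if `‖x‖ < 1`. If `x = ζ` is a root of unity and `d` divides its order, then some power
`η` of `ζ` is a primitive `d`-th root of unity, and `d = ∏_{0 < k < d} (1 - ηᵏ)`, in which each
factor is a multiple of `1 - ζ` by an integral element; hence `‖d‖ ≤ ‖1 - ζ‖ᵈ⁻¹`. -/

open Finset IsUltrametricDist

section NormedRing

variable {R : Type*} [NormedRing R] [NormOneClass R] [IsUltrametricDist R] {x : R}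

lemma norm_one_sub_le_one_of_norm_le_one (hx : ‖x‖ ≤ 1) : ‖1 - x‖ ≤ 1 := by
  simpa [sub_eq_add_neg, hx] using norm_add_le_max 1 (-x)

lemma norm_one_sub_eq_one_of_norm_lt_one (hx : ‖x‖ < 1) : ‖1 - x‖ = 1 := by
  have hne : ‖(1 : R)‖ ≠ ‖-x‖ := by simpa using hx.ne'
  simpa [sub_eq_add_neg, hx.le] using norm_add_eq_max_of_norm_ne_norm hne

lemma norm_one_sub_pow_le_norm_one_sub (hx : ‖x‖ ≤ 1) (n : ℕ) : ‖1 - x ^ n‖ ≤ ‖1 - x‖ := by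
  have hsum : ‖∑ i ∈ range n, x ^ i‖ ≤ 1 :=
    norm_sum_le_of_forall_le_of_nonneg zero_le_one fun i _ ↦
      (norm_pow_le x i).trans (pow_le_one₀ (norm_nonneg x) hx)
  rw [← mul_neg_geom_sum]
  exact (norm_mul_le _ _).trans (mul_le_of_le_one_right (norm_nonneg _) hsum)

end NormedRing

section RootsOfUnity

variable {R : Type*} [NormedCommRing R] [NormMulClass R] [NormOneClass R] [IsUltrametricDist R]

lemma norm_natCast_le_norm_one_sub_pow_of_isPrimitiveRoot {η : R} {n : ℕ}
    (hη : IsPrimitiveRoot η n) : ‖(n : R)‖ ≤ ‖1 - η‖ ^ (n - 1) := by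
  have : Nontrivial R := NormOneClass.nontrivial
  have : IsDomain R := NoZeroDivisors.to_isDomain R
  obtain _ | m := n
  · simp
  have hη_norm : ‖η‖ = 1 := (hη.isOfFinOrder m.succ_ne_zero).norm_eq_one
  calc ‖((m + 1 : ℕ) : R)‖ = ∏ k ∈ range m, ‖1 - η ^ (k + 1)‖ := by
        rw [Nat.cast_succ, ← hη.prod_one_sub_pow_eq_order, norm_prod]
    _ ≤ ∏ _k ∈ range m, ‖1 - η‖ :=
        prod_le_prod (fun _ _ ↦ norm_nonneg _) fun k _ ↦
          norm_one_sub_pow_le_norm_one_sub hη_norm.le (k + 1)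
    _ = ‖1 - η‖ ^ m := by rw [prod_const, card_range]

variable {ζ : R} {d : ℕ}

lemma norm_natCast_le_norm_one_sub_pow_of_dvd_orderOf (hζ : IsOfFinOrder ζ)
    (hd : d ∣ orderOf ζ) : ‖(d : R)‖ ≤ ‖1 - ζ‖ ^ (d - 1) := by
  have hη : IsPrimitiveRoot (ζ ^ (orderOf ζ / d)) d := by
    simpa only [orderOf_pow_orderOf_div hζ.orderOf_pos.ne' hd] using
      IsPrimitiveRoot.orderOf (ζ ^ (orderOf ζ / d))
  calc ‖(d : R)‖ ≤ ‖1 - ζ ^ (orderOf ζ / d)‖ ^ (d - 1) :=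
        norm_natCast_le_norm_one_sub_pow_of_isPrimitiveRoot hη
    _ ≤ ‖1 - ζ‖ ^ (d - 1) := by
        gcongr
        exact norm_one_sub_pow_le_norm_one_sub hζ.norm_eq_one.le _

lemma norm_natCast_rpow_le_norm_one_sub_of_dvd_orderOf (hζ : IsOfFinOrder ζ) (hd : 1 < d)
    (hdvd : d ∣ orderOf ζ) : ‖(d : R)‖ ^ ((1 : ℝ) / ((d : ℝ) - 1)) ≤ ‖1 - ζ‖ := by
  have hpos : (0 : ℝ) < (d : ℝ) - 1 := sub_pos.2 (Nat.one_lt_cast.2 hd)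
  rw [one_div, Real.rpow_inv_le_iff_of_pos (norm_nonneg _) (norm_nonneg _) hpos,
    ← Nat.cast_pred (zero_lt_one.trans hd), Real.rpow_natCast]
  exact norm_natCast_le_norm_one_sub_pow_of_dvd_orderOf hζ hdvd

lemma norm_one_sub_eq_one_of_dvd_orderOf (hζ : IsOfFinOrder ζ) (hd : 1 < d)
    (hdvd : d ∣ orderOf ζ) (hd_norm : ‖(d : R)‖ = 1) : ‖1 - ζ‖ = 1 := by
  refine le_antisymm (norm_one_sub_le_one_of_norm_le_one hζ.norm_eq_one.le) ?_
  simpa [hd_norm] using norm_natCast_rpow_le_norm_one_sub_of_dvd_orderOf hζ hd hdvd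

lemma norm_one_sub_eq_one_of_forall_prime_not_dvd_orderOf (hζ : IsOfFinOrder ζ) (hζ1 : ζ ≠ 1)
    (h : ∀ p : ℕ, p.Prime → ‖(p : R)‖ < 1 → ¬p ∣ orderOf ζ) : ‖1 - ζ‖ = 1 := by
  obtain ⟨p, hp, hdvd⟩ := Nat.exists_prime_and_dvd (mt orderOf_eq_one_iff.1 hζ1)
  have hp_norm : ‖(p : R)‖ = 1 :=
    (norm_natCast_le_one R p).antisymm (not_lt.1 fun hlt ↦ h p hp hlt hdvd)
  exact norm_one_sub_eq_one_of_dvd_orderOf hζ hp.one_lt hdvd hp_norm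

end RootsOfUnity

section InfiniteProduct

variable {R : Type*} [NormedCommRing R] [NormOneClass R] [CompleteSpace R] {q x y : R}

lemma multipliable_one_sub_pow_mul (hq : ‖q‖ < 1) (x : R) :
    Multipliable fun n : ℕ ↦ 1 - q ^ n * x := by
  have hsum : Summable fun n : ℕ ↦ ‖-(q ^ n * x)‖ := by
    refine ((summable_geometric_of_lt_one (norm_nonneg q) hq).mul_right ‖x‖).of_nonneg_of_le
      (fun _ ↦ norm_nonneg _) fun n ↦ ?_
    rw [norm_neg]
    exact (norm_mul_le _ _).trans (by gcongr; exact norm_pow_le q n)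
  simpa only [sub_eq_add_neg] using multipliable_one_add_of_summable hsum

lemma multipliable_one_sub_pow_mul_mul_one_sub_pow_succ_mul (hq : ‖q‖ < 1) (x y : R) :
    Multipliable fun n : ℕ ↦ (1 - q ^ n * x) * (1 - q ^ (n + 1) * y) := by
  simpa only [pow_succ, mul_assoc] using
    (multipliable_one_sub_pow_mul hq x).mul (multipliable_one_sub_pow_mul hq (q * y))

variable [NormMulClass R] [IsUltrametricDist R]

lemma norm_tprod_one_sub_pow_mul (hq : ‖q‖ < 1) (hx : ‖x‖ ≤ 1) :
    ‖∏' n : ℕ, (1 - q ^ n * x)‖ = ‖1 - x‖ := by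
  have hfactor : ∀ n : ℕ, n ≠ 0 → ‖1 - q ^ n * x‖ = 1 := fun n hn ↦ by
    apply norm_one_sub_eq_one_of_norm_lt_one
    rw [norm_mul, norm_pow]
    exact mul_lt_one_of_nonneg_of_lt_one_left (by positivity)
      (pow_lt_one₀ (norm_nonneg q) hq hn) hx
  rw [(multipliable_one_sub_pow_mul hq x).norm_tprod, tprod_eq_mulSingle 0 hfactor, pow_zero,
    one_mul]

lemma norm_tprod_one_sub_pow_mul_mul_one_sub_pow_succ_mul (hq : ‖q‖ < 1) (hx : ‖x‖ ≤ 1)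
    (hy : ‖q * y‖ < 1) :
    ‖∏' n : ℕ, (1 - q ^ n * x) * (1 - q ^ (n + 1) * y)‖ = ‖1 - x‖ := by
  simp only [pow_succ, mul_assoc]
  rw [(multipliable_one_sub_pow_mul hq x).tprod_mul (multipliable_one_sub_pow_mul hq (q * y)),
    norm_mul, norm_tprod_one_sub_pow_mul hq hx, norm_tprod_one_sub_pow_mul hq hy.le,
    norm_one_sub_eq_one_of_norm_lt_one hy, mul_one]

end InfiniteProduct

lemma norm_eq_norm_rpow_of_pow_eq_pow {R : Type*} [NormedRing R] [NormMulClass R]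
    [NormOneClass R] {x y : R} {m n : ℕ} {a : ℝ} (hm : m ≠ 0) (ha : m * a = n)
    (h : x ^ m = y ^ n) : ‖x‖ = ‖y‖ ^ a := by
  refine (pow_left_inj₀ (norm_nonneg x) (by positivity) hm).1 ?_
  rw [← Real.rpow_mul_natCast (norm_nonneg y), mul_comm a, ha, Real.rpow_natCast, ← norm_pow, h,
    norm_pow]

theorem stmt_15_general {F : Type*} [NormedField F] [CompleteSpace F] [IsUltrametricDist F]
    {q ρ ζ : F} {a : ℝ} (hq0 : 0 < ‖q‖) (hq1 : ‖q‖ < 1) (ha0 : 0 ≤ a) (ha1 : a < 1)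
    (hρ : ‖ρ‖ = ‖q‖ ^ a) (hρ1 : a = 0 → ρ = 1) (hζ : IsOfFinOrder ζ) (hζ1 : a = 0 → ζ ≠ 1) :
    Multipliable (fun n : ℕ ↦ (1 - q ^ n * ρ * ζ) * (1 - q ^ (n + 1) * ρ⁻¹ * ζ⁻¹)) ∧
    ‖∏' n : ℕ, (1 - q ^ n * ρ * ζ) * (1 - q ^ (n + 1) * ρ⁻¹ * ζ⁻¹)‖ ≤ 1 ∧
    (a ≠ 0 → ‖∏' n : ℕ, (1 - q ^ n * ρ * ζ) * (1 - q ^ (n + 1) * ρ⁻¹ * ζ⁻¹)‖ = 1) ∧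
    (a = 0 → (∀ p : ℕ, p.Prime → ‖(p : F)‖ < 1 → ¬p ∣ orderOf ζ) →
      ‖∏' n : ℕ, (1 - q ^ n * ρ * ζ) * (1 - q ^ (n + 1) * ρ⁻¹ * ζ⁻¹)‖ = 1) ∧
    (a = 0 → ∀ d : ℕ, 1 < d → d ∣ orderOf ζ →
      ‖(d : F)‖ ^ ((1 : ℝ) / ((d : ℝ) - 1)) ≤
        ‖∏' n : ℕ, (1 - q ^ n * ρ * ζ) * (1 - q ^ (n + 1) * ρ⁻¹ * ζ⁻¹)‖) := by
  have hx : ‖ρ * ζ‖ = ‖q‖ ^ a := by rw [norm_mul, hζ.norm_eq_one, mul_one, hρ]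
  have hx_le : ‖ρ * ζ‖ ≤ 1 := hx ▸ Real.rpow_le_one hq0.le hq1.le ha0
  have hy : ‖q * (ρ⁻¹ * ζ⁻¹)‖ < 1 := by
    rw [← mul_inv, norm_mul, norm_inv, hx, ← div_eq_mul_inv, div_lt_one (by positivity)]
    exact Real.self_lt_rpow_of_lt_one hq0 hq1 ha1
  simp only [mul_assoc]
  rw [norm_tprod_one_sub_pow_mul_mul_one_sub_pow_succ_mul hq1 hx_le hy]
  refine ⟨multipliable_one_sub_pow_mul_mul_one_sub_pow_succ_mul hq1 _ _,
    norm_one_sub_le_one_of_norm_le_one hx_le, fun ha ↦ ?_, fun ha hp ↦ ?_, fun ha d hd hdvd ↦ ?_⟩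
  · exact norm_one_sub_eq_one_of_norm_lt_one
      (hx ▸ Real.rpow_lt_one hq0.le hq1 (ha0.lt_of_ne' ha))
  · rw [hρ1 ha, one_mul]
    exact norm_one_sub_eq_one_of_forall_prime_not_dvd_orderOf hζ (hζ1 ha) hp
  · rw [hρ1 ha, one_mul]
    exact norm_natCast_rpow_le_norm_one_sub_of_dvd_orderOf hζ hd hdvd

/-- Nonarchimedean estimate for the infinite-product part of the Siegel function over a
complete nonarchimedean field `F`: with `q ∈ F`, `0 < |q| < 1`, `N ≥ 2`, `0 ≤ a₁ < 1`,
`N·a₁ = k ∈ ℤ≥0`, `ρ^N = q^k` (`ρ = 1` if `a₁ = 0`), and `ζ` a root of unity of order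
dividing `N` (`ζ ≠ 1` if `a₁ = 0`), the product
`G = ∏_{n≥0} (1 − qⁿρζ)(1 − q^{n+1}ρ⁻¹ζ⁻¹)` converges, and `|G| = 1` unless `a₁ = 0`
and some prime `p` with `|p| < 1` divides the order of `ζ`, in which case
`|p|^{1/(p−1)} ≤ |G| ≤ 1`. -/
theorem stmt_15 {F : Type*} [NormedField F] [CompleteSpace F]
    (hna : IsNonarchimedean (fun x : F => ‖x‖))
    (q : F) (hq0 : 0 < ‖q‖) (hq1 : ‖q‖ < 1)
    (N : ℕ) (hN : 2 ≤ N)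
    (a₁ : ℚ) (h0 : 0 ≤ a₁) (h1 : a₁ < 1)
    (k : ℕ) (hk : (N : ℚ) * a₁ = (k : ℚ))
    (ρ : F) (hρ : ρ ^ N = q ^ k) (hρ1 : a₁ = 0 → ρ = 1)
    (ζ : F) (hζ : ζ ^ N = 1) (hζ1 : a₁ = 0 → ζ ≠ 1) :
    Multipliable (fun n : ℕ => (1 - q ^ n * ρ * ζ) * (1 - q ^ (n + 1) * ρ⁻¹ * ζ⁻¹)) ∧
    (a₁ ≠ 0 → ‖∏' n : ℕ, (1 - q ^ n * ρ * ζ) * (1 - q ^ (n + 1) * ρ⁻¹ * ζ⁻¹)‖ = 1) ∧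
    (a₁ = 0 → (∀ p : ℕ, p.Prime → ‖(p : F)‖ < 1 → ¬p ∣ orderOf ζ) →
      ‖∏' n : ℕ, (1 - q ^ n * ρ * ζ) * (1 - q ^ (n + 1) * ρ⁻¹ * ζ⁻¹)‖ = 1) ∧
    (a₁ = 0 → ∀ p : ℕ, p.Prime → ‖(p : F)‖ < 1 → p ∣ orderOf ζ →
      ‖(p : F)‖ ^ ((1 : ℝ) / ((p : ℝ) - 1)) ≤
          ‖∏' n : ℕ, (1 - q ^ n * ρ * ζ) * (1 - q ^ (n + 1) * ρ⁻¹ * ζ⁻¹)‖ ∧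
        ‖∏' n : ℕ, (1 - q ^ n * ρ * ζ) * (1 - q ^ (n + 1) * ρ⁻¹ * ζ⁻¹)‖ ≤ 1) := by
  have := isUltrametricDist_of_isNonarchimedean_norm hna
  have hN0 : N ≠ 0 := by omega
  obtain ⟨hmul, hle, hpos, hunit, hlow⟩ := stmt_15_general (a := a₁) hq0 hq1 (mod_cast h0)
    (mod_cast h1) (norm_eq_norm_rpow_of_pow_eq_pow hN0 (mod_cast hk) hρ) (mod_cast hρ1)
    (isOfFinOrder_iff_pow_eq_one.2 ⟨N, hN0.bot_lt, hζ⟩) (mod_cast hζ1)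
  exact ⟨hmul, mod_cast hpos, mod_cast hunit,
    fun ha p hp _ hdvd ↦ ⟨hlow (mod_cast ha) p hp.one_lt hdvd, hle⟩⟩
end

section
/- Let a = (a₁, a₂) ∈ ℚ² with 0 ≤ a₁ < 1 and a ∉ ℤ². Then the Siegel function g_a is integral over ℤ[j]: there exist an integer n ≥ 1 and polynomials P₀, …, P_{n−1} ∈ ℤ[X] such that for every τ ∈ ℍ one has g_a(τ)ⁿ + ∑_{i=0}^{n−1} P_i(j(τ))·g_a(τ)^i = 0. -/
open Complex

/-- The second Bernoulli polynomial `B₂(T) = T² − T + 1/6`. -/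
noncomputable def B2 (t : ℝ) : ℝ := t ^ 2 - t + 1 / 6

/-- `q^s := e^{2πisτ}` for real `s`. -/
noncomputable def qpow (τ : ℂ) (s : ℝ) : ℂ := Complex.exp (2 * Real.pi * I * (s : ℂ) * τ)

/-- The Siegel function
`g_a(τ) = −q^{B₂(a₁)/2}·e^{πi a₂(a₁−1)}·∏_{n=0}^∞ (1 − q^{n+a₁}e^{2πi a₂})(1 − q^{n+1−a₁}e^{−2πi a₂})`. -/
noncomputable def siegel (a₁ a₂ : ℝ) (τ : ℂ) : ℂ :=
  -qpow τ (B2 a₁ / 2) * Complex.exp (Real.pi * I * (a₂ : ℂ) * ((a₁ : ℂ) - 1)) *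
    ∏' n : ℕ,
      (1 - qpow τ ((n : ℝ) + a₁) * Complex.exp (2 * Real.pi * I * (a₂ : ℂ))) *
        (1 - qpow τ ((n : ℝ) + 1 - a₁) * Complex.exp (-(2 * Real.pi * I * (a₂ : ℂ))))

/-- `c₂(τ) = ((2π)⁴/12)·(1 + 240·∑_{n=1}^∞ n³qⁿ/(1−qⁿ))` where `q = e^{2πiτ}`. -/
noncomputable def c2 (τ : ℂ) : ℂ :=
  ((2 * (Real.pi : ℂ)) ^ 4 / 12) *
    (1 + 240 * ∑' n : ℕ, ((n : ℂ) + 1) ^ 3 * Complex.exp (2 * Real.pi * I * τ) ^ (n + 1) /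
      (1 - Complex.exp (2 * Real.pi * I * τ) ^ (n + 1)))

/-- The modular discriminant `Δ(τ) = (2π)¹²·q·∏_{n=1}^∞ (1−qⁿ)²⁴`, `q = e^{2πiτ}`. -/
noncomputable def Delta (τ : ℂ) : ℂ :=
  (2 * (Real.pi : ℂ)) ^ 12 * Complex.exp (2 * Real.pi * I * τ) *
    ∏' n : ℕ, (1 - Complex.exp (2 * Real.pi * I * τ) ^ (n + 1)) ^ 24

/-- The modular invariant `j(τ) = (12·c₂(τ))³/Δ(τ)`. -/
noncomputable def jfun (τ : ℂ) : ℂ := (12 * c2 τ) ^ 3 / Delta τ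

/-!
Fix `N ≥ 1`. By the Jacobi triple product, a Siegel function with characteristics in `(1/N)ℤ` is,
up to a root of unity, a theta function with characteristics in `(1/2N)ℤ` divided by `η`. The
functions `θ ^ (24N²) / Δ ^ N²`, with `θ` running over these theta functions, form a finite set
which the modular group permutes: all the multipliers in the transformation formulas of `θ` under
`S` and `T` are killed by the exponent. An elementary symmetric function of this set is therefore
invariant under the modular group, and after multiplication by a power of `Δ` it has a `q`-expansion
with algebraic integer coefficients. Cancelling leading terms with powers of `E₄` and `Δ`, both
of which have integral `q`-expansions, writes it as a polynomial in `j = E₄³ / Δ` with algebraic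
integer coefficients, so it is integral over `ℤ[j]`; hence so are the members of the set.
-/

namespace SiegelIntegrality

open UpperHalfPlane hiding I neg_smul
open ModularForm ModularFormClass MatrixGroups EisensteinSeries Manifold
open Function.Periodic (qParam)

/-! ### Expansions with coefficients in a subring -/

/-- The power series with coefficients in a subring `R`. -/
noncomputable def coeffSubring {A : Type*} [CommRing A] (R : Subring A) :
    Subring (PowerSeries A) :=
  (PowerSeries.map R.subtype).range

lemma mem_coeffSubring {A : Type*} [CommRing A] {R : Subring A} {p : PowerSeries A} :
    p ∈ coeffSubring R ↔ ∀ n, p.coeff n ∈ R := by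
  refine ⟨?_, fun h => ⟨PowerSeries.mk fun n => ⟨p.coeff n, h n⟩, by ext; simp⟩⟩
  rintro ⟨p, rfl⟩ n
  simp

lemma smul_mem_coeffSubring {A : Type*} [CommRing A] {R : Subring A} {c : A} {p : PowerSeries A}
    (hc : c ∈ R) (hp : p ∈ coeffSubring R) : c • p ∈ coeffSubring R :=
  mem_coeffSubring.2 fun n => R.mul_mem hc (mem_coeffSubring.1 hp n)

lemma map_int_mem_coeffSubring {A : Type*} [CommRing A] (R : Subring A) (p : PowerSeries ℤ) :
    p.map (Int.castRingHom A) ∈ coeffSubring R :=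
  mem_coeffSubring.2 fun n => by simp

lemma mem_coeffSubring_of_X_mul {A : Type*} [CommRing A] {R : Subring A} {p : PowerSeries A}
    (h : PowerSeries.X * p ∈ coeffSubring R) : p ∈ coeffSubring R :=
  mem_coeffSubring.2 fun n => by
    simpa only [PowerSeries.coeff_succ_X_mul] using mem_coeffSubring.1 h (n + 1)

lemma mem_coeffSubring_of_mul {A : Type*} [CommRing A] {R : Subring A} {u p : PowerSeries A}
    (hu : u ∈ coeffSubring R) (hu1 : u.constantCoeff = 1) (h : u * p ∈ coeffSubring R) :
    p ∈ coeffSubring R := by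
  obtain ⟨u, rfl⟩ := hu
  have hu1 : u.constantCoeff = 1 := Subtype.val_injective <| by
    rwa [← PowerSeries.coeff_zero_eq_constantCoeff_apply, PowerSeries.coeff_map,
      PowerSeries.coeff_zero_eq_constantCoeff_apply] at hu1
  obtain ⟨v, hv⟩ := (PowerSeries.isUnit_iff_constantCoeff.2 (hu1 ▸ isUnit_one)).exists_left_inv
  have hp : p = PowerSeries.map R.subtype v * (PowerSeries.map R.subtype u * p) := by
    rw [← mul_assoc, ← map_mul, hv, map_one, one_mul]
  exact hp ▸ mul_mem ⟨v, rfl⟩ h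

/-- The functions on `ℍ` with an everywhere convergent expansion in powers of
`e^{2πiτ/h}` with coefficients in `R`. -/
def qSeriesSubring (R : Subring ℂ) (h : ℝ) : Subring (ℍ → ℂ) where
  carrier := {f | ∃ c : ℕ → ℂ, (∀ n, c n ∈ R) ∧
    ∀ τ : ℍ, HasSum (fun n => c n • qParam h τ ^ n) (f τ)}
  mul_mem' := by
    rintro f g ⟨c, hc, hf⟩ ⟨d, hd, hg⟩
    refine ⟨fun n => ∑ x ∈ Finset.HasAntidiagonal.antidiagonal n, c x.1 * d x.2,
      fun n => sum_mem fun x _ => mul_mem (hc _) (hd _), fun τ => ?_⟩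
    have hf' := (hf τ).summable.norm
    have hg' := (hg τ).summable.norm
    have hfg := (summable_norm_sum_mul_antidiagonal_of_summable_norm hf' hg').of_norm.hasSum
    rw [← tsum_mul_tsum_eq_tsum_sum_antidiagonal_of_summable_norm hf' hg', (hf τ).tsum_eq,
      (hg τ).tsum_eq] at hfg
    refine hfg.congr_fun fun n => ?_
    rw [Finset.sum_smul]
    refine Finset.sum_congr rfl fun x hx => ?_
    rw [← Finset.HasAntidiagonal.mem_antidiagonal.1 hx, pow_add, smul_mul_smul_comm]
  one_mem' := by
    refine ⟨Pi.single 0 1, fun n => ?_, fun τ => ?_⟩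
    · rw [Pi.single_apply]
      split_ifs
      exacts [R.one_mem, R.zero_mem]
    · convert hasSum_single (f := fun n => Pi.single (M := fun _ => ℂ) 0 1 n • qParam h τ ^ n) 0
        fun n hn => by simp [hn] using 1
      simp
  add_mem' := by
    rintro f g ⟨c, hc, hf⟩ ⟨d, hd, hg⟩
    exact ⟨c + d, fun n => add_mem (hc n) (hd n), fun τ => by
      simpa only [Pi.add_apply, add_smul] using (hf τ).add (hg τ)⟩
  zero_mem' := ⟨0, fun _ => R.zero_mem, fun τ => by simp⟩
  neg_mem' := by
    rintro f ⟨c, hc, hf⟩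
    exact ⟨-c, fun n => neg_mem (hc n), fun τ => by
      simpa only [Pi.neg_apply, neg_smul] using (hf τ).neg⟩

lemma mem_qSeriesSubring_of_hasSum {R : Subring ℂ} {h : ℝ} {f : ℍ → ℂ} {ι : Type*} (c : ι → ℂ)
    (hc : ∀ i, c i ∈ R) (e : ι → ℕ) (he : ∀ n, (e ⁻¹' {n}).Finite)
    (hf : ∀ τ : ℍ, HasSum (fun i => c i * qParam h τ ^ e i) (f τ)) :
    f ∈ qSeriesSubring R h := by
  have (n : ℕ) : Fintype {i // e i = n} := (he n).fintype
  refine ⟨fun n => ∑ i : {i // e i = n}, c i, fun n => sum_mem fun i _ => hc i, fun τ => ?_⟩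
  refine ((Equiv.sigmaFiberEquiv e).hasSum_iff.2 (hf τ)).sigma fun n => ?_
  rw [Finset.sum_smul]
  convert hasSum_fintype _ using 2 with i
  simp [i.2]

lemma isBoundedAtImInfty_of_mem_qSeriesSubring {R : Subring ℂ} {h : ℝ} (hh : 0 < h) {f : ℍ → ℂ}
    (hf : f ∈ qSeriesSubring R h) : IsBoundedAtImInfty f :=
  let ⟨_, _, hf⟩ := hf
  isBoundedAtImInfty_of_hasSum_qExpansion hh hf

lemma mdifferentiable_of_mem_qSeriesSubring {R : Subring ℂ} {h : ℝ} (hh : 0 < h) {f : ℍ → ℂ}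
    (hf : f ∈ qSeriesSubring R h) : MDiff f := by
  obtain ⟨c, -, hf⟩ := hf
  have hf' {z : ℂ} (hz : 0 < z.im) : ∑' n, c n • qParam h z ^ n = (f ∘ ofComplex) z := by
    rw [Function.comp_apply, ofComplex_apply_of_im_pos hz]
    exact (hf ⟨z, hz⟩).tsum_eq
  intro τ
  rw [mdifferentiableAt_iff]
  obtain ⟨y, hy, hyτ⟩ := exists_between τ.im_pos
  have hopen : IsOpen {z : ℂ | y < z.im} := isOpen_lt continuous_const Complex.continuous_im
  have hdiff : DifferentiableOn ℂ (fun z => ∑' n, c n • qParam h z ^ n) {z | y < z.im} := by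
    refine Complex.differentiableOn_tsum_of_summable_norm (hf ⟨y * I, by simpa⟩).summable.norm
      (fun n => ((Function.Periodic.differentiable_qParam.pow n).const_smul
        (c n)).differentiableOn) hopen fun n z hz => ?_
    rw [norm_smul, norm_smul, norm_pow, norm_pow]
    gcongr
    refine ((Function.Periodic.norm_qParam_lt_iff hh y z).2 hz).le.trans_eq ?_
    simp [Function.Periodic.norm_qParam]
  exact ((hdiff.congr fun z hz => (hf' (hy.trans hz)).symm).differentiableAt
    (hopen.mem_nhds hyτ))

lemma qParam_natCast_pow {H : ℕ} (hH : H ≠ 0) (z : ℂ) : qParam H z ^ H = qParam 1 z := by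
  rw [qParam, qParam, ← Complex.exp_nat_mul]
  congr 1
  push_cast
  field_simp

lemma mem_qSeriesSubring_of_qExpansion_mem {R : Subring ℂ} {H : ℕ} (hH : H ≠ 0) {k : ℤ}
    {E : Type*} [FunLike E ℍ ℂ] [ModularFormClass E 𝒮ℒ k] {F : E}
    (hF : qExpansion 1 F ∈ coeffSubring R) : ⇑F ∈ qSeriesSubring R H := by
  refine mem_qSeriesSubring_of_hasSum _ (mem_coeffSubring.1 hF) (H * ·)
    (fun n => (Set.finite_singleton n).preimage (mul_right_injective₀ hH).injOn) fun τ => ?_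
  simpa only [pow_mul, qParam_natCast_pow hH, smul_eq_mul] using
    ModularForm.hasSum_qExpansion F one_pos one_mem_strictPeriods_SL τ

/-- An expansion of width `H` of a function of period one is in fact an expansion of width one,
with the same nonzero coefficients. -/
lemma qExpansion_mem_coeffSubring {R : Subring ℂ} {H : ℕ} (hH : H ≠ 0) {k : ℤ}
    {F : ModularForm 𝒮ℒ k} (hF : ⇑F ∈ qSeriesSubring R H) :
    qExpansion 1 F ∈ coeffSubring R := by
  obtain ⟨c, hc, hF⟩ := hF
  have hH0 : (0 : ℝ) < H := by positivity
  have hperiod : (H : ℝ) ∈ (𝒮ℒ).strictPeriods := by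
    simpa using (𝒮ℒ).strictPeriods.nsmul_mem one_mem_strictPeriods_SL H
  have hinj : Function.Injective (H * ·) := mul_right_injective₀ hH
  let a : ℕ → ℂ := Function.extend (H * ·) (fun n => (qExpansion 1 F).coeff n) 0
  have ha (n : ℕ) : a (H * n) = (qExpansion 1 F).coeff n := hinj.extend_apply _ _ n
  have hFa (τ : ℍ) : HasSum (fun n => a n • qParam H τ ^ n) (F τ) := by
    have ha0 (m : ℕ) (hm : m ∉ Set.range (H * ·)) : a m • qParam H τ ^ m = 0 := by
      rw [show a m = 0 from Function.extend_apply' _ _ _ hm, zero_smul]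
    rw [← hinj.hasSum_iff ha0]
    simpa only [Function.comp_def, ha, pow_mul, qParam_natCast_pow hH, smul_eq_mul] using
      ModularForm.hasSum_qExpansion F one_pos one_mem_strictPeriods_SL τ
  refine mem_coeffSubring.2 fun n => ?_
  rw [← ha n, ModularFormClass.qExpansion_coeff_unique hH0 hperiod hFa,
    ← ModularFormClass.qExpansion_coeff_unique hH0 hperiod hF]
  exact hc _

/-! ### Modular forms of level one -/

/-- The generating series `∑ σₖ(n) Xⁿ` of a divisor sum, with constant term `0`. -/
noncomputable def sigmaSeries (k : ℕ) : PowerSeries ℤ :=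
  PowerSeries.mk fun n => (ArithmeticFunction.sigma k n : ℤ)

lemma qExpansion_E₄_eq_map :
    qExpansion 1 E₄ = (1 + 240 * sigmaSeries 3).map (Int.castRingHom ℂ) := by
  have hbernoulli : bernoulli 4 = -1 / 30 := by decide +kernel
  ext n
  rw [E_qExpansion_coeff _ ⟨2, rfl⟩, PowerSeries.coeff_map, map_add,
    show (240 : PowerSeries ℤ) = PowerSeries.C 240 from rfl, PowerSeries.coeff_C_mul,
    PowerSeries.coeff_one, sigmaSeries, PowerSeries.coeff_mk]
  rcases eq_or_ne n 0 with rfl | hn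
  · simp
  · norm_num [hn, hbernoulli]

lemma qExpansion_E₆_eq_map :
    qExpansion 1 E₆ = (1 - 504 * sigmaSeries 5).map (Int.castRingHom ℂ) := by
  have hbernoulli : bernoulli 6 = 1 / 42 := by decide +kernel
  ext n
  rw [E_qExpansion_coeff _ ⟨3, rfl⟩, PowerSeries.coeff_map, map_sub,
    show (504 : PowerSeries ℤ) = PowerSeries.C 504 from rfl, PowerSeries.coeff_C_mul,
    PowerSeries.coeff_one, sigmaSeries, PowerSeries.coeff_mk]
  rcases eq_or_ne n 0 with rfl | hn
  · simp
  · norm_num [hn, hbernoulli]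

lemma twelve_dvd_five_mul_sigma_three_add_seven_mul_sigma_five (n : ℕ) :
    12 ∣ 5 * ArithmeticFunction.sigma 3 n + 7 * ArithmeticFunction.sigma 5 n := by
  rw [ArithmeticFunction.sigma_apply, ArithmeticFunction.sigma_apply, Finset.mul_sum,
    Finset.mul_sum, ← Finset.sum_add_distrib]
  refine Finset.dvd_sum fun d _ => ?_
  have hmod : ∀ x : ZMod 12, 5 * x ^ 3 + 7 * x ^ 5 = 0 := by decide
  exact (ZMod.natCast_eq_zero_iff _ 12).1 (by exact_mod_cast hmod d)

lemma smul_qExpansion_discriminant_eq :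
    (1728 : ℂ) • qExpansion 1 CuspForm.discriminant =
      qExpansion 1 E₄ ^ 3 - qExpansion 1 E₆ ^ 2 := by
  have hfun : (1728 : ℂ) • ⇑CuspForm.discriminant = ⇑(E₄.pow 3) - ⇑(E₆.pow 2) := by
    ext z
    simp only [Pi.smul_apply, CuspForm.coe_discriminant, smul_eq_mul,
      discriminant_eq_E₄_cube_sub_E₆_sq z, coe_pow, Pi.sub_apply, Pi.pow_apply]
    ring
  rw [← ModularForm.qExpansion_smul one_pos one_mem_strictPeriods_SL, hfun,
    UpperHalfPlane.qExpansion_sub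
      (ModularFormClass.analyticAt_cuspFunction_zero _ one_pos one_mem_strictPeriods_SL)
      (ModularFormClass.analyticAt_cuspFunction_zero _ one_pos one_mem_strictPeriods_SL),
    ModularForm.qExpansion_pow one_pos one_mem_strictPeriods_SL,
    ModularForm.qExpansion_pow one_pos one_mem_strictPeriods_SL]

lemma exists_E₄_cube_sub_E₆_sq_eq : ∃ D : PowerSeries ℤ,
    (1 + 240 * sigmaSeries 3) ^ 3 - (1 - 504 * sigmaSeries 5) ^ 2 = 1728 * D := by
  obtain ⟨D, hD⟩ : (12 : PowerSeries ℤ) ∣ 5 * sigmaSeries 3 + 7 * sigmaSeries 5 := by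
    choose d hd using twelve_dvd_five_mul_sigma_three_add_seven_mul_sigma_five
    refine ⟨PowerSeries.mk fun n => (d n : ℤ), ?_⟩
    ext n
    simp only [← map_ofNat (PowerSeries.C (R := ℤ)), sigmaSeries, map_add, PowerSeries.coeff_C_mul,
      PowerSeries.coeff_mk]
    exact_mod_cast hd n
  exact ⟨D + 100 * sigmaSeries 3 ^ 2 + 8000 * sigmaSeries 3 ^ 3 - 147 * sigmaSeries 5 ^ 2, by
    linear_combination 144 * hD⟩

lemma qExpansion_discriminant_mem_coeffSubring (R : Subring ℂ) :
    qExpansion 1 discriminant ∈ coeffSubring R := by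
  obtain ⟨D, hD⟩ := exists_E₄_cube_sub_E₆_sq_eq
  suffices qExpansion 1 discriminant = D.map (Int.castRingHom ℂ) from
    this ▸ map_int_mem_coeffSubring R D
  refine smul_right_injective _ (show (1728 : ℂ) ≠ 0 by norm_num) ?_
  simp only [← CuspForm.coe_discriminant, smul_qExpansion_discriminant_eq, qExpansion_E₄_eq_map,
    qExpansion_E₆_eq_map, ← map_pow, ← map_sub, hD]
  ext n
  simp only [← map_ofNat (PowerSeries.C (R := ℤ)), PowerSeries.coeff_map, PowerSeries.coeff_C_mul,
    PowerSeries.coeff_smul]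
  simp

/-- The modular invariant `j`, in terms of Mathlib's `E₄` and `Δ`; see `jfun_eq_kleinJ`. -/
noncomputable def kleinJ (z : ℍ) : ℂ := E₄ z ^ 3 / discriminant z

section LevelOne

variable {R : Subring ℂ} {k : ℤ} {F : ModularForm 𝒮ℒ k}

lemma mem_coeffSubring_of_qExpansion_discriminant_mul {p : PowerSeries ℂ}
    (h : qExpansion 1 discriminant * p ∈ coeffSubring R) : p ∈ coeffSubring R := by
  have hΔ := qExpansion_discriminant_mem_coeffSubring R
  have hΔ0 : (qExpansion 1 discriminant).constantCoeff = 0 := by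
    simpa using CuspFormClass.qExpansion_coeff_zero CuspForm.discriminant one_pos
      one_mem_strictPeriods_SL
  have hΔ1 : (qExpansion 1 discriminant).coeff 1 = 1 := discriminant_qExpansion_coeff_one
  obtain ⟨u, hu⟩ := PowerSeries.X_dvd_iff.2 hΔ0
  rw [hu] at h hΔ hΔ1
  have hu1 : u.constantCoeff = 1 := by
    rwa [← zero_add 1, PowerSeries.coeff_succ_X_mul,
      PowerSeries.coeff_zero_eq_constantCoeff_apply] at hΔ1
  rw [mul_assoc] at h
  exact mem_coeffSubring_of_mul (mem_coeffSubring_of_X_mul hΔ) hu1 (mem_coeffSubring_of_X_mul h)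

/-- Subtracting `c E₄^{3(m+1)}`, with `c` the constant term of `F`, leaves a cusp form, which is
divisible by `Δ`. -/
lemma exists_eq_E₄_pow_add_discriminant_mul (m : ℕ) (hk : k = 12 * (m + 1 : ℕ))
    (hF : qExpansion 1 F ∈ coeffSubring R) :
    ∃ c ∈ R, ∃ G : ModularForm 𝒮ℒ (k - 12), qExpansion 1 G ∈ coeffSubring R ∧
      ∀ z, F z = c * E₄ z ^ (3 * (m + 1)) + discriminant z * G z := by
  obtain ⟨c, hcF⟩ : ∃ c, c = (qExpansion 1 F).coeff 0 := ⟨_, rfl⟩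
  have hc : c ∈ R := hcF ▸ mem_coeffSubring.1 hF 0
  obtain ⟨E, hE⟩ : ∃ E : ModularForm 𝒮ℒ k, ⇑E = ⇑(E₄.pow (3 * (m + 1))) :=
    ⟨ModularForm.mcast (by rw [hk]; push_cast; ring) (E₄.pow (3 * (m + 1))), rfl⟩
  obtain ⟨C, hC⟩ : ∃ C : ModularForm 𝒮ℒ k, ⇑C = ⇑F - c • ⇑E := ⟨F - c • E, rfl⟩
  have hqC : qExpansion 1 C = qExpansion 1 F - c • qExpansion 1 E₄ ^ (3 * (m + 1)) := by
    rw [hC, show c • ⇑E = ⇑(c • E) from rfl,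
      ModularForm.qExpansion_sub one_pos one_mem_strictPeriods_SL,
      show ⇑(c • E) = c • ⇑E from rfl,
      ModularForm.qExpansion_smul one_pos one_mem_strictPeriods_SL, hE,
      ModularForm.qExpansion_pow one_pos one_mem_strictPeriods_SL]
  have hC0 : (qExpansion 1 C).coeff 0 = 0 := by
    have hE₄ : PowerSeries.constantCoeff (qExpansion 1 E₄) = 1 := by
      simpa using E_qExpansion_coeff_zero (k := 4) (by norm_num) ⟨2, rfl⟩
    rw [hqC, map_sub, ← hcF]
    simp [hE₄]
  refine ⟨c, hc, CuspForm.discriminantEquiv (toCuspForm C hC0), ?_, fun z => ?_⟩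
  · refine mem_coeffSubring_of_qExpansion_discriminant_mul ?_
    rw [← qExpansion_eq_qExpansion_discriminant_mul C hC0, hqC, qExpansion_E₄_eq_map]
    exact sub_mem hF (smul_mem_coeffSubring hc (pow_mem (map_int_mem_coeffSubring R _) _))
  · rw [discriminant_mul_discriminantEquiv_apply, toCuspForm_apply, hC, hE, coe_pow]
    simp

theorem div_discriminant_pow_mem_adjoin_kleinJ (m : ℕ) (hk : k = 12 * m)
    (hF : qExpansion 1 F ∈ coeffSubring R) :
    (fun z => F z / discriminant z ^ m) ∈ Algebra.adjoin R {kleinJ} := by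
  induction m generalizing k with
  | zero =>
    obtain rfl : k = 0 := by simpa using hk
    obtain ⟨c, hc⟩ := levelOne_weight_zero_const F
    have hc0 : (qExpansion 1 F).coeff 0 = c := by
      rw [hc, show Function.const ℍ c = c • ⇑(1 : ModularForm 𝒮ℒ 0) by ext; simp,
        ModularForm.qExpansion_smul one_pos one_mem_strictPeriods_SL, ModularForm.qExpansion_one]
      simp
    simp only [hc, Function.const_apply, pow_zero, div_one]
    exact algebraMap_mem (Algebra.adjoin R {kleinJ}) ⟨c, hc0 ▸ mem_coeffSubring.1 hF 0⟩
  | succ m ih =>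
    obtain ⟨c, hc, G, hG, hFG⟩ := exists_eq_E₄_pow_add_discriminant_mul m hk hF
    have hcJ := Subalgebra.smul_mem _ (pow_mem (Algebra.self_mem_adjoin_singleton R kleinJ) (m + 1))
      (⟨c, hc⟩ : R)
    convert add_mem hcJ (ih (by rw [hk]; push_cast; ring) hG) using 1
    funext z
    have hz := discriminant_ne_zero z
    have hJ : ((⟨c, hc⟩ : R) • kleinJ ^ (m + 1)) z = c * (E₄ z ^ 3 / discriminant z) ^ (m + 1) :=
      rfl
    rw [Pi.add_apply, hJ, hFG, div_pow, ← pow_mul]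
    field_simp
    ring

end LevelOne

/-- The ring `ℤ[j]` of functions on the upper half-plane. -/
noncomputable abbrev intAdjoinJ : Subalgebra ℤ (ℍ → ℂ) := Algebra.adjoin ℤ {kleinJ}

/-- The ring of algebraic integers in `ℂ`. -/
noncomputable abbrev algebraicIntegers : Subring ℂ := (integralClosure ℤ ℂ).toSubring

lemma isIntegral_const {c : ℂ} (hc : IsIntegral ℤ c) : IsIntegral intAdjoinJ (fun _ : ℍ => c) :=
  (hc.map (Pi.constRingHom ℍ ℂ).toIntAlgHom).tower_top

lemma isIntegral_of_mem_adjoin_kleinJ {f : ℍ → ℂ}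
    (hf : f ∈ Algebra.adjoin algebraicIntegers {kleinJ}) : IsIntegral intAdjoinJ f := by
  induction hf using Algebra.adjoin_induction with
  | mem f hf =>
    exact isIntegral_algebraMap (R := intAdjoinJ) (x := ⟨f, Algebra.subset_adjoin hf⟩)
  | algebraMap c => exact isIntegral_const c.2
  | add f g _ _ hf hg => exact hf.add hg
  | mul f g _ _ hf hg => exact hf.mul hg

section Symmetric

open Polynomial

lemma isIntegral_of_forall_isIntegral_coeff_prod_X_sub_C {R A : Type*} [CommRing R] [CommRing A]
    [Algebra R A] {s : Finset A} (h : ∀ i, IsIntegral R ((∏ b ∈ s, (X - C b)).coeff i)) {a : A}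
    (ha : a ∈ s) : IsIntegral R a := by
  nontriviality A
  refine .of_aeval_monic_of_isIntegral_coeff (p := ∏ b ∈ s, (X - C b))
    (monic_prod_X_sub_C id s) ?_ ?_ h
  · simpa [natDegree_finsetProd_X_sub_C_eq_card] using Finset.ne_empty_of_mem ha
  · rw [eval_prod, Finset.prod_eq_zero ha (by simp)]
    exact isIntegral_zero

lemma map_coeff_prod_X_sub_C_of_mapsTo {A : Type*} [CommRing A] {s : Finset A} {φ : A →+* A}
    (hφ : Function.Injective φ) (h : Set.MapsTo φ s s) (i : ℕ) :
    φ ((∏ b ∈ s, (X - C b)).coeff i) = (∏ b ∈ s, (X - C b)).coeff i := by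
  classical
  have himage : s.image φ = s := Finset.eq_of_subset_of_card_le
    (Finset.image_subset_iff.2 h) (Finset.card_image_of_injective s hφ).ge
  have hmap : (∏ b ∈ s, (X - C b)).map φ = ∏ b ∈ s, (X - C b) := by
    nth_rewrite 2 [← himage]
    simp [Polynomial.map_prod, Finset.prod_image hφ.injOn]
  rw [← coeff_map, hmap]

lemma coeff_prod_X_sub_C_mul_pow_card_mem {A : Type*} [CommRing A] {S : Subring A} {d : A}
    (hd : d ∈ S) {s : Finset A} (h : ∀ b ∈ s, b * d ∈ S) (i : ℕ) :
    (∏ b ∈ s, (X - C b)).coeff i * d ^ s.card ∈ S := by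
  have hcoeff : (∏ b ∈ s, (X - C b)).coeff i * d ^ s.card =
      (∏ b ∈ s, (X * C d - C (b * d))).coeff i := by
    rw [← coeff_mul_C, C_pow, ← Finset.prod_const, ← Finset.prod_mul_distrib]
    simp only [sub_mul, C_mul]
  have hlift : ∏ b ∈ s, (X * C d - C (b * d)) ∈ liftsRing S.subtype :=
    prod_mem fun b hb => sub_mem (mul_mem ⟨X, by simp⟩ ⟨C ⟨d, hd⟩, by simp⟩)
      ⟨C ⟨b * d, h b hb⟩, by simp⟩
  rw [hcoeff]
  obtain ⟨c, hc⟩ := (lifts_iff_coeff_lifts _).1 ((lifts_iff_liftsRing _ _).2 hlift) i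
  exact hc ▸ c.2

end Symmetric

lemma discriminant_pow_slash (m : ℕ) (γ : SL(2, ℤ)) :
    (discriminant ^ m) ∣[(12 * m : ℤ)] γ = discriminant ^ m := by
  ext z
  have hΔ := (slash_action_eq'_iff 12 discriminant γ z).1 <| congrFun
    (SlashInvariantForm.slash_action_generators_SL2Z discriminant_S_invariant
      discriminant_T_invariant γ) z
  rw [slash_action_eq'_iff, Pi.pow_apply, Pi.pow_apply, hΔ, mul_pow, zpow_mul, zpow_natCast]

lemma mul_discriminant_pow_slash {g : ℍ → ℂ} {γ : SL(2, ℤ)} (hg : ∀ z, g (γ • z) = g z) (m : ℕ) :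
    (g * discriminant ^ m) ∣[(12 * m : ℤ)] γ = g * discriminant ^ m := by
  have hg0 : g ∣[(0 : ℤ)] γ = g := by
    ext z
    rw [slash_action_eq'_iff, hg, zpow_zero, one_mul]
  rw [← zero_add (12 * m : ℤ), mul_slash_SL2, hg0, discriminant_pow_slash]

theorem mem_adjoin_kleinJ_of_invariant {R : Subring ℂ} {H : ℕ} (hH : H ≠ 0) {g : ℍ → ℂ}
    (hS : ∀ z, g (ModularGroup.S • z) = g z) (hT : ∀ z, g (ModularGroup.T • z) = g z) (m : ℕ)
    (hg : g * discriminant ^ m ∈ qSeriesSubring R H) : g ∈ Algebra.adjoin R {kleinJ} := by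
  have hH0 : (0 : ℝ) < H := by positivity
  have hslash := SlashInvariantForm.slash_action_generators_SL2Z
    (mul_discriminant_pow_slash hS m) (mul_discriminant_pow_slash hT m)
  let F : ModularForm 𝒮ℒ (12 * m) :=
    { toFun := g * discriminant ^ m
      slash_action_eq' := by rintro _ ⟨γ, rfl⟩; exact hslash γ
      holo' := mdifferentiable_of_mem_qSeriesSubring hH0 hg
      bdd_at_cusps' := fun {c} hc => by
        rw [Subgroup.IsArithmetic.isCusp_iff_isCusp_SL2Z] at hc
        rw [OnePoint.isBoundedAt_iff_forall_SL2Z hc]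
        intro γ _
        rw [hslash]
        exact isBoundedAtImInfty_of_mem_qSeriesSubring hH0 hg }
  convert div_discriminant_pow_mem_adjoin_kleinJ (F := F) m rfl (qExpansion_mem_coeffSubring hH hg)
    using 1
  ext z
  exact (mul_div_cancel_right₀ (g z) (pow_ne_zero m (discriminant_ne_zero z))).symm

open Polynomial in
/-- The conjugates of `g ∈ s` under the modular group lie in the finite set `s`, so the symmetric
functions of `s` have level one. -/
theorem isIntegral_of_finite_of_invariant {H : ℕ} (hH : H ≠ 0) (m : ℕ) {s : Set (ℍ → ℂ)}
    (hs : s.Finite) (hS : ∀ g ∈ s, (fun z => g (ModularGroup.S • z)) ∈ s)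
    (hT : ∀ g ∈ s, (fun z => g (ModularGroup.T • z)) ∈ s)
    (hq : ∀ g ∈ s, g * discriminant ^ m ∈ qSeriesSubring algebraicIntegers H) {g : ℍ → ℂ}
    (hg : g ∈ s) : IsIntegral intAdjoinJ g := by
  lift s to Finset (ℍ → ℂ) using hs
  refine isIntegral_of_forall_isIntegral_coeff_prod_X_sub_C (fun i => ?_) hg
  have hcomp (γ : SL(2, ℤ)) (hγ : ∀ g ∈ s, (fun z => g (γ • z)) ∈ s) (z : ℍ) :
      (∏ b ∈ s, (X - C b)).coeff i (γ • z) = (∏ b ∈ s, (X - C b)).coeff i z :=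
    congrFun (map_coeff_prod_X_sub_C_of_mapsTo
      (φ := RingHom.pi fun z => Pi.evalRingHom (fun _ => ℂ) (γ • z))
      (MulAction.surjective γ).injective_comp_right hγ i) z
  have hΔ : discriminant ^ m ∈ qSeriesSubring algebraicIntegers H :=
    pow_mem (mem_qSeriesSubring_of_qExpansion_mem hH (F := CuspForm.discriminant)
      (qExpansion_discriminant_mem_coeffSubring _)) m
  refine isIntegral_of_mem_adjoin_kleinJ <| mem_adjoin_kleinJ_of_invariant hH (hcomp _ hS)
    (hcomp _ hT) (m * s.card) ?_
  rw [pow_mul]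
  exact coeff_prod_X_sub_C_mul_pow_card_mem hΔ hq i

/-! ### Theta functions with characteristics -/

section Theta

/-- The theta function `∑ₙ exp(2πi(n + b)c) exp(πi(n + b)²τ)` with characteristics `b`, `c`. -/
noncomputable def thetaChar (b c τ : ℂ) : ℂ :=
  cexp (Real.pi * I * b ^ 2 * τ + 2 * Real.pi * I * b * c) * jacobiTheta₂ (b * τ + c) τ

lemma hasSum_thetaChar (b c : ℂ) {τ : ℂ} (hτ : 0 < τ.im) :
    HasSum (fun n : ℤ =>
      cexp (2 * Real.pi * I * (n + b) * c) * cexp (Real.pi * I * (n + b) ^ 2 * τ))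
      (thetaChar b c τ) := by
  refine ((hasSum_jacobiTheta₂_term (b * τ + c) hτ).mul_left
    (cexp (Real.pi * I * b ^ 2 * τ + 2 * Real.pi * I * b * c))).congr_fun fun n => ?_
  rw [jacobiTheta₂_term, ← Complex.exp_add, ← Complex.exp_add]
  congr 1
  ring

lemma thetaChar_add_one_left (b c τ : ℂ) : thetaChar (b + 1) c τ = thetaChar b c τ := by
  rw [thetaChar, thetaChar, show (b + 1) * τ + c = (b * τ + c) + τ by ring,
    jacobiTheta₂_add_left', ← mul_assoc, ← Complex.exp_add]
  congr 2
  ring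

lemma thetaChar_add_one_right (b c τ : ℂ) :
    thetaChar b (c + 1) τ = cexp (2 * Real.pi * I * b) * thetaChar b c τ := by
  rw [thetaChar, thetaChar, ← add_assoc, jacobiTheta₂_add_left, ← mul_assoc, ← Complex.exp_add]
  congr 2
  ring

lemma thetaChar_neg_one_div (b c : ℂ) {τ : ℂ} (hτ : τ ≠ 0) :
    thetaChar b c (-1 / τ) =
      (-I * τ) ^ (1 / 2 : ℂ) * cexp (2 * Real.pi * I * b * c) * thetaChar c (-b) τ := by
  have hroot : (-I * τ) ^ (1 / 2 : ℂ) ≠ 0 := by simp [Complex.cpow_eq_zero_iff, hτ]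
  have hexp : cexp (Real.pi * I * b ^ 2 * (-1 / τ) + 2 * Real.pi * I * b * c) =
      cexp (2 * Real.pi * I * b * c) *
        cexp (Real.pi * I * c ^ 2 * τ + 2 * Real.pi * I * c * -b) *
          cexp (-Real.pi * I * (c * τ + -b) ^ 2 / τ) := by
    rw [← Complex.exp_add, ← Complex.exp_add]
    congr 1
    field_simp
    ring
  rw [thetaChar, thetaChar, jacobiTheta₂_functional_equation (c * τ + -b) τ,
    show (c * τ + -b) / τ = b * (-1 / τ) + c by field_simp; ring, hexp]
  field_simp [hroot]

lemma thetaChar_add_one (b c τ : ℂ) :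
    thetaChar b c (τ + 1) =
      cexp (-Real.pi * I * (b ^ 2 + b)) * thetaChar b (c + b + 1 / 2) τ := by
  rw [thetaChar, thetaChar, jacobiTheta₂, jacobiTheta₂, ← mul_assoc, ← tsum_mul_left,
    ← tsum_mul_left]
  refine tsum_congr fun n => ?_
  simp only [jacobiTheta₂_term, ← Complex.exp_add]
  obtain ⟨m, hm⟩ := (Int.even_mul_pred_self n).two_dvd
  have hm : (n : ℂ) * (n - 1) = 2 * m := by exact_mod_cast hm
  exact Complex.exp_eq_exp_iff_exists_int.2 ⟨m, by linear_combination (Real.pi * I) * hm⟩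

/-- The power of a theta function with characteristics in `(1/2N)ℤ` at which all multipliers
become trivial, normalised to weight `0`. -/
noncomputable def thetaUnit (N : ℕ) (k l : ℤ) (τ : ℍ) : ℂ :=
  thetaChar (k / (2 * N)) (l / (2 * N)) τ ^ (24 * N ^ 2) / discriminant τ ^ N ^ 2

variable {N : ℕ}

lemma periodic_thetaUnit_left (hN : N ≠ 0) (l : ℤ) :
    Function.Periodic (fun k => thetaUnit N k l) (2 * N) := fun k => by
  have hN' : (N : ℂ) ≠ 0 := Nat.cast_ne_zero.2 hN
  funext τ
  have hk : ((k + 2 * N : ℤ) : ℂ) / (2 * N) = k / (2 * N) + 1 := by push_cast; field_simp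
  simp only [thetaUnit, hk, thetaChar_add_one_left]

lemma periodic_thetaUnit_right (hN : N ≠ 0) (k : ℤ) :
    Function.Periodic (thetaUnit N k) (2 * N) := fun l => by
  have hN' : (N : ℂ) ≠ 0 := Nat.cast_ne_zero.2 hN
  funext τ
  have hl : ((l + 2 * N : ℤ) : ℂ) / (2 * N) = l / (2 * N) + 1 := by push_cast; field_simp
  have hexp : ((24 * N ^ 2 : ℕ) : ℂ) * (2 * Real.pi * I * (k / (2 * N))) =
      ((12 * N * k : ℤ) : ℂ) * (2 * Real.pi * I) := by push_cast; field_simp; ring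
  rw [thetaUnit, hl, thetaChar_add_one_right, mul_pow, ← Complex.exp_nat_mul, hexp,
    Complex.exp_int_mul_two_pi_mul_I, one_mul, thetaUnit]

lemma finite_range_thetaUnit (hN : N ≠ 0) :
    (Set.range fun p : ℤ × ℤ => thetaUnit N p.1 p.2).Finite := by
  have h0 : (0 : ℤ) < 2 * N := by positivity
  refine (((Set.finite_Ico 0 (2 * (N : ℤ))).prod (Set.finite_Ico 0 (2 * (N : ℤ)))).image
    fun p => thetaUnit N p.1 p.2).subset ?_
  rintro _ ⟨⟨k, l⟩, rfl⟩
  obtain ⟨k', hk', hk⟩ := (periodic_thetaUnit_left hN l).exists_mem_Ico₀ h0 k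
  obtain ⟨l', hl', hl⟩ := (periodic_thetaUnit_right hN k').exists_mem_Ico₀ h0 l
  exact ⟨(k', l'), ⟨hk', hl'⟩, (hk.trans hl).symm⟩

lemma discriminant_S_smul (τ : ℍ) :
    discriminant (ModularGroup.S • τ) = τ ^ 12 * discriminant τ := by
  simpa [ModularGroup.S] using
    (slash_action_eq'_iff 12 discriminant _ τ).1 (congrFun discriminant_S_invariant τ)

lemma discriminant_T_smul (τ : ℍ) : discriminant (ModularGroup.T • τ) = discriminant τ := by
  simpa [ModularGroup.T] using
    (slash_action_eq'_iff 12 discriminant _ τ).1 (congrFun discriminant_T_invariant τ)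

lemma thetaUnit_S_smul (hN : N ≠ 0) (k l : ℤ) (τ : ℍ) :
    thetaUnit N k l (ModularGroup.S • τ) = thetaUnit N l (-k) τ := by
  have hN' : (N : ℂ) ≠ 0 := Nat.cast_ne_zero.2 hN
  have hτ := τ.ne_zero
  have hSτ : ((ModularGroup.S • τ : ℍ) : ℂ) = -1 / τ := by
    rw [modular_S_smul, neg_div, one_div, ← inv_neg]
  have hexp : ((24 * N ^ 2 : ℕ) : ℂ) * (2 * Real.pi * I * (k / (2 * N)) * (l / (2 * N))) =
      ((6 * k * l : ℤ) : ℂ) * (2 * Real.pi * I) := by push_cast; field_simp; ring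
  have hroot : ((-I * τ) ^ (1 / 2 : ℂ)) ^ (24 * N ^ 2) = ((τ : ℂ) ^ 12) ^ N ^ 2 := by
    rw [show 24 * N ^ 2 = 2 * 12 * N ^ 2 by ring, pow_mul, pow_mul, ← Complex.cpow_nat_mul,
      show ((2 : ℕ) : ℂ) * (1 / 2) = 1 by norm_num, Complex.cpow_one, mul_pow,
      show (-I) ^ 12 = (I ^ 4) ^ 3 by ring, I_pow_four, one_pow, one_mul]
  rw [thetaUnit, hSτ, thetaChar_neg_one_div _ _ hτ, mul_pow, mul_pow, ← Complex.exp_nat_mul, hexp,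
    Complex.exp_int_mul_two_pi_mul_I, mul_one, hroot, discriminant_S_smul, mul_pow,
    mul_div_mul_left _ _ (pow_ne_zero _ (pow_ne_zero _ hτ)), thetaUnit, Int.cast_neg, neg_div]

lemma thetaUnit_T_smul (hN : N ≠ 0) (k l : ℤ) (τ : ℍ) :
    thetaUnit N k l (ModularGroup.T • τ) = thetaUnit N k (l + k + N) τ := by
  have hN' : (N : ℂ) ≠ 0 := Nat.cast_ne_zero.2 hN
  have hTτ : ((ModularGroup.T • τ : ℍ) : ℂ) = τ + 1 := by
    rw [modular_T_smul, coe_vadd, add_comm, ofReal_one]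
  have hexp : ((24 * N ^ 2 : ℕ) : ℂ) * (-Real.pi * I * ((k / (2 * N)) ^ 2 + (k / (2 * N)))) =
      ((-(3 * k ^ 2 + 6 * N * k) : ℤ) : ℂ) * (2 * Real.pi * I) := by push_cast; field_simp; ring
  have hl : (l : ℂ) / (2 * N) + k / (2 * N) + 1 / 2 = (l + k + N : ℤ) / (2 * N) := by
    push_cast
    field_simp
  rw [thetaUnit, hTτ, thetaChar_add_one, mul_pow, ← Complex.exp_nat_mul, hexp,
    Complex.exp_int_mul_two_pi_mul_I, one_mul, discriminant_T_smul, hl, thetaUnit]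

lemma finite_preimage_natAbs_sq_linear (hN : N ≠ 0) (k : ℤ) (m : ℕ) :
    ((fun n : ℤ => ((2 * N * n + k) ^ 2).natAbs) ⁻¹' {m}).Finite := by
  have hinj : Function.Injective fun n : ℤ => 2 * N * n + k :=
    (add_left_injective k).comp (mul_right_injective₀ (by positivity))
  refine ((Set.finite_Icc (-(m : ℤ)) m).preimage hinj.injOn).subset fun n hn => ?_
  rw [Set.mem_preimage, Set.mem_singleton_iff, Int.natAbs_pow] at hn
  have hle : (2 * N * n + k).natAbs ≤ m := hn ▸ Nat.le_self_pow two_ne_zero _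
  rw [Set.mem_preimage, Set.mem_Icc, ← abs_le, Int.abs_eq_natAbs]
  exact_mod_cast hle

lemma thetaChar_mem_qSeriesSubring (hN : N ≠ 0) (k l : ℤ) :
    (fun τ : ℍ => thetaChar (k / (2 * N)) (l / (2 * N)) τ) ∈
      qSeriesSubring algebraicIntegers (8 * N ^ 2 : ℕ) := by
  have hN' : (N : ℂ) ≠ 0 := Nat.cast_ne_zero.2 hN
  refine mem_qSeriesSubring_of_hasSum
    (fun n : ℤ => cexp (2 * Real.pi * I * (n + k / (2 * N)) * (l / (2 * N)))) (fun n => ?_)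
    _ (finite_preimage_natAbs_sq_linear hN k) fun τ => ?_
  · change IsIntegral ℤ _
    convert isIntegral_exp_rat_mul_pi_mul_I (2 * (n + k / (2 * N)) * (l / (2 * N))) using 2
    push_cast
    ring
  · refine (hasSum_thetaChar _ _ τ.im_pos).congr_fun fun n => ?_
    have hcast : ((((2 * N * n + k) ^ 2).natAbs : ℕ) : ℂ) = (2 * N * n + k) ^ 2 := by
      rw [Nat.cast_natAbs, abs_of_nonneg (sq_nonneg _)]
      push_cast
      rfl
    rw [qParam, ← Complex.exp_nat_mul, hcast]
    congr 2
    push_cast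
    field_simp
    ring

theorem isIntegral_thetaUnit (hN : N ≠ 0) (k l : ℤ) : IsIntegral intAdjoinJ (thetaUnit N k l) := by
  refine isIntegral_of_finite_of_invariant (H := 8 * N ^ 2) (by positivity) (N ^ 2)
    (finite_range_thetaUnit hN) ?_ ?_ ?_ ⟨(k, l), rfl⟩
  · rintro _ ⟨⟨k, l⟩, rfl⟩
    exact ⟨(l, -k), funext fun τ => (thetaUnit_S_smul hN k l τ).symm⟩
  · rintro _ ⟨⟨k, l⟩, rfl⟩
    exact ⟨(k, l + k + N), funext fun τ => (thetaUnit_T_smul hN k l τ).symm⟩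
  · rintro _ ⟨⟨k, l⟩, rfl⟩
    convert pow_mem (thetaChar_mem_qSeriesSubring hN k l) (24 * N ^ 2) using 1
    funext τ
    exact div_mul_cancel₀ _ (pow_ne_zero _ (discriminant_ne_zero τ))

end Theta

/-! ### The Jacobi triple product -/

section TripleProduct

open Filter Topology

section Field

variable {K : Type*} [Field K]

/-- The `q`-Pochhammer symbol `(q; q)ₖ`. -/
def qPochhammer (q : K) (k : ℕ) : K := ∏ i ∈ Finset.range k, (1 - q ^ (i + 1))

/-- The inverse `1 / (q; q)ₖ`, extended by `0` to negative `k`, as is customary for `1 / k!`. -/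
def invQPochhammer (q : K) (k : ℤ) : K := if k < 0 then 0 else (qPochhammer q k.toNat)⁻¹

/-- The Gaussian binomial coefficient `2n choose n + m`, which is `0` unless `-n ≤ m ≤ n`. -/
def centralGaussBinom (q : K) (n : ℕ) (m : ℤ) : K :=
  qPochhammer q (2 * n) * invQPochhammer q (n + m) * invQPochhammer q (n - m)

lemma qPochhammer_succ (q : K) (k : ℕ) :
    qPochhammer q (k + 1) = qPochhammer q k * (1 - q ^ (k + 1)) :=
  Finset.prod_range_succ _ k

lemma invQPochhammer_natCast (q : K) (k : ℕ) : invQPochhammer q k = (qPochhammer q k)⁻¹ := by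
  simp [invQPochhammer]

lemma invQPochhammer_of_neg (q : K) {k : ℤ} (hk : k < 0) : invQPochhammer q k = 0 := if_pos hk

lemma invQPochhammer_sub_one {q : K} (hq : ∀ n : ℕ, q ^ (n + 1) ≠ 1) (k : ℤ) :
    invQPochhammer q (k - 1) = (1 - q ^ k) * invQPochhammer q k := by
  rcases k with (_ | k) | k
  · simp [invQPochhammer_of_neg]
  · have hk : 1 - q ^ (k + 1) ≠ 0 := sub_ne_zero.2 (hq k).symm
    rw [Int.ofNat_eq_natCast, zpow_natCast, invQPochhammer_natCast, Nat.cast_succ,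
      add_sub_cancel_right, invQPochhammer_natCast, qPochhammer_succ]
    field_simp
  · rw [invQPochhammer_of_neg q (Int.negSucc_lt_zero k),
      invQPochhammer_of_neg q (by have := Int.negSucc_lt_zero k; lia), mul_zero]

lemma centralGaussBinom_zero (q : K) (m : ℤ) :
    centralGaussBinom q 0 m = if m = 0 then 1 else 0 := by
  rcases lt_trichotomy m 0 with hm | rfl | hm
  · simp [centralGaussBinom, invQPochhammer_of_neg q hm, hm.ne]
  · simp [centralGaussBinom, invQPochhammer, qPochhammer]
  · simp [centralGaussBinom, invQPochhammer_of_neg q (neg_lt_zero.2 hm), hm.ne']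

lemma centralGaussBinom_succ {q : K} (hq0 : q ≠ 0) (hq : ∀ n : ℕ, q ^ (n + 1) ≠ 1) (n : ℕ)
    (m : ℤ) :
    centralGaussBinom q (n + 1) m =
      (1 + q ^ (2 * n + 1)) * centralGaussBinom q n m +
        q ^ (n + 1 - m : ℤ) * centralGaussBinom q n (m - 1) +
          q ^ (n + 1 + m : ℤ) * centralGaussBinom q n (m + 1) := by
  have hadd : invQPochhammer q (n + m) =
      (1 - q ^ (n + 1 + m : ℤ)) * invQPochhammer q (n + 1 + m) := by
    rw [← invQPochhammer_sub_one hq]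
    ring_nf
  have hsub : invQPochhammer q (n - m) =
      (1 - q ^ (n + 1 - m : ℤ)) * invQPochhammer q (n + 1 - m) := by
    rw [← invQPochhammer_sub_one hq]
    ring_nf
  have hadd' : invQPochhammer q (n + m - 1) =
      (1 - q ^ (n + 1 + m : ℤ) / q) * invQPochhammer q (n + m) := by
    rw [invQPochhammer_sub_one hq, div_eq_mul_inv, ← zpow_sub_one₀ hq0]
    ring_nf
  have hsub' : invQPochhammer q (n - m - 1) =
      (1 - q ^ (n + 1 - m : ℤ) / q) * invQPochhammer q (n - m) := by
    rw [invQPochhammer_sub_one hq, div_eq_mul_inv, ← zpow_sub_one₀ hq0]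
    ring_nf
  have hpow : q ^ (2 * n + 1) = q ^ (n + 1 + m : ℤ) * q ^ (n + 1 - m : ℤ) / q := by
    rw [← zpow_add₀ hq0, div_eq_mul_inv, ← zpow_sub_one₀ hq0, ← zpow_natCast]
    congr 1
    push_cast
    ring
  simp only [centralGaussBinom]
  rw [mul_add_one, qPochhammer_succ, qPochhammer_succ, pow_succ q (2 * n + 1), Nat.cast_succ,
    ← add_sub_assoc, sub_sub_eq_add_sub, add_right_comm (n : ℤ) 1, ← add_assoc,
    ← sub_sub, hadd', hsub', add_right_comm (n : ℤ) m 1, hadd, hsub, hpow]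
  field_simp
  ring

lemma finite_triple_product [TopologicalSpace K] [IsTopologicalRing K] {p x : K}
    (hp0 : p ≠ 0) (hp : ∀ n : ℕ, (p ^ 2) ^ (n + 1) ≠ 1) (hx : x ≠ 0) (n : ℕ) :
    HasSum (fun m : ℤ => centralGaussBinom (p ^ 2) n m * (p ^ (m ^ 2) * x ^ m))
      (∏ k ∈ Finset.range n, (1 + x * p ^ (2 * k + 1)) * (1 + x⁻¹ * p ^ (2 * k + 1))) := by
  induction n with
  | zero =>
    refine (hasSum_ite_eq (0 : ℤ) (1 : K)).congr_fun fun m => ?_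
    rcases eq_or_ne m 0 with rfl | hm
    · simp [centralGaussBinom_zero]
    · simp [centralGaussBinom_zero, hm]
  | succ n ih =>
    have hpow (m : ℤ) :
        (p ^ 2) ^ (n + 1 - m : ℤ) * p ^ (m ^ 2) = p ^ (2 * n + 1) * p ^ ((m - 1) ^ 2) := by
      rw [← zpow_natCast, ← zpow_mul, ← zpow_add₀ hp0, ← zpow_natCast, ← zpow_add₀ hp0]
      congr 1
      push_cast
      ring
    have hpow' (m : ℤ) :
        (p ^ 2) ^ (n + 1 + m : ℤ) * p ^ (m ^ 2) = p ^ (2 * n + 1) * p ^ ((m + 1) ^ 2) := by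
      convert hpow (-m) using 3 <;> ring
    have hfactor (P : K) : (1 + (p ^ 2) ^ (2 * n + 1)) * P + x * p ^ (2 * n + 1) * P +
        x⁻¹ * p ^ (2 * n + 1) * P =
          P * ((1 + x * p ^ (2 * n + 1)) * (1 + x⁻¹ * p ^ (2 * n + 1))) := by
      field_simp
      ring
    have hleft := ((Equiv.subRight (1 : ℤ)).hasSum_iff.2 ih).mul_left (x * p ^ (2 * n + 1))
    have hright := ((Equiv.addRight (1 : ℤ)).hasSum_iff.2 ih).mul_left (x⁻¹ * p ^ (2 * n + 1))
    have h := ((ih.mul_left (1 + (p ^ 2) ^ (2 * n + 1))).add hleft).add hright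
    rw [hfactor, ← Finset.prod_range_succ] at h
    refine h.congr_fun fun m => ?_
    simp only [Function.comp_apply, Equiv.subRight_apply, Equiv.coe_addRight]
    rw [centralGaussBinom_succ (pow_ne_zero 2 hp0) hp, zpow_sub_one₀ hx, zpow_add_one₀ hx]
    field_simp
    linear_combination centralGaussBinom (p ^ 2) n (m - 1) * hpow m +
      centralGaussBinom (p ^ 2) n (m + 1) * hpow' m

end Field

variable {q : ℂ}

lemma pow_succ_ne_one (hq : ‖q‖ < 1) (n : ℕ) : q ^ (n + 1) ≠ 1 := fun h =>
  (pow_lt_one₀ (norm_nonneg q) hq n.succ_ne_zero).ne (by rw [← norm_pow, h, norm_one])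

lemma tprod_one_sub_pow_ne_zero (hq : ‖q‖ < 1) : ∏' k : ℕ, (1 - q ^ (k + 1)) ≠ 0 := by
  simp only [sub_eq_add_neg]
  refine tprod_one_add_ne_zero_of_summable (fun k => ?_) ?_
  · rw [← sub_eq_add_neg]
    exact sub_ne_zero.2 (pow_succ_ne_one hq k).symm
  · simp only [norm_neg, norm_pow]
    exact (summable_nat_add_iff 1).2 (summable_geometric_of_lt_one (norm_nonneg q) hq)

lemma tendsto_qPochhammer (hq : ‖q‖ < 1) :
    Tendsto (qPochhammer q) atTop (𝓝 (∏' k : ℕ, (1 - q ^ (k + 1)))) :=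
  (multipliable_one_sub_pow hq).hasProd.tendsto_prod_nat

lemma tendsto_invQPochhammer (hq : ‖q‖ < 1) :
    Tendsto (invQPochhammer q) atTop (𝓝 (∏' k : ℕ, (1 - q ^ (k + 1)))⁻¹) := by
  rw [← Nat.map_cast_int_atTop, tendsto_map'_iff]
  exact ((tendsto_qPochhammer hq).inv₀ (tprod_one_sub_pow_ne_zero hq)).congr fun n =>
    (invQPochhammer_natCast q n).symm

lemma tendsto_centralGaussBinom (hq : ‖q‖ < 1) (m : ℤ) :
    Tendsto (fun n => centralGaussBinom q n m) atTop (𝓝 (∏' k : ℕ, (1 - q ^ (k + 1)))⁻¹) := by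
  have hcast := tendsto_natCast_atTop_atTop (R := ℤ)
  have hinv (m : ℤ) :=
    (tendsto_invQPochhammer hq).comp (tendsto_atTop_add_const_right atTop m hcast)
  have h := (((tendsto_qPochhammer hq).comp (tendsto_id.const_mul_atTop' two_pos)).mul
    (hinv m)).mul (hinv (-m))
  rwa [mul_inv_cancel₀ (tprod_one_sub_pow_ne_zero hq), one_mul] at h

lemma exists_norm_centralGaussBinom_le (hq : ‖q‖ < 1) :
    ∃ C, ∀ n m, ‖centralGaussBinom q n m‖ ≤ C := by
  obtain ⟨A, hA⟩ :=
    (Metric.isBounded_range_of_tendsto _ (tendsto_qPochhammer hq)).exists_norm_le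
  obtain ⟨B, hB⟩ := (Metric.isBounded_range_of_tendsto _ ((tendsto_qPochhammer hq).inv₀
    (tprod_one_sub_pow_ne_zero hq))).exists_norm_le
  rw [Set.forall_mem_range] at hA hB
  have hA0 : 0 ≤ A := (norm_nonneg _).trans (hA 0)
  have hB0 : 0 ≤ B := (norm_nonneg _).trans (hB 0)
  have hinv (k : ℤ) : ‖invQPochhammer q k‖ ≤ B := by
    rw [invQPochhammer]
    split_ifs
    · rwa [norm_zero]
    · exact hB _
  refine ⟨A * B * B, fun n m => ?_⟩
  rw [centralGaussBinom, norm_mul, norm_mul]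
  gcongr
  exacts [hA _, hinv _, hinv _]

lemma multipliable_one_add_mul_pow {p : ℂ} (hp : ‖p‖ < 1) (y : ℂ) :
    Multipliable fun k : ℕ => 1 + y * p ^ (2 * k + 1) := by
  refine multipliable_one_add_of_summable ?_
  simp only [norm_mul, norm_pow]
  exact ((summable_geometric_of_lt_one (norm_nonneg p) hp).comp_injective
    fun _ _ h => by lia).mul_left _

/-- The limit of `finite_triple_product`, by dominated convergence. -/
theorem jacobi_triple_product {p x θ : ℂ} (hp0 : p ≠ 0) (hp : ‖p‖ < 1)
    (hx : x ≠ 0) (hθ : HasSum (fun m : ℤ => p ^ (m ^ 2) * x ^ m) θ) :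
    (∏' k : ℕ, (1 + x * p ^ (2 * k + 1)) * (1 + x⁻¹ * p ^ (2 * k + 1))) *
      ∏' k : ℕ, (1 - (p ^ 2) ^ (k + 1)) = θ := by
  have hq : ‖p ^ 2‖ < 1 := by
    rw [norm_pow]
    exact pow_lt_one₀ (norm_nonneg p) hp two_ne_zero
  obtain ⟨C, hC⟩ := exists_norm_centralGaussBinom_le hq
  have hsum : Tendsto
      (fun n => ∑' m : ℤ, centralGaussBinom (p ^ 2) n m * (p ^ (m ^ 2) * x ^ m)) atTop
      (𝓝 (∑' m : ℤ, (∏' k : ℕ, (1 - (p ^ 2) ^ (k + 1)))⁻¹ * (p ^ (m ^ 2) * x ^ m))) := by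
    refine tendsto_tsum_of_dominated_convergence (hθ.summable.norm.mul_left C)
      (fun m => (tendsto_centralGaussBinom hq m).mul_const _) (.of_forall fun n m => ?_)
    rw [norm_mul]
    gcongr
    exact hC n m
  have hprod := ((multipliable_one_add_mul_pow hp x).mul
    (multipliable_one_add_mul_pow hp x⁻¹)).hasProd.tendsto_prod_nat
  have hfinite (n : ℕ) := (finite_triple_product hp0 (pow_succ_ne_one hq) hx n).tsum_eq
  rw [tendsto_nhds_unique hprod (hsum.congr hfinite), tsum_mul_left, hθ.tsum_eq, mul_comm,
    mul_inv_cancel_left₀ (tprod_one_sub_pow_ne_zero hq)]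

theorem jacobiTheta₂_eq_tprod_mul_tprod (z : ℂ) {τ : ℂ} (hτ : 0 < τ.im) :
    jacobiTheta₂ z τ =
      (∏' k : ℕ, (1 + cexp (2 * Real.pi * I * (z + (k + 1 / 2) * τ))) *
        (1 + cexp (2 * Real.pi * I * (-z + (k + 1 / 2) * τ)))) *
        ∏' k : ℕ, (1 - cexp (2 * Real.pi * I * τ) ^ (k + 1)) := by
  have hp : ‖cexp (Real.pi * I * τ)‖ < 1 := by
    simpa [Complex.norm_exp] using mul_pos Real.pi_pos hτ
  have hθ : HasSum (fun m : ℤ => cexp (Real.pi * I * τ) ^ (m ^ 2) * cexp (2 * Real.pi * I * z) ^ m)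
      (jacobiTheta₂ z τ) := by
    refine (hasSum_jacobiTheta₂_term z hτ).congr_fun fun m => ?_
    rw [jacobiTheta₂_term, ← Complex.exp_int_mul, ← Complex.exp_int_mul, ← Complex.exp_add]
    congr 1
    push_cast
    ring
  rw [← jacobi_triple_product (Complex.exp_ne_zero _) hp
    (Complex.exp_ne_zero _) hθ]
  congr 1 <;> refine tprod_congr fun k => ?_
  · rw [← Complex.exp_neg, ← Complex.exp_nat_mul, ← Complex.exp_add, ← Complex.exp_add]
    push_cast
    ring_nf
  · rw [← Complex.exp_nat_mul (Real.pi * I * τ) 2]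
    push_cast
    ring_nf

end TripleProduct

/-! ### Siegel functions -/

lemma siegel_mul_eta_mul_exp_eq (a₁ a₂ : ℝ) {τ : ℂ} (hτ : 0 < τ.im) :
    siegel a₁ a₂ τ * ModularForm.eta τ * cexp (2 * Real.pi * I * (a₁ - 1 / 2) * (a₂ + 1 / 2)) =
      -cexp (Real.pi * I * a₂ * (a₁ - 1)) * thetaChar (a₁ - 1 / 2) (a₂ + 1 / 2) τ := by
  have hadd (k : ℕ) :
      cexp (2 * Real.pi * I * ((a₁ - 1 / 2) * τ + (a₂ + 1 / 2) + (k + 1 / 2) * τ)) =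
        -(qpow τ (k + a₁) * cexp (2 * Real.pi * I * a₂)) := by
    rw [qpow, ← Complex.exp_add, ← Complex.exp_add_pi_mul_I]
    congr 1
    push_cast
    ring
  have hsub (k : ℕ) :
      cexp (2 * Real.pi * I * (-((a₁ - 1 / 2) * τ + (a₂ + 1 / 2)) + (k + 1 / 2) * τ)) =
        -(qpow τ (k + 1 - a₁) * cexp (-(2 * Real.pi * I * a₂))) := by
    rw [qpow, ← Complex.exp_add, ← Complex.exp_sub_pi_mul_I]
    congr 1
    push_cast
    ring
  have hq : cexp (Real.pi * I * (a₁ - 1 / 2) ^ 2 * τ) = qpow τ (B2 a₁ / 2) * qParam 24 τ := by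
    rw [qpow, qParam, ← Complex.exp_add, B2]
    congr 1
    push_cast
    ring
  rw [thetaChar, jacobiTheta₂_eq_tprod_mul_tprod _ hτ, siegel, ModularForm.eta, Complex.exp_add, hq]
  simp only [eta_q_eq_pow, hadd, hsub, ← sub_eq_add_neg]
  ring

lemma siegel_div_pow_eq_thetaUnit {N : ℕ} (hN : N ≠ 0) (k l : ℤ) (τ : ℍ) :
    siegel (k / N) (l / N) τ ^ (24 * N ^ 2) = thetaUnit N (2 * k - N) (2 * l + N) τ := by
  have hN' : (N : ℂ) ≠ 0 := Nat.cast_ne_zero.2 hN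
  have hexp : cexp (2 * Real.pi * I * ((k / N : ℝ) - 1 / 2) * ((l / N : ℝ) + 1 / 2)) ^
      (24 * N ^ 2) = 1 := by
    rw [← Complex.exp_nat_mul, Complex.exp_eq_one_iff]
    refine ⟨6 * (2 * k - N) * (2 * l + N), ?_⟩
    push_cast
    field_simp
    ring
  have hexp' : (-cexp (Real.pi * I * (l / N : ℝ) * ((k / N : ℝ) - 1))) ^ (24 * N ^ 2) = 1 := by
    rw [Even.neg_pow ⟨12 * N ^ 2, by ring⟩, ← Complex.exp_nat_mul, Complex.exp_eq_one_iff]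
    refine ⟨12 * l * (k - N), ?_⟩
    push_cast
    field_simp
    ring
  have h := congrArg (· ^ (24 * N ^ 2)) (siegel_mul_eta_mul_exp_eq (k / N) (l / N) τ.im_pos)
  simp only [mul_pow, hexp, hexp', mul_one, one_mul] at h
  rw [thetaUnit, eq_div_iff (pow_ne_zero _ (discriminant_ne_zero τ)), discriminant, ← pow_mul, h]
  congr 2 <;> (push_cast; field_simp)

lemma isIntegral_siegel_div {N : ℕ} (hN : N ≠ 0) (k l : ℤ) :
    IsIntegral intAdjoinJ fun τ : ℍ => siegel (k / N) (l / N) τ :=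
  .of_pow (n := 24 * N ^ 2) (by positivity) <| by
    convert isIntegral_thetaUnit hN (2 * k - N) (2 * l + N) using 1
    funext τ
    exact siegel_div_pow_eq_thetaUnit hN k l τ

theorem isIntegral_siegel (a₁ a₂ : ℚ) : IsIntegral intAdjoinJ fun τ : ℍ => siegel a₁ a₂ τ := by
  have h₁ : (a₁ : ℝ) = (a₁.num * a₂.den : ℤ) / (a₁.den * a₂.den : ℕ) := by
    push_cast
    rw [mul_div_mul_right _ _ (Nat.cast_ne_zero.2 a₂.den_nz), Rat.cast_def]
  have h₂ : (a₂ : ℝ) = (a₂.num * a₁.den : ℤ) / (a₁.den * a₂.den : ℕ) := by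
    push_cast
    rw [mul_comm (a₁.den : ℝ), mul_div_mul_right _ _ (Nat.cast_ne_zero.2 a₁.den_nz), Rat.cast_def]
  rw [h₁, h₂]
  exact isIntegral_siegel_div (mul_ne_zero a₁.den_nz a₂.den_nz) _ _

lemma Delta_eq_discriminant (τ : ℍ) : Delta τ = (2 * Real.pi) ^ 12 * discriminant τ := by
  rw [Delta, discriminant_eq_q_prod, mul_assoc]
  simp [qParam, eta_q_eq_pow]

lemma twelve_mul_c2_eq_E₄ (τ : ℍ) : 12 * c2 τ = (2 * Real.pi) ^ 4 * E₄ τ := by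
  have hbernoulli : bernoulli 4 = -1 / 30 := by decide +kernel
  have hE₄ : E₄ τ = 1 - (2 * (4 : ℕ) / bernoulli 4) *
      ∑' n : ℕ+, ArithmeticFunction.sigma 3 n * cexp (2 * Real.pi * I * τ) ^ (n : ℤ) :=
    q_expansion_bernoulli (by norm_num) (by decide) τ
  have hLambert := tsum_pow_div_one_sub_eq_tsum_sigma (norm_exp_two_pi_I_lt_one τ) 3
  rw [tsum_pnat_eq_tsum_succ (f := fun n : ℕ => (n : ℂ) ^ 3 * cexp (2 * Real.pi * I * τ) ^ n /
    (1 - cexp (2 * Real.pi * I * τ) ^ n))] at hLambert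
  simp only [hE₄, c2, hbernoulli, zpow_natCast, ← hLambert]
  push_cast
  ring

lemma jfun_eq_kleinJ (τ : ℍ) : jfun τ = kleinJ τ := by
  have hpi : (Real.pi : ℂ) ≠ 0 := ofReal_ne_zero.2 Real.pi_ne_zero
  have hΔ := discriminant_ne_zero τ
  rw [jfun, Delta_eq_discriminant, twelve_mul_c2_eq_E₄, kleinJ]
  field_simp

lemma exists_aeval_eq_of_mem_intAdjoinJ {f : ℍ → ℂ} (hf : f ∈ intAdjoinJ) :
    ∃ P : Polynomial ℤ, ∀ τ, Polynomial.aeval (kleinJ τ) P = f τ := by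
  obtain ⟨P, rfl⟩ := (Algebra.adjoin_singleton_eq_range_aeval ℤ kleinJ).le hf
  exact ⟨P, fun τ => Polynomial.aeval_algHom_apply (Pi.evalAlgHom ℤ (fun _ : ℍ => ℂ) τ) kleinJ P⟩

lemma exists_integral_equation_of_isIntegral {g : ℍ → ℂ} (hg : IsIntegral intAdjoinJ g) :
    ∃ n : ℕ, 1 ≤ n ∧ ∃ P : ℕ → Polynomial ℤ, ∀ τ : ℍ,
      g τ ^ n + ∑ i ∈ Finset.range n, Polynomial.aeval (kleinJ τ) (P i) * g τ ^ i = 0 := by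
  obtain ⟨p, hp, hpg⟩ := hg
  choose P hP using fun i => exists_aeval_eq_of_mem_intAdjoinJ (p.coeff i).2
  have hdeg : p.natDegree ≠ 0 := fun h => by
    rw [hp.natDegree_eq_zero.1 h, Polynomial.eval₂_one] at hpg
    exact one_ne_zero hpg
  refine ⟨p.natDegree, Nat.one_le_iff_ne_zero.2 hdeg, P, fun τ => ?_⟩
  rw [Polynomial.eval₂_eq_sum_range, Finset.sum_range_succ, hp.coeff_natDegree, map_one, one_mul,
    add_comm] at hpg
  simpa [hP] using congrFun hpg τ

end SiegelIntegrality

theorem stmt_16_general (a₁ a₂ : ℚ) :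
    ∃ n : ℕ, 1 ≤ n ∧ ∃ P : ℕ → Polynomial ℤ,
      ∀ τ : ℂ, 0 < τ.im →
        siegel (a₁ : ℝ) (a₂ : ℝ) τ ^ n +
          ∑ i ∈ Finset.range n,
            Polynomial.aeval (jfun τ) (P i) * siegel (a₁ : ℝ) (a₂ : ℝ) τ ^ i = 0 := by
  obtain ⟨n, hn, P, hP⟩ := SiegelIntegrality.exists_integral_equation_of_isIntegral
    (SiegelIntegrality.isIntegral_siegel a₁ a₂)
  refine ⟨n, hn, P, fun τ hτ => ?_⟩
  simpa only [← SiegelIntegrality.jfun_eq_kleinJ] using hP ⟨τ, hτ⟩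

/-- For `a = (a₁,a₂) ∈ ℚ² ∖ ℤ²` with `0 ≤ a₁ < 1`, the Siegel function `g_a` is integral
over `ℤ[j]`: there are `n ≥ 1` and `P₀,…,P_{n−1} ∈ ℤ[X]` with
`g_a(τ)ⁿ + ∑_{i<n} P_i(j(τ))·g_a(τ)^i = 0` for all `τ ∈ ℍ`. -/
theorem stmt_16 (a₁ a₂ : ℚ) (h0 : 0 ≤ a₁) (h1 : a₁ < 1)
    (hnZ : ¬∃ m n : ℤ, a₁ = (m : ℚ) ∧ a₂ = (n : ℚ)) :
    ∃ n : ℕ, 1 ≤ n ∧ ∃ P : ℕ → Polynomial ℤ,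
      ∀ τ : ℂ, 0 < τ.im →
        siegel (a₁ : ℝ) (a₂ : ℝ) τ ^ n +
          ∑ i ∈ Finset.range n,
            Polynomial.aeval (jfun τ) (P i) * siegel (a₁ : ℝ) (a₂ : ℝ) τ ^ i = 0 :=
  stmt_16_general a₁ a₂
end

section
/- Let a = (a₁, a₂) ∈ ℚ² with 0 ≤ a₁ < 1 and a ∉ ℤ², let N be the smallest positive integer with N·a₁ ∈ ℤ and N·a₂ ∈ ℤ (the exact order of a in (ℚ/ℤ)²), and set ζ_N = e^{2πi/N}. Then g_a(τ) ≠ 0 for all τ ∈ ℍ, and (1 − ζ_N)·g_a^{−1} is integral over ℤ[j]: there exist an integer n ≥ 1 and polynomials P₀, …, P_{n−1} ∈ ℤ[X] such that for every τ ∈ ℍ one has ((1 − ζ_N)/g_a(τ))ⁿ + ∑_{i=0}^{n−1} P_i(j(τ))·((1 − ζ_N)/g_a(τ))^i = 0. -/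
open Complex

/-!
Up to an exponential factor, `g_a(τ)` is the theta product `w^{-1/2} (w; q)_∞ (q / w; q)_∞` at `z =
a₁ τ + a₂`, `w = e^{2πiz}`. Comparing two entire functions of `z` with the same quasi-periods and a
simple zero on the lattice gives the behaviour of the theta product under `τ ↦ -1 / τ` up to a
constant, and the derivatives at `0` together with the modularity of `Δ` determine its twelfth
power. Hence `SL(2, ℤ)` acts on the functions `g_a ^ 12` through `a`, and it permutes the powers
`u_b = ((1 - ζ_N) / g_{b / N}) ^ (12 N)`, where `b` runs through the vectors of order `N` modulo
`N`.

Each `u_b` has an expansion in `q ^ (1 / N)` whose coefficients are algebraic integers: the only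
factor of the product without constant term `1` is `1 - ζ_N ^ s`, which occurs when `b₁ = 0`, and
then `s` is prime to `N` and `(1 - ζ_N) / (1 - ζ_N ^ s)` is an algebraic integer. So the
coefficients of `∏_b (X - u_b)` are holomorphic, invariant under `SL(2, ℤ)`, and have expansions
over the algebraic integers; removing their poles at the cusp by powers of `j`, whose leading
coefficient is `1`, shows that they are polynomials in `j` over the algebraic integers.
-/

namespace SiegelFunction

open Filter Topology Asymptotics Polynomial
open UpperHalfPlane hiding I
open scoped MatrixGroups Manifold Matrix Real ModularForm

/-! ### The infinite `q`-Pochhammer symbol -/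

/-- The infinite `q`-Pochhammer symbol `(a; q)_∞`, out of which theta products are built. -/
noncomputable def qPochhammer (a q : ℂ) : ℂ := ∏' n : ℕ, (1 - a * q ^ n)

section qPochhammer

variable {a q : ℂ}

lemma summable_norm_neg_mul_pow (a : ℂ) (hq : ‖q‖ < 1) :
    Summable fun n : ℕ => ‖-(a * q ^ n)‖ := by
  simp only [norm_neg, norm_mul, norm_pow]
  exact (summable_geometric_of_lt_one (norm_nonneg _) hq).mul_left _

lemma multipliable_one_sub_mul_pow (a : ℂ) (hq : ‖q‖ < 1) :
    Multipliable fun n : ℕ => 1 - a * q ^ n := by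
  simpa only [sub_eq_add_neg] using
    multipliable_one_add_of_summable (summable_norm_neg_mul_pow a hq)

lemma qPochhammer_eq_one_sub_mul (a : ℂ) (hq : ‖q‖ < 1) :
    qPochhammer a q = (1 - a) * qPochhammer (a * q) q := by
  have hshift (n : ℕ) : 1 - a * q ^ (n + 1) = 1 - a * q * q ^ n := by ring
  have h := tprod_eq_zero_mul' (f := fun n : ℕ => 1 - a * q ^ n)
    (by simpa only [hshift] using multipliable_one_sub_mul_pow (a * q) hq)
  simpa only [qPochhammer, hshift, pow_zero, mul_one] using h

lemma qPochhammer_eq_prod_range_mul (a : ℂ) (hq : ‖q‖ < 1) (k : ℕ) :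
    qPochhammer a q = (∏ n ∈ Finset.range k, (1 - a * q ^ n)) * qPochhammer (a * q ^ k) q := by
  induction k with
  | zero => simp
  | succ k ih =>
    rw [ih, qPochhammer_eq_one_sub_mul _ hq, Finset.prod_range_succ, pow_succ]
    ring_nf

lemma qPochhammer_ne_zero (hq : ‖q‖ < 1) (h : ∀ n : ℕ, a * q ^ n ≠ 1) : qPochhammer a q ≠ 0 := by
  simp only [qPochhammer, sub_eq_add_neg]
  refine tprod_one_add_ne_zero_of_summable (fun n => ?_) (summable_norm_neg_mul_pow a hq)
  rw [← sub_eq_add_neg]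
  exact sub_ne_zero.2 (h n).symm

lemma qPochhammer_self_ne_zero (hq : ‖q‖ < 1) : qPochhammer q q ≠ 0 := by
  refine qPochhammer_ne_zero hq fun n h => ?_
  have : ‖q ^ (n + 1)‖ < 1 := by
    simpa only [norm_pow] using pow_lt_one₀ (norm_nonneg _) hq n.succ_ne_zero
  simp [pow_succ', h] at this

lemma norm_qPochhammer_sub_one_le (a : ℂ) (hq : ‖q‖ < 1) :
    ‖qPochhammer a q - 1‖ ≤ Real.exp (‖a‖ / (1 - ‖q‖)) - 1 := by
  refine le_of_tendsto
    ((multipliable_one_sub_mul_pow a hq).hasProd.tendsto_prod_nat.sub_const 1).norm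
    (.of_forall fun k => ?_)
  have hsum : ∑ n ∈ Finset.range k, ‖-(a * q ^ n)‖ ≤ ‖a‖ / (1 - ‖q‖) := by
    refine ((summable_norm_neg_mul_pow a hq).sum_le_tsum _ fun _ _ => norm_nonneg _).trans_eq ?_
    simp only [norm_neg, norm_mul, norm_pow, tsum_mul_left,
      tsum_geometric_of_lt_one (norm_nonneg q) hq, div_eq_mul_inv]
  calc ‖∏ n ∈ Finset.range k, (1 - a * q ^ n) - 1‖
      ≤ Real.exp (∑ n ∈ Finset.range k, ‖-(a * q ^ n)‖) - 1 := by
        simpa only [sub_eq_add_neg] using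
          Finset.norm_prod_one_add_sub_one_le (Finset.range k) fun n => -(a * q ^ n)
    _ ≤ Real.exp (‖a‖ / (1 - ‖q‖)) - 1 := by gcongr

lemma qPochhammer_sub_one_isBigO {α : Type*} {l : Filter α} {a q : α → ℂ}
    (ha : Tendsto a l (𝓝 0)) (hq : Tendsto q l (𝓝 0)) :
    (fun t => qPochhammer (a t) (q t) - 1) =O[l] a := by
  have small {f : α → ℂ} (hf : Tendsto f l (𝓝 0)) : ∀ᶠ t in l, ‖f t‖ ≤ 1 / 2 :=
    (tendsto_zero_iff_norm_tendsto_zero.1 hf).eventually_le_const (by norm_num)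
  refine IsBigO.of_bound 4 ?_
  filter_upwards [small ha, small hq] with t hat hqt
  have hexp : ‖a t‖ / (1 - ‖q t‖) ≤ 2 * ‖a t‖ := by
    rw [div_le_iff₀ (by linarith)]
    nlinarith [norm_nonneg (a t)]
  have hlin := (le_abs_self _).trans (Real.abs_exp_sub_one_le (x := 2 * ‖a t‖)
    (by rw [abs_of_nonneg (by positivity)]; linarith))
  rw [abs_of_nonneg (by positivity : (0 : ℝ) ≤ 2 * ‖a t‖)] at hlin
  linarith [norm_qPochhammer_sub_one_le (a t) (hqt.trans_lt (by norm_num)), Real.exp_le_exp.2 hexp]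

lemma differentiableOn_qPochhammer {U : Set ℂ} (hU : IsOpen U) {a q : ℂ → ℂ}
    (ha : DifferentiableOn ℂ a U) (hq : DifferentiableOn ℂ q U) (hq_lt : ∀ t ∈ U, ‖q t‖ < 1) :
    DifferentiableOn ℂ (fun t => qPochhammer (a t) (q t)) U := by
  have hterm (n : ℕ) : DifferentiableOn ℂ (fun t => -(a t * q t ^ n)) U := by fun_prop
  have hprod : HasProdLocallyUniformlyOn (fun (n : ℕ) t => 1 + -(a t * q t ^ n))
      (fun t => ∏' n : ℕ, (1 + -(a t * q t ^ n))) U := by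
    refine hasProdLocallyUniformlyOn_of_forall_compact hU fun K hK hcK => ?_
    rcases K.eq_empty_or_nonempty with rfl | hne
    · simp [hasProdUniformlyOn_iff_tendstoUniformlyOn, tendstoUniformlyOn_empty]
    obtain ⟨s, hs, hmax_q⟩ := hcK.exists_isMaxOn hne (hq.continuousOn.mono hK).norm
    obtain ⟨r, -, hmax_a⟩ := hcK.exists_isMaxOn hne (ha.continuousOn.mono hK).norm
    refine (summable_norm_neg_mul_pow (a r) (hq_lt s (hK hs))).hasProdUniformlyOn_nat_one_add
      hcK (.of_forall fun n t ht => ?_) fun n => (hterm n).continuousOn.mono hK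
    simp only [norm_neg, norm_mul, norm_pow]
    gcongr
    exacts [hmax_a ht, hmax_q ht]
  simp only [qPochhammer, sub_eq_add_neg]
  refine hprod.differentiableOn (.of_forall fun s => ?_) hU
  simpa only [Finset.prod_fn] using
    DifferentiableOn.finsetProd (u := s) (f := fun n t => 1 + -(a t * q t ^ n))
      fun n _ => (hterm n).const_add 1

lemma differentiable_qPochhammer_left (hq : ‖q‖ < 1) {a : ℂ → ℂ} (ha : Differentiable ℂ a) :
    Differentiable ℂ fun z => qPochhammer (a z) q := by
  rw [← differentiableOn_univ]
  exact differentiableOn_qPochhammer isOpen_univ ha.differentiableOn (differentiableOn_const q)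
    fun _ _ => hq

end qPochhammer

/-! ### Entire functions that are quasi-periodic for a lattice -/

section PeriodPair

variable (L : PeriodPair)

lemma apply_add_eq_of_mem_lattice {β : Type*} {f : ℂ → β} (h₁ : Function.Periodic f L.ω₁)
    (h₂ : Function.Periodic f L.ω₂) {ω : ℂ} (hω : ω ∈ L.lattice) : Function.Periodic f ω := by
  obtain ⟨m, n, rfl⟩ := PeriodPair.mem_lattice.1 hω
  exact (h₁.int_mul m).add_period (h₂.int_mul n)

lemma apply_eq_apply_of_differentiable_of_periodic {f : ℂ → ℂ} (hf : Differentiable ℂ f)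
    (h₁ : Function.Periodic f L.ω₁) (h₂ : Function.Periodic f L.ω₂) (z w : ℂ) : f z = f w := by
  refine hf.apply_eq_apply_of_bounded (((isCompact_closedBall (0 : ℂ)
    (∑ i, ‖L.basis i‖)).image hf.continuous).isBounded.subset ?_) z w
  rintro _ ⟨z, rfl⟩
  refine ⟨ZSpan.fract L.basis z, by simpa using ZSpan.norm_fract_le L.basis z, ?_⟩
  have hfloor : (ZSpan.floor L.basis z : ℂ) ∈ L.lattice :=
    L.lattice_eq_span_range_basis.ge (ZSpan.floor L.basis z).2
  rw [ZSpan.fract_apply]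
  exact (apply_add_eq_of_mem_lattice L h₁ h₂ hfloor).sub_eq z

/- At the zero `a` of `g` the convention `x / 0 = 0` supplies the limit of `f / g`. -/
lemma differentiableAt_div_of_deriv_eq_zero {f g : ℂ → ℂ} {a : ℂ} (hf : AnalyticAt ℂ f a)
    (hg : AnalyticAt ℂ g a) (hfa : f a = 0) (hga : g a = 0) (hf' : deriv f a = 0)
    (hg' : deriv g a ≠ 0) : DifferentiableAt ℂ (fun z => f z / g z) a := by
  have hg_ne : ∀ᶠ z in 𝓝[≠] a, g z ≠ 0 := hg.differentiableAt.hasDerivAt.eventually_ne hg'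
  have hcont : ContinuousAt (fun z => f z / g z) a := by
    have hslope := (hasDerivAt_iff_tendsto_slope.1 hf.differentiableAt.hasDerivAt).div
      (hasDerivAt_iff_tendsto_slope.1 hg.differentiableAt.hasDerivAt) hg'
    rw [continuousAt_iff_punctured_nhds, hga, div_zero]
    rw [hf', zero_div] at hslope
    refine hslope.congr' ?_
    filter_upwards [self_mem_nhdsWithin] with z hz
    simp only [Pi.div_apply, slope_def_field, hfa, hga, sub_zero]
    exact div_div_div_cancel_right₀ (sub_ne_zero.2 hz) _ _
  refine (analyticAt_of_differentiable_on_punctured_nhds_of_continuousAt ?_ hcont).differentiableAt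
  filter_upwards [hg_ne, nhdsWithin_le_nhds hf.eventually_analyticAt,
    nhdsWithin_le_nhds hg.eventually_analyticAt] with z hz hfz hgz
  exact hfz.differentiableAt.div hgz.differentiableAt hz

/-- `f` transforms under the two generators of the lattice with multipliers `φ₁` and `φ₂`, as theta
functions do. -/
structure IsQuasiperiodic (φ₁ φ₂ f : ℂ → ℂ) : Prop where
  add_ω₁ (z : ℂ) : f (z + L.ω₁) = φ₁ z * f z
  add_ω₂ (z : ℂ) : f (z + L.ω₂) = φ₂ z * f z

variable {L} {f g φ₁ φ₂ : ℂ → ℂ}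

lemma eq_zero_of_isQuasiperiodic (hf : Differentiable ℂ f) (hg : Differentiable ℂ g)
    (hφ₁ : ∀ z, φ₁ z ≠ 0) (hφ₂ : ∀ z, φ₂ z ≠ 0) (hfL : IsQuasiperiodic L φ₁ φ₂ f)
    (hgL : IsQuasiperiodic L φ₁ φ₂ g) (hf₀ : f 0 = 0) (hf' : deriv f 0 = 0) (hg₀ : g 0 = 0)
    (hg' : deriv g 0 ≠ 0) (hg_zero : ∀ z, g z = 0 → z ∈ L.lattice) (z : ℂ) : f z = 0 := by
  let K : ℂ → ℂ := fun z => f z / g z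
  have hK₁ : Function.Periodic K L.ω₁ := fun z => by
    simp only [K, hfL.add_ω₁, hgL.add_ω₁, mul_div_mul_left _ _ (hφ₁ z)]
  have hK₂ : Function.Periodic K L.ω₂ := fun z => by
    simp only [K, hfL.add_ω₂, hgL.add_ω₂, mul_div_mul_left _ _ (hφ₂ z)]
  have hK : Differentiable ℂ K := fun z => by
    by_cases hz : g z = 0
    · have hK₀ : DifferentiableAt ℂ K 0 :=
        differentiableAt_div_of_deriv_eq_zero (hf.analyticAt 0) (hg.analyticAt 0) hf₀ hg₀ hf' hg'
      have hshift : K = fun w => K (w - z) :=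
        funext fun w => ((apply_add_eq_of_mem_lattice L hK₁ hK₂ (hg_zero z hz)).sub_eq w).symm
      rw [hshift]
      exact DifferentiableAt.comp (g := K) z (by rwa [sub_self]) (differentiableAt_id.sub_const z)
    · exact (hf z).div (hg z) hz
  have hfg (z : ℂ) : f z * g z = 0 := by
    have hKz : K z = 0 := by
      rw [apply_eq_apply_of_differentiable_of_periodic L hK hK₁ hK₂ z 0]
      simp only [K, hf₀, zero_div]
    simpa only [K, div_eq_zero_iff, ← mul_eq_zero] using hKz
  rcases AnalyticOnNhd.eq_zero_or_eq_zero_of_mul_eq_zero (fun z _ => hf.analyticAt z)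
    (fun z _ => hg.analyticAt z) (fun z _ => hfg z) isPreconnected_univ with h | h
  · exact h z trivial
  · refine absurd ?_ hg'
    rw [show g = fun _ => 0 from funext fun z => h z trivial, deriv_const]

lemma deriv_mul_eq_deriv_mul_of_isQuasiperiodic (hf : Differentiable ℂ f) (hg : Differentiable ℂ g)
    (hφ₁ : ∀ z, φ₁ z ≠ 0) (hφ₂ : ∀ z, φ₂ z ≠ 0) (hfL : IsQuasiperiodic L φ₁ φ₂ f)
    (hgL : IsQuasiperiodic L φ₁ φ₂ g) (hf₀ : f 0 = 0) (hg₀ : g 0 = 0)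
    (hg' : deriv g 0 ≠ 0) (hg_zero : ∀ z, g z = 0 → z ∈ L.lattice) (z : ℂ) :
    deriv g 0 * f z = deriv f 0 * g z := by
  rw [← sub_eq_zero]
  refine eq_zero_of_isQuasiperiodic (f := fun z => deriv g 0 * f z - deriv f 0 * g z)
    (by fun_prop) hg hφ₁ hφ₂ ⟨fun z => ?_, fun z => ?_⟩ hgL (by simp [hf₀, hg₀]) ?_ hg₀ hg'
    hg_zero z
  · rw [hfL.add_ω₁, hgL.add_ω₁]
    ring
  · rw [hfL.add_ω₂, hgL.add_ω₂]
    ring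
  · exact (((hf 0).hasDerivAt.const_mul _).sub ((hg 0).hasDerivAt.const_mul _)).deriv.trans
      (by ring)

end PeriodPair

/-! ### The theta product and its behaviour under `τ ↦ -1 / τ` -/

section thetaProd

/-- The theta product `w^{-1/2} (w; q)_∞ (q / w; q)_∞` for `w = e^{2πiz}` and `q = e^{2πiτ}`: by the
Jacobi triple product a multiple, not depending on `z`, of the theta function `θ₁`. -/
noncomputable def thetaProd (z τ : ℂ) : ℂ :=
  exp (-(π * I * z)) * qPochhammer (exp (2 * π * I * z)) (exp (2 * π * I * τ)) *
    qPochhammer (exp (2 * π * I * (τ - z))) (exp (2 * π * I * τ))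

/-- The periods `τ` and `1` of the theta product. -/
def periodPair (τ : ℍ) : PeriodPair where
  ω₁ := τ
  ω₂ := 1
  indep := by
    rw [LinearIndependent.pair_iff]
    intro s t h
    have hs : s = 0 := by simpa [τ.im_ne_zero] using congrArg Complex.im h
    simpa [hs] using h

lemma exp_two_pi_I_mul_add_one (z : ℂ) : exp (2 * π * I * (z + 1)) = exp (2 * π * I * z) := by
  rw [mul_add, mul_one, exp_add, exp_two_pi_mul_I, mul_one]

lemma exp_two_pi_I_mul_eq_one_iff {z : ℂ} : exp (2 * π * I * z) = 1 ↔ ∃ n : ℤ, z = n := by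
  simp only [Complex.exp_eq_one_iff, mul_comm (2 * (π : ℂ) * I),
    mul_left_inj' Complex.two_pi_I_ne_zero]

variable (τ : ℍ)

lemma thetaProd_eq_one_sub_mul (z : ℂ) :
    thetaProd z τ = (1 - exp (2 * π * I * z)) * (exp (-(π * I * z)) *
      qPochhammer (exp (2 * π * I * (z + τ))) (exp (2 * π * I * τ)) *
      qPochhammer (exp (2 * π * I * (τ - z))) (exp (2 * π * I * τ))) := by
  rw [thetaProd, qPochhammer_eq_one_sub_mul _ (norm_exp_two_pi_I_lt_one τ), ← exp_add, ← mul_add]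
  ring

lemma differentiable_thetaProd : Differentiable ℂ fun z => thetaProd z τ := by
  have hpoch {a : ℂ → ℂ} := differentiable_qPochhammer_left (a := a) (norm_exp_two_pi_I_lt_one τ)
  exact (Differentiable.mul (by fun_prop) (hpoch (by fun_prop))).mul (hpoch (by fun_prop))

lemma thetaProd_zero : thetaProd 0 τ = 0 := by
  simp [thetaProd_eq_one_sub_mul]

lemma thetaProd_add_one (z : ℂ) : thetaProd (z + 1) τ = -1 * thetaProd z τ := by
  have hhalf : exp (-(π * I * (z + 1))) = -exp (-(π * I * z)) := by
    rw [mul_add, mul_one, neg_add, exp_add, exp_neg (π * I), exp_pi_mul_I]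
    norm_num
  have hinv : exp (2 * π * I * (τ - (z + 1))) = exp (2 * π * I * (τ - z)) := by
    rw [← exp_two_pi_I_mul_add_one, sub_add_eq_sub_sub, sub_add_cancel]
  rw [thetaProd, hhalf, hinv, exp_two_pi_I_mul_add_one, thetaProd]
  ring

lemma thetaProd_add_self (z : ℂ) :
    thetaProd (z + τ) τ = -exp (-(π * I * τ) - 2 * π * I * z) * thetaProd z τ := by
  have hpoch : qPochhammer (exp (2 * π * I * (τ - (z + τ)))) (exp (2 * π * I * τ)) =
      -exp (-(2 * π * I * z)) * (1 - exp (2 * π * I * z)) *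
        qPochhammer (exp (2 * π * I * (τ - z))) (exp (2 * π * I * τ)) := by
    have hw : exp (-(2 * π * I * z)) * exp (2 * π * I * z) = 1 := by simp [← exp_add]
    rw [qPochhammer_eq_one_sub_mul _ (norm_exp_two_pi_I_lt_one τ), ← exp_add]
    ring_nf at hw ⊢
    rw [hw]
    ring
  have hhalf : exp (-(π * I * (z + τ))) = exp (-(π * I * z)) * exp (-(π * I * τ)) := by
    rw [← exp_add]
    ring_nf
  rw [thetaProd, hpoch, hhalf, thetaProd_eq_one_sub_mul,
    sub_eq_add_neg (-(π * I * (τ : ℂ))), exp_add]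
  ring

lemma thetaProd_sub_self (z : ℂ) :
    thetaProd (z - τ) τ = -exp (-(π * I * τ) + 2 * π * I * z) * thetaProd z τ := by
  have h := thetaProd_add_self τ (z - τ)
  rw [sub_add_cancel] at h
  rw [h, ← mul_assoc, neg_mul_neg, ← exp_add]
  ring_nf
  rw [exp_zero, one_mul]

lemma isQuasiperiodic_thetaProd :
    IsQuasiperiodic (periodPair τ) (fun z => -exp (-(π * I * τ) - 2 * π * I * z)) (fun _ => -1)
      fun z => thetaProd z τ :=
  ⟨thetaProd_add_self τ, thetaProd_add_one τ⟩

lemma mem_lattice_of_thetaProd_eq_zero {z : ℂ} (h : thetaProd z τ = 0) :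
    z ∈ (periodPair τ).lattice := by
  have hpow (w : ℂ) (n : ℕ) : exp (2 * π * I * w) * exp (2 * π * I * τ) ^ n =
      exp (2 * π * I * (w + n * τ)) := by
    rw [← exp_nat_mul, ← exp_add]
    ring_nf
  rw [PeriodPair.mem_lattice]
  contrapose! h
  refine mul_ne_zero (mul_ne_zero (exp_ne_zero _) ?_) ?_ <;>
    refine qPochhammer_ne_zero (norm_exp_two_pi_I_lt_one τ) fun n hn => ?_ <;>
    obtain ⟨k, hk⟩ := exp_two_pi_I_mul_eq_one_iff.1 ((hpow _ n).symm.trans hn)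
  · refine h (-n) k ?_
    simp only [periodPair, ← hk]
    push_cast
    ring
  · refine h (n + 1) (-k) ?_
    simp only [periodPair, Int.cast_neg, ← hk]
    push_cast
    ring

lemma deriv_thetaProd_zero : deriv (fun z => thetaProd z τ) 0 =
    -(2 * π * I) * qPochhammer (exp (2 * π * I * τ)) (exp (2 * π * I * τ)) ^ 2 := by
  have hfactor : HasDerivAt (fun z : ℂ => 1 - exp (2 * π * I * z)) (-(2 * π * I)) 0 := by
    simpa using ((hasDerivAt_id (0 : ℂ)).const_mul (2 * π * I)).cexp.const_sub 1
  have hpoch {a : ℂ → ℂ} := differentiable_qPochhammer_left (a := a) (norm_exp_two_pi_I_lt_one τ)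
  have hrest : Differentiable ℂ fun z : ℂ => exp (-(π * I * z)) *
      qPochhammer (exp (2 * π * I * (z + τ))) (exp (2 * π * I * τ)) *
      qPochhammer (exp (2 * π * I * (τ - z))) (exp (2 * π * I * τ)) :=
    (Differentiable.mul (by fun_prop) (hpoch (by fun_prop))).mul (hpoch (by fun_prop))
  simp only [thetaProd_eq_one_sub_mul]
  refine (hfactor.mul (hrest 0).hasDerivAt).deriv.trans ?_
  simp [sq, mul_assoc]

lemma deriv_thetaProd_zero_ne_zero : deriv (fun z => thetaProd z τ) 0 ≠ 0 := by
  rw [deriv_thetaProd_zero]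
  exact mul_ne_zero (neg_ne_zero.2 two_pi_I_ne_zero)
    (pow_ne_zero 2 (qPochhammer_self_ne_zero (norm_exp_two_pi_I_lt_one τ)))

lemma discriminant_eq_mul_qPochhammer_pow : ModularForm.discriminant τ =
    exp (2 * π * I * τ) * qPochhammer (exp (2 * π * I * τ)) (exp (2 * π * I * τ)) ^ 24 := by
  have hprod : ∏' n, (1 - ModularForm.eta_q n τ) =
      qPochhammer (exp (2 * π * I * τ)) (exp (2 * π * I * τ)) :=
    tprod_congr fun n => by rw [ModularForm.eta_q_eq_pow, pow_succ']
  rw [ModularForm.discriminant, ModularForm.eta, hprod, mul_pow, Function.Periodic.qParam,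
    ← exp_nat_mul]
  push_cast
  ring_nf

lemma discriminant_S_smul : ModularForm.discriminant (ModularGroup.S • τ) =
    τ ^ 12 * ModularForm.discriminant τ := by
  have h := congrFun ModularForm.discriminant_S_invariant τ
  rw [ModularForm.SL_slash_apply, ModularGroup.denom_S, zpow_neg, ← div_eq_mul_inv,
    div_eq_iff (zpow_ne_zero _ τ.ne_zero)] at h
  rw [h, mul_comm]
  rfl

lemma coe_S_smul : ((ModularGroup.S • τ : ℍ) : ℂ) = -1 / τ := by
  rw [modular_S_smul, coe_mk, neg_div, one_div, inv_neg]

lemma coe_T_smul : ((ModularGroup.T • τ : ℍ) : ℂ) = τ + 1 := by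
  rw [modular_T_smul, coe_vadd, ofReal_one, add_comm]

lemma exp_mul_deriv_thetaProd_zero_pow :
    exp (2 * π * I * τ) * deriv (fun z => thetaProd z τ) 0 ^ 12 =
      (2 * π * I) ^ 12 * ModularForm.discriminant τ := by
  rw [deriv_thetaProd_zero, discriminant_eq_mul_qPochhammer_pow]
  ring

/-- The theta product of the lattice `ℤ (-1 / τ) + ℤ`, rescaled by `τ` and multiplied by the
Gaussian factor that gives it the multipliers of the theta product of `ℤ τ + ℤ`. -/
noncomputable def gaussThetaProd (τ : ℍ) (z : ℂ) : ℂ :=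
  exp (-(π * I * (z ^ 2 / τ))) * thetaProd (z / τ) (ModularGroup.S • τ : ℍ)

lemma differentiable_gaussThetaProd : Differentiable ℂ (gaussThetaProd τ) :=
  Differentiable.mul (by fun_prop)
    ((differentiable_thetaProd (ModularGroup.S • τ)).comp (differentiable_id.div_const _))

lemma gaussThetaProd_zero : gaussThetaProd τ 0 = 0 := by
  simp [gaussThetaProd, thetaProd_zero]

lemma isQuasiperiodic_gaussThetaProd :
    IsQuasiperiodic (periodPair τ) (fun z => -exp (-(π * I * τ) - 2 * π * I * z)) (fun _ => -1)
      (gaussThetaProd τ) where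
  add_ω₁ z := by
    have hτ : (τ : ℂ) ≠ 0 := τ.ne_zero
    have hdiv : (z + τ) / τ = z / τ + 1 := by field_simp
    have hgauss : exp (-(π * I * ((z + τ) ^ 2 / τ))) =
        exp (-(π * I * τ) - 2 * π * I * z) * exp (-(π * I * (z ^ 2 / τ))) := by
      rw [← exp_add]
      congr 1
      field_simp
      ring
    simp only [gaussThetaProd, periodPair, hdiv, hgauss, thetaProd_add_one]
    ring
  add_ω₂ z := by
    have hτ : (τ : ℂ) ≠ 0 := τ.ne_zero
    have hdiv : (z + 1) / τ = z / τ - (ModularGroup.S • τ : ℍ) := by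
      rw [coe_S_smul]
      ring
    have hgauss : exp (-(π * I * ((z + 1) ^ 2 / τ))) *
        exp (-(π * I * (ModularGroup.S • τ : ℍ)) + 2 * π * I * (z / τ)) =
        exp (-(π * I * (z ^ 2 / τ))) := by
      rw [← exp_add, coe_S_smul]
      congr 1
      field_simp
      ring
    simp only [gaussThetaProd, periodPair, hdiv, thetaProd_sub_self, ← hgauss]
    ring

lemma deriv_gaussThetaProd_zero :
    deriv (gaussThetaProd τ) 0 = deriv (fun z => thetaProd z (ModularGroup.S • τ : ℍ)) 0 / τ := by
  have hgauss : Differentiable ℂ fun z : ℂ => exp (-(π * I * (z ^ 2 / τ))) := by fun_prop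
  have htheta : HasDerivAt (fun z : ℂ => thetaProd (z / τ) (ModularGroup.S • τ : ℍ))
      (deriv (fun z => thetaProd z (ModularGroup.S • τ : ℍ)) 0 * (1 / τ)) 0 := by
    refine HasDerivAt.comp (h := fun z : ℂ => z / τ)
      (h₂ := fun z => thetaProd z (ModularGroup.S • τ : ℍ)) 0 ?_ ((hasDerivAt_id _).div_const _)
    simpa only [zero_div] using (differentiable_thetaProd (ModularGroup.S • τ) 0).hasDerivAt
  refine ((hgauss 0).hasDerivAt.mul htheta).deriv.trans ?_
  simp [thetaProd_zero, div_eq_mul_inv]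

lemma thetaProd_S_smul_pow_twelve (z : ℂ) :
    exp (2 * π * I * (ModularGroup.S • τ : ℍ)) * thetaProd (z / τ) (ModularGroup.S • τ : ℍ) ^ 12 =
      exp (2 * π * I * τ) * exp (12 * (π * I * (z ^ 2 / τ))) * thetaProd z τ ^ 12 := by
  have hratio := deriv_mul_eq_deriv_mul_of_isQuasiperiodic (differentiable_gaussThetaProd τ)
    (differentiable_thetaProd τ) (fun _ => neg_ne_zero.2 (exp_ne_zero _)) (fun _ => by norm_num)
    (isQuasiperiodic_gaussThetaProd τ) (isQuasiperiodic_thetaProd τ) (gaussThetaProd_zero τ)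
    (thetaProd_zero τ) (deriv_thetaProd_zero_ne_zero τ)
    (fun _ => mem_lattice_of_thetaProd_eq_zero τ) z
  have hd := exp_mul_deriv_thetaProd_zero_pow τ
  have hd' := exp_mul_deriv_thetaProd_zero_pow (ModularGroup.S • τ)
  rw [discriminant_S_smul, mul_left_comm, ← hd] at hd'
  have hexp : exp (12 * (π * I * (z ^ 2 / τ))) = exp (π * I * (z ^ 2 / τ)) ^ 12 := exp_nat_mul _ 12
  rw [deriv_gaussThetaProd_zero, gaussThetaProd, exp_neg] at hratio
  have hE := exp_ne_zero (π * I * (z ^ 2 / τ))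
  have hτ : (τ : ℂ) ≠ 0 := τ.ne_zero
  rw [hexp]
  set E := exp (π * I * (z ^ 2 / τ))
  set d := deriv (fun z => thetaProd z τ) 0
  set d' := deriv (fun z => thetaProd z (ModularGroup.S • τ : ℍ)) 0
  set θ' := thetaProd (z / τ) (ModularGroup.S • τ : ℍ)
  have hratio_pow : (τ * d * θ') ^ 12 = (E * d' * thetaProd z τ) ^ 12 := by
    field_simp at hratio
    rw [← hratio]
    ring
  refine mul_left_cancel₀ (pow_ne_zero 12 (mul_ne_zero hτ (deriv_thetaProd_zero_ne_zero τ))) ?_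
  linear_combination exp (2 * π * I * (ModularGroup.S • τ : ℍ)) * hratio_pow +
    (E * thetaProd z τ) ^ 12 * hd'

end thetaProd

/-! ### Modularity of the twelfth power of the Siegel function -/

section siegel

variable (a b : ℝ) (τ : ℍ)

lemma siegel_eq_mul_qPochhammer : siegel a b τ =
    -qpow τ (B2 a / 2) * exp (π * I * b * (a - 1)) *
      (qPochhammer (exp (2 * π * I * (a * τ + b))) (exp (2 * π * I * τ)) *
        qPochhammer (exp (2 * π * I * (τ - (a * τ + b)))) (exp (2 * π * I * τ))) := by
  have hleft (n : ℕ) : qpow τ (n + a) * exp (2 * π * I * b) =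
      exp (2 * π * I * (a * τ + b)) * exp (2 * π * I * τ) ^ n := by
    rw [qpow, ← exp_nat_mul, ← exp_add, ← exp_add]
    push_cast
    ring_nf
  have hright (n : ℕ) : qpow τ (n + 1 - a) * exp (-(2 * π * I * b)) =
      exp (2 * π * I * (τ - (a * τ + b))) * exp (2 * π * I * τ) ^ n := by
    rw [qpow, ← exp_nat_mul, ← exp_add, ← exp_add]
    push_cast
    ring_nf
  have hq := norm_exp_two_pi_I_lt_one τ
  simp only [siegel, hleft, hright]
  rw [(multipliable_one_sub_mul_pow _ hq).tprod_mul (multipliable_one_sub_mul_pow _ hq)]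
  rfl

lemma siegel_eq_exp_mul_thetaProd : siegel a b τ =
    -exp (π * I * (τ / 6 + a * (a * τ + b))) * thetaProd (a * τ + b) τ := by
  have hexp : qpow τ (B2 a / 2) * exp (π * I * b * (a - 1)) =
      exp (π * I * (τ / 6 + a * (a * τ + b))) * exp (-(π * I * (a * τ + b))) := by
    rw [qpow, B2, ← exp_add, ← exp_add]
    push_cast
    ring_nf
  rw [siegel_eq_mul_qPochhammer, thetaProd, neg_mul, hexp]
  ring

lemma siegel_pow_twelve : siegel a b τ ^ 12 =
    exp (2 * π * I * τ) * exp (12 * (π * I * (a * (a * τ + b)))) *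
      thetaProd (a * τ + b) τ ^ 12 := by
  rw [siegel_eq_exp_mul_thetaProd, mul_pow, neg_pow, ← exp_nat_mul, ← exp_add]
  push_cast
  ring_nf

lemma siegel_add_one_left_pow_twelve :
    siegel (a + 1) b τ ^ 12 = exp (-(12 * (π * I * b))) * siegel a b τ ^ 12 := by
  have hz : ((a + 1 : ℝ) : ℂ) * τ + b = a * τ + b + τ := by
    push_cast
    ring
  have hexp : exp (12 * (π * I * ((a + 1 : ℝ) * (a * τ + b + τ)))) *
      exp (-(π * I * τ) - 2 * π * I * (a * τ + b)) ^ 12 =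
      exp (-(12 * (π * I * b))) * exp (12 * (π * I * (a * (a * τ + b)))) := by
    rw [← exp_nat_mul, ← exp_add, ← exp_add]
    push_cast
    ring_nf
  rw [siegel_pow_twelve, siegel_pow_twelve, hz, thetaProd_add_self]
  linear_combination exp (2 * π * I * τ) * thetaProd (a * τ + b) τ ^ 12 * hexp

lemma siegel_add_one_right_pow_twelve :
    siegel a (b + 1) τ ^ 12 = exp (12 * (π * I * a)) * siegel a b τ ^ 12 := by
  have hz : (a : ℂ) * τ + (b + 1 : ℝ) = a * τ + b + 1 := by
    push_cast
    ring
  have hexp : exp (12 * (π * I * (a * (a * τ + b + 1)))) =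
      exp (12 * (π * I * a)) * exp (12 * (π * I * (a * (a * τ + b)))) := by
    rw [← exp_add]
    ring_nf
  rw [siegel_pow_twelve, siegel_pow_twelve, hz, thetaProd_add_one, hexp]
  ring

lemma siegel_T_smul_pow_twelve :
    siegel a b (ModularGroup.T • τ : ℍ) ^ 12 = siegel a (a + b) τ ^ 12 := by
  have hz : (a : ℂ) * (τ + 1) + b = a * τ + (a + b : ℝ) := by
    push_cast
    ring
  have hq : exp (2 * π * I * (τ + 1 - (a * τ + (a + b : ℝ)))) =
      exp (2 * π * I * (τ - (a * τ + (a + b : ℝ)))) := by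
    rw [← exp_two_pi_I_mul_add_one (τ - _), sub_add_eq_add_sub]
  rw [siegel_pow_twelve, siegel_pow_twelve, coe_T_smul, hz, exp_two_pi_I_mul_add_one, thetaProd,
    thetaProd, exp_two_pi_I_mul_add_one, hq]

lemma siegel_S_smul_pow_twelve :
    siegel a b (ModularGroup.S • τ : ℍ) ^ 12 = siegel b (-a) τ ^ 12 := by
  have hτ : (τ : ℂ) ≠ 0 := τ.ne_zero
  have hz : (a : ℂ) * (ModularGroup.S • τ : ℍ) + b = (b * τ + (-a : ℝ)) / τ := by
    rw [coe_S_smul]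
    push_cast
    field_simp
    ring
  have hexp : exp (12 * (π * I * (a * ((b * τ + (-a : ℝ)) / τ)))) *
      exp (12 * (π * I * ((b * τ + (-a : ℝ)) ^ 2 / τ))) =
      exp (12 * (π * I * (b * (b * τ + (-a : ℝ))))) := by
    rw [← exp_add]
    congr 1
    push_cast
    field_simp
    ring
  rw [siegel_pow_twelve, siegel_pow_twelve, hz, mul_right_comm, thetaProd_S_smul_pow_twelve, ← hexp]
  ring

lemma siegel_smul_pow_twelve (γ : SL(2, ℤ)) (v : Fin 2 → ℝ) :
    siegel (v 0) (v 1) (γ • τ : ℍ) ^ 12 =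
      siegel ((v ᵥ* (γ.map (Int.castRingHom ℝ)).1) 0) ((v ᵥ* (γ.map (Int.castRingHom ℝ)).1) 1) τ
        ^ 12 := by
  have hγ : γ ∈ Subgroup.closure {ModularGroup.S, ModularGroup.T} := by
    simp [SpecialLinearGroup.SL2Z_generators]
  induction hγ using Subgroup.closure_induction generalizing v τ with
  | mem γ hγ =>
    rcases hγ with rfl | rfl
    · rw [siegel_S_smul_pow_twelve]
      simp [Matrix.vecMul, dotProduct, ModularGroup.coe_S]
    · rw [siegel_T_smul_pow_twelve]
      simp [Matrix.vecMul, dotProduct, ModularGroup.coe_T]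
  | one => simp
  | mul γ δ _ _ hγ hδ => rw [mul_smul, hγ, hδ, map_mul, Matrix.SpecialLinearGroup.coe_mul,
      Matrix.vecMul_vecMul]
  | inv γ _ hγ =>
    have h := hγ (γ⁻¹ • τ) (v ᵥ* (γ⁻¹.map (Int.castRingHom ℝ)).1)
    rwa [smul_inv_smul, Matrix.vecMul_vecMul, ← Matrix.SpecialLinearGroup.coe_mul, ← map_mul,
      inv_mul_cancel, map_one, Matrix.SpecialLinearGroup.coe_one, Matrix.vecMul_one, eq_comm] at h

variable {a b}

lemma siegel_ne_zero (hab : ¬∃ m n : ℤ, a = m ∧ b = n) : siegel a b τ ≠ 0 := by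
  rw [siegel_eq_exp_mul_thetaProd]
  refine mul_ne_zero (neg_ne_zero.2 (exp_ne_zero _)) fun hθ => hab ?_
  obtain ⟨m, n, hmn⟩ := PeriodPair.mem_lattice.1 (mem_lattice_of_thetaProd_eq_zero τ hθ)
  simp only [periodPair, mul_one] at hmn
  have hm : a = m := by simpa [τ.im_ne_zero, eq_comm] using congrArg Complex.im hmn
  refine ⟨m, n, hm, ?_⟩
  simpa [hm, eq_comm] using congrArg Complex.re hmn

lemma differentiableOn_siegel (a b : ℝ) : DifferentiableOn ℂ (siegel a b) {τ | 0 < τ.im} := by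
  have hU : IsOpen {τ : ℂ | 0 < τ.im} := isOpen_lt continuous_const continuous_im
  have hq : DifferentiableOn ℂ (fun τ => exp (2 * π * I * τ)) {τ | 0 < τ.im} := by fun_prop
  have hq_lt : ∀ τ ∈ {τ : ℂ | 0 < τ.im}, ‖exp (2 * π * I * τ)‖ < 1 :=
    fun τ hτ => norm_exp_two_pi_I_lt_one ⟨τ, hτ⟩
  have hleft : DifferentiableOn ℂ (fun τ => qPochhammer (exp (2 * π * I * (a * τ + b)))
      (exp (2 * π * I * τ))) {τ | 0 < τ.im} :=
    differentiableOn_qPochhammer hU (by fun_prop) hq hq_lt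
  have hright : DifferentiableOn ℂ (fun τ => qPochhammer (exp (2 * π * I * (τ - (a * τ + b))))
      (exp (2 * π * I * τ))) {τ | 0 < τ.im} :=
    differentiableOn_qPochhammer hU (by fun_prop) hq hq_lt
  have hqpow : DifferentiableOn ℂ (fun τ => -qpow τ (B2 a / 2) * exp (π * I * b * (a - 1)))
      {τ | 0 < τ.im} := by
    unfold qpow
    fun_prop
  exact (hqpow.mul (hleft.mul hright)).congr fun τ hτ => siegel_eq_mul_qPochhammer a b ⟨τ, hτ⟩

end siegel

/-! ### Asymptotic power series with coefficients in a subring -/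

section expansionSubring

variable {α 𝕜 : Type*} [NontriviallyNormedField 𝕜] (R : Subring 𝕜) {l : Filter α} {x : α → 𝕜}

section tendsto

variable {R}

lemma tendsto_aeval_of_tendsto_zero (hx : Tendsto x l (𝓝 0)) (Q : R[X]) :
    Tendsto (fun t => aeval (x t) Q) l (𝓝 (Q.coeff 0 : 𝕜)) := by
  have h := ((Polynomial.continuous_aeval (A := 𝕜) Q).tendsto 0).comp hx
  simp only [aeval_def, eval₂_at_zero] at h
  exact h

lemma isBigO_one_of_sub_aeval_isBigO_pow (hx : Tendsto x l (𝓝 0)) {f : α → 𝕜} {Q : R[X]} {K : ℕ}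
    (hf : (fun t => f t - aeval (x t) Q) =O[l] fun t => x t ^ K) :
    f =O[l] fun _ => (1 : 𝕜) := by
  have h := (hf.trans ((hx.pow K).isBigO_one 𝕜)).add
    ((tendsto_aeval_of_tendsto_zero hx Q).isBigO_one 𝕜)
  simpa only [sub_add_cancel] using h

end tendsto

/-- The ring of functions `f` having an asymptotic expansion `f ∼ ∑ cₙ xⁿ` along `l` with
coefficients `cₙ ∈ R`, where `x` tends to `0` along `l`. The expansion is encoded by its
truncations: polynomials `Q` over `R` with `f = Q(x) + O(x ^ K)`, one for each `K`. -/
def expansionSubring (hx : Tendsto x l (𝓝 0)) : Subring (α → 𝕜) where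
  carrier := {f | ∀ K : ℕ, ∃ Q : R[X], (fun t => f t - aeval (x t) Q) =O[l] fun t => x t ^ K}
  zero_mem' K := ⟨0, by simpa using isBigO_zero _ _⟩
  one_mem' K := ⟨1, by simpa using isBigO_zero _ _⟩
  neg_mem' hf K := by
    obtain ⟨P, hP⟩ := hf K
    refine ⟨-P, hP.neg_left.congr_left fun t => ?_⟩
    simp only [Pi.neg_apply, map_neg]
    ring
  add_mem' hf hg K := by
    obtain ⟨P, hP⟩ := hf K
    obtain ⟨Q, hQ⟩ := hg K
    refine ⟨P + Q, (hP.add hQ).congr_left fun t => ?_⟩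
    simp only [Pi.add_apply, map_add]
    ring
  mul_mem' {f g} hf hg K := by
    obtain ⟨P, hP⟩ := hf K
    obtain ⟨Q, hQ⟩ := hg K
    have hfg := hP.mul (isBigO_one_of_sub_aeval_isBigO_pow hx hQ)
    have hPg := ((tendsto_aeval_of_tendsto_zero hx P).isBigO_one 𝕜).mul hQ
    simp only [mul_one, one_mul] at hfg hPg
    refine ⟨P * Q, (hfg.add hPg).congr_left fun t => ?_⟩
    simp only [Pi.mul_apply, map_mul]
    ring

variable (hx : Tendsto x l (𝓝 0)) {f : α → 𝕜}

lemma algebraMap_mem_expansionSubring (c : R) :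
    algebraMap R (α → 𝕜) c ∈ expansionSubring R hx :=
  fun _ => ⟨C c, by simpa using isBigO_zero _ _⟩

lemma self_mem_expansionSubring : x ∈ expansionSubring R hx :=
  fun _ => ⟨X, by simpa using isBigO_zero _ _⟩

variable {R} {hx}

lemma mem_expansionSubring_of_sub_isBigO_pow
    (h : ∀ K : ℕ, ∃ g ∈ expansionSubring R hx, (f - g) =O[l] fun t => x t ^ K) :
    f ∈ expansionSubring R hx := by
  intro K
  obtain ⟨g, hg, hfg⟩ := h K
  obtain ⟨Q, hQ⟩ := hg K
  exact ⟨Q, (hfg.add hQ).congr_left fun t => by simp⟩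

lemma exists_tendsto_of_mem_expansionSubring (hf : f ∈ expansionSubring R hx) :
    ∃ c : R, Tendsto f l (𝓝 c) := by
  obtain ⟨Q, hQ⟩ := hf 1
  simp only [pow_one] at hQ
  refine ⟨Q.coeff 0, ?_⟩
  simpa using (hQ.trans_tendsto hx).add (tendsto_aeval_of_tendsto_zero hx Q)

section NeBot

variable [l.NeBot]

lemma exists_sub_mul_aeval_isBigO_pow (hf : f ∈ expansionSubring R hx) (hf0 : Tendsto f l (𝓝 0))
    (K : ℕ) : ∃ Q : R[X], (fun t => f t - x t * aeval (x t) Q) =O[l] fun t => x t ^ (K + 1) := by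
  obtain ⟨Q, hQ⟩ := hf (K + 1)
  have hpow : Tendsto (fun t => x t ^ (K + 1)) l (𝓝 0) := by simpa using hx.pow (K + 1)
  have hlim := (hQ.trans_tendsto hpow).add (tendsto_aeval_of_tendsto_zero hx Q)
  simp only [sub_add_cancel, zero_add] at hlim
  have hcoeff : Q.coeff 0 = 0 := by exact_mod_cast tendsto_nhds_unique hlim hf0
  refine ⟨Q.divX, hQ.congr_left fun t => ?_⟩
  conv_lhs => rw [← divX_mul_X_add Q, hcoeff]
  simp [mul_comm]

lemma isBigO_self_of_mem_expansionSubring (hf : f ∈ expansionSubring R hx)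
    (hf0 : Tendsto f l (𝓝 0)) : f =O[l] x := by
  obtain ⟨Q, hQ⟩ := exists_sub_mul_aeval_isBigO_pow hf hf0 0
  simp only [zero_add, pow_one] at hQ
  have h := (isBigO_refl x l).mul ((tendsto_aeval_of_tendsto_zero hx Q).isBigO_one 𝕜)
  simp only [mul_one] at h
  simpa only [sub_add_cancel] using hQ.add h

lemma div_mem_expansionSubring (hx0 : ∀ t, x t ≠ 0) (hf : f ∈ expansionSubring R hx)
    (hf0 : Tendsto f l (𝓝 0)) : f / x ∈ expansionSubring R hx := by
  intro K
  obtain ⟨Q, hQ⟩ := exists_sub_mul_aeval_isBigO_pow hf hf0 K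
  refine ⟨Q, (hQ.mul (isBigO_refl x⁻¹ l)).congr (fun t => ?_) fun t => ?_⟩
  · simp only [Pi.inv_apply, Pi.div_apply]
    field_simp [hx0 t]
  · rw [Pi.inv_apply, pow_succ, mul_inv_cancel_right₀ (hx0 t)]

lemma inv_mem_expansionSubring {c : 𝕜} (hf : f ∈ expansionSubring R hx) (hfc : Tendsto f l (𝓝 c))
    (hc : c ≠ 0) (hcR : c⁻¹ ∈ R) : f⁻¹ ∈ expansionSubring R hx := by
  set d : R := ⟨c⁻¹, hcR⟩
  set h : α → 𝕜 := 1 - algebraMap R (α → 𝕜) d * f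
  have hd : algebraMap R (α → 𝕜) d ∈ expansionSubring R hx := algebraMap_mem_expansionSubring R hx d
  have hh : h ∈ expansionSubring R hx := sub_mem (one_mem _) (mul_mem hd hf)
  have hh0 : Tendsto h l (𝓝 0) := by
    simpa [h, Pi.sub_def, Pi.mul_def, d, Algebra.algebraMap_eq_smul_one, Subring.smul_def, hc] using
      (hfc.const_mul c⁻¹).const_sub 1
  refine mem_expansionSubring_of_sub_isBigO_pow fun K =>
    ⟨algebraMap R (α → 𝕜) d * ∑ k ∈ Finset.range K, h ^ k,
      mul_mem hd (sum_mem fun k _ => pow_mem hh k), ?_⟩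
  have hrem : (fun t => h t ^ K * (f t)⁻¹) =O[l] fun t => x t ^ K := by
    simpa using ((isBigO_self_of_mem_expansionSubring hh hh0).pow K).mul
      ((hfc.inv₀ hc).isBigO_one 𝕜)
  refine hrem.congr' ?_ .rfl
  filter_upwards [hfc.eventually_ne hc] with t ht
  have hgeom := congrFun (mul_neg_geom_sum h K) t
  simp only [h, sub_sub_cancel, Pi.mul_apply, Pi.sub_apply, Pi.pow_apply, Pi.one_apply,
    Pi.inv_apply] at hgeom ⊢
  field_simp
  linear_combination hgeom

lemma expansionSubring_mono {y : α → 𝕜} {hy : Tendsto y l (𝓝 0)}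
    (hyx : y ∈ expansionSubring R hx) : expansionSubring R hy ≤ expansionSubring R hx := by
  refine fun f hf => mem_expansionSubring_of_sub_isBigO_pow fun K => ?_
  obtain ⟨Q, hQ⟩ := hf K
  refine ⟨fun t => aeval (y t) Q, ?_, hQ.trans ((isBigO_self_of_mem_expansionSubring hyx hy).pow K)⟩
  have hmem : aeval y Q ∈ expansionSubring R hx := by
    rw [aeval_eq_sum_range]
    refine sum_mem fun i _ => ?_
    rw [Algebra.smul_def]
    exact mul_mem (algebraMap_mem_expansionSubring R hx _) (pow_mem hyx i)
  rwa [aeval_pi_apply] at hmem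

end NeBot

lemma comp_mem_expansionSubring {g : 𝕜 → 𝕜} {c : ℕ → R}
    (hg : HasFPowerSeriesAt g (.ofScalars 𝕜 fun n => (c n : 𝕜)) 0) :
    g ∘ x ∈ expansionSubring R hx := by
  intro K
  refine ⟨∑ i ∈ Finset.range K, monomial i (c i), ?_⟩
  have h := (hg.isBigO_sub_partialSum_pow K).comp_tendsto hx
  simp only [Function.comp_def, zero_add, ← norm_pow, isBigO_norm_right] at h
  refine h.congr_left fun t => ?_
  simp only [FormalMultilinearSeries.partialSum, FormalMultilinearSeries.ofScalars_apply_eq,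
    map_sum, aeval_monomial, smul_eq_mul]
  rfl

lemma qPochhammer_mem_expansionSubring {R : Subring ℂ} {x a q : α → ℂ} {hx : Tendsto x l (𝓝 0)}
    [l.NeBot] (ha : a ∈ expansionSubring R hx) (ha0 : Tendsto a l (𝓝 0))
    (hq : q ∈ expansionSubring R hx) (hq0 : Tendsto q l (𝓝 0)) :
    (fun t => qPochhammer (a t) (q t)) ∈ expansionSubring R hx := by
  refine mem_expansionSubring_of_sub_isBigO_pow fun K =>
    ⟨∏ n ∈ Finset.range K, (1 - a * q ^ n),
      prod_mem fun n _ => sub_mem (one_mem _) (mul_mem ha (pow_mem hq n)), ?_⟩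
  have hprod : Tendsto (∏ n ∈ Finset.range K, (1 - a * q ^ n)) l (𝓝 1) := by
    have h := tendsto_finsetProd (Finset.range K) fun n _ => (ha0.mul (hq0.pow n)).const_sub 1
    simp only [zero_mul, sub_zero, Finset.prod_const_one] at h
    exact h.congr fun t => by simp
  have haq_isBigO : (fun t => a t * q t ^ K) =O[l] fun t => x t ^ K := by
    simpa using (ha0.isBigO_one ℂ).mul ((isBigO_self_of_mem_expansionSubring hq hq0).pow K)
  have haq0 : Tendsto (fun t => a t * q t ^ K) l (𝓝 0) := by simpa using ha0.mul (hq0.pow K)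
  have htail := (hprod.isBigO_one ℂ).mul ((qPochhammer_sub_one_isBigO haq0 hq0).trans haq_isBigO)
  simp only [one_mul] at htail
  refine htail.congr' ?_ .rfl
  filter_upwards [(tendsto_zero_iff_norm_tendsto_zero.1 hq0).eventually_lt_const one_pos] with t ht
  simp [qPochhammer_eq_prod_range_mul (a t) ht K, mul_sub]

variable (R) in
/-- The ring of functions `f` such that `x ^ m * f` lies in `expansionSubring R hx` for some `m`:
those with an asymptotic Laurent expansion in `x` over `R`. -/
def laurentSubring (hx : Tendsto x l (𝓝 0)) : Subring (α → 𝕜) where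
  carrier := {f | ∃ m : ℕ, x ^ m * f ∈ expansionSubring R hx}
  zero_mem' := ⟨0, by simp⟩
  one_mem' := ⟨0, by simp⟩
  neg_mem' := by
    rintro f ⟨m, hf⟩
    exact ⟨m, by simpa only [mul_neg] using neg_mem hf⟩
  add_mem' := by
    rintro f g ⟨m, hf⟩ ⟨n, hg⟩
    refine ⟨m + n, ?_⟩
    have hx' := self_mem_expansionSubring R hx
    convert add_mem (mul_mem (pow_mem hx' n) hf) (mul_mem (pow_mem hx' m) hg) using 1
    ring
  mul_mem' := by
    rintro f g ⟨m, hf⟩ ⟨n, hg⟩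
    refine ⟨m + n, ?_⟩
    convert mul_mem hf hg using 1
    ring

end expansionSubring

/-! ### The modular invariant -/

section qRoot

/-- The local parameter `q ^ (1 / N)` at the cusp `∞` of a modular curve of level `N`. -/
noncomputable def qRoot (N : ℕ) (τ : ℍ) : ℂ := Function.Periodic.qParam N τ

variable (N : ℕ) (τ : ℍ)

lemma qRoot_ne_zero : qRoot N τ ≠ 0 := Function.Periodic.qParam_ne_zero _

lemma qRoot_one : qRoot 1 τ = exp (2 * π * I * τ) := by
  simp [qRoot, Function.Periodic.qParam]

lemma qRoot_T_smul : qRoot N (ModularGroup.T • τ) = exp (2 * π * I / N) * qRoot N τ := by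
  rw [qRoot, qRoot, Function.Periodic.qParam, Function.Periodic.qParam, coe_T_smul, ← exp_add,
    ofReal_natCast]
  ring_nf

variable [NeZero N]

lemma tendsto_qRoot : Tendsto (qRoot N) atImInfty (𝓝 0) :=
  qParam_tendsto_atImInfty (by exact_mod_cast NeZero.pos N)

lemma qRoot_pow_self : qRoot N τ ^ N = exp (2 * π * I * τ) := by
  rw [qRoot, Function.Periodic.qParam, ← exp_nat_mul, ofReal_natCast,
    mul_div_cancel₀ _ (NeZero.ne (N : ℂ))]

end qRoot

section qExpansion

variable {Γ : Subgroup (GL (Fin 2) ℝ)} {k : ℤ} (f : ModularForm Γ k) {N : ℕ} [NeZero N]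

lemma cuspFunction_comp_qRoot (hΓ : (N : ℝ) ∈ Γ.strictPeriods) :
    cuspFunction N f ∘ qRoot N = f :=
  funext fun τ => SlashInvariantFormClass.eq_cuspFunction f τ hΓ (NeZero.ne (N : ℝ))

lemma mem_expansionSubring_of_qExpansion_coeff_mem {R : Subring ℂ} (hΓ : (N : ℝ) ∈ Γ.strictPeriods)
    (hR : ∀ n, (qExpansion N f).coeff n ∈ R) : ⇑f ∈ expansionSubring R (tendsto_qRoot N) := by
  have hN : (0 : ℝ) < N := by exact_mod_cast NeZero.pos N
  rw [← cuspFunction_comp_qRoot f hΓ]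
  have : Fact (IsCusp OnePoint.infty Γ) := ⟨Γ.isCusp_of_mem_strictPeriods hN hΓ⟩
  have hsum := hasSum_qExpansion hN (SlashInvariantFormClass.periodic_comp_ofComplex f hΓ)
    (ModularFormClass.holo f) (ModularFormClass.bdd_at_infty f)
  exact comp_mem_expansionSubring (c := fun n => ⟨_, hR n⟩)
    (hasFPowerSeriesOnBall_cuspFunction hN (ModularFormClass.analyticAt_cuspFunction_zero f hN hΓ)
      hsum).hasFPowerSeriesAt

lemma tendsto_qExpansion_coeff_zero (hΓ : (N : ℝ) ∈ Γ.strictPeriods) :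
    Tendsto f atImInfty (𝓝 ((qExpansion N f).coeff 0)) := by
  have hN : (0 : ℝ) < N := by exact_mod_cast NeZero.pos N
  have h := (ModularFormClass.analyticAt_cuspFunction_zero f hN hΓ).continuousAt.tendsto.comp
    (tendsto_qRoot N)
  rw [cuspFunction_comp_qRoot f hΓ] at h
  simpa [qExpansion_coeff] using h

end qExpansion

section E₄

lemma bernoulli_four : _root_.bernoulli 4 = -1 / 30 := by
  rw [bernoulli_eq_bernoulli'_of_ne_one (by norm_num), bernoulli'_four]

lemma qExpansion_E₄_coeff (n : ℕ) : (qExpansion 1 ModularForm.E₄).coeff n =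
    if n = 0 then 1 else 240 * (ArithmeticFunction.sigma 3 n : ℂ) := by
  rw [EisensteinSeries.E_qExpansion_coeff (by norm_num) (by decide), bernoulli_four]
  norm_num

lemma E₄_mem_expansionSubring (R : Subring ℂ) :
    ⇑ModularForm.E₄ ∈ expansionSubring R (tendsto_qRoot 1) := by
  refine mem_expansionSubring_of_qExpansion_coeff_mem ModularForm.E₄ (by simp) fun n => ?_
  rw [Nat.cast_one, qExpansion_E₄_coeff]
  split_ifs
  exacts [one_mem R, mul_mem (ofNat_mem R 240) (natCast_mem R _)]

lemma tendsto_E₄ : Tendsto ModularForm.E₄ atImInfty (𝓝 1) := by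
  simpa [qExpansion_E₄_coeff] using
    tendsto_qExpansion_coeff_zero (N := 1) ModularForm.E₄ (by simp)

lemma c2_eq_mul_E₄ (τ : ℍ) : c2 τ = (2 * π) ^ 4 / 12 * ModularForm.E₄ τ := by
  have hq := norm_exp_two_pi_I_lt_one τ
  have hLambert := tsum_pnat_eq_tsum_succ (f := fun n : ℕ =>
    (n : ℂ) ^ 3 * exp (2 * π * I * τ) ^ n / (1 - exp (2 * π * I * τ) ^ n))
  rw [tsum_pow_div_one_sub_eq_tsum_sigma hq 3] at hLambert
  push_cast at hLambert
  rw [c2, ModularForm.E₄, EisensteinSeries.q_expansion_bernoulli (by norm_num) (by decide) τ,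
    bernoulli_four, ← hLambert]
  simp only [zpow_natCast]
  norm_num

lemma Delta_eq_mul_discriminant (τ : ℍ) : Delta τ = (2 * π) ^ 12 * ModularForm.discriminant τ := by
  rw [Delta, discriminant_eq_mul_qPochhammer_pow, qPochhammer, mul_assoc,
    ← (multipliable_one_sub_mul_pow _ (norm_exp_two_pi_I_lt_one τ)).tprod_pow 24]
  simp only [pow_succ']

end E₄

/-- The modular invariant as a function on `ℍ`. -/
noncomputable def jInvariant (τ : ℍ) : ℂ := jfun τ

lemma jInvariant_eq_div (τ : ℍ) :
    jInvariant τ = ModularForm.E₄ τ ^ 3 / ModularForm.discriminant τ := by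
  have hπ : (π : ℂ) ≠ 0 := ofReal_ne_zero.2 Real.pi_ne_zero
  rw [jInvariant, jfun, c2_eq_mul_E₄, Delta_eq_mul_discriminant]
  field_simp

/-- The algebra of holomorphic functions on `ℍ`. -/
def holomorphicSubalgebra : Subalgebra ℂ (ℍ → ℂ) where
  carrier := {f | MDifferentiable 𝓘(ℂ) 𝓘(ℂ) f}
  algebraMap_mem' _ := mdifferentiable_const
  add_mem' hf hg := MDifferentiable.add hf hg
  mul_mem' hf hg := MDifferentiable.mul hf hg

/-- The algebra of holomorphic functions on `ℍ` invariant under `SL(2, ℤ)`, without any condition at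
the cusp. -/
def levelOneSubalgebra : Subalgebra ℂ (ℍ → ℂ) where
  carrier := {f | f ∈ holomorphicSubalgebra ∧ ∀ (γ : SL(2, ℤ)) τ, f (γ • τ) = f τ}
  algebraMap_mem' c := ⟨algebraMap_mem _ c, fun _ _ => rfl⟩
  add_mem' hf hg := ⟨add_mem hf.1 hg.1, fun γ τ => by simp only [Pi.add_apply, hf.2, hg.2]⟩
  mul_mem' hf hg := ⟨mul_mem hf.1 hg.1, fun γ τ => by simp only [Pi.mul_apply, hf.2, hg.2]⟩

lemma jInvariant_smul (γ : SL(2, ℤ)) (τ : ℍ) : jInvariant (γ • τ) = jInvariant τ := by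
  have hγ : (γ : GL (Fin 2) ℝ) ∈ 𝒮ℒ := ⟨γ, rfl⟩
  have hE : ModularForm.E₄ (γ • τ) = denom γ τ ^ (4 : ℤ) * ModularForm.E₄ τ :=
    SlashInvariantForm.slash_action_eqn'' ModularForm.E₄ hγ τ
  have hΔ : ModularForm.discriminant (γ • τ) = denom γ τ ^ (12 : ℤ) * ModularForm.discriminant τ :=
    SlashInvariantForm.slash_action_eqn'' CuspForm.discriminant hγ τ
  have hdenom : denom γ τ ≠ 0 := denom_ne_zero γ τ
  rw [jInvariant_eq_div, jInvariant_eq_div, hE, hΔ, mul_pow, ← zpow_natCast, ← zpow_mul]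
  exact mul_div_mul_left _ _ (zpow_ne_zero 12 hdenom)

lemma mdifferentiable_jInvariant : MDifferentiable 𝓘(ℂ) 𝓘(ℂ) jInvariant := by
  have hE : MDifferentiable 𝓘(ℂ) 𝓘(ℂ) ModularForm.E₄ := ModularFormClass.holo ModularForm.E₄
  have hΔ : MDifferentiable 𝓘(ℂ) 𝓘(ℂ) CuspForm.discriminant :=
    CuspFormClass.holo CuspForm.discriminant
  rw [UpperHalfPlane.mdifferentiable_iff] at *
  exact ((hE.pow 3).div hΔ fun _ _ => ModularForm.discriminant_ne_zero _).congr
    fun _ _ => jInvariant_eq_div _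

lemma jInvariant_mem_levelOneSubalgebra : jInvariant ∈ levelOneSubalgebra :=
  ⟨mdifferentiable_jInvariant, jInvariant_smul⟩

section jInvariant

variable (R : Subring ℂ) (N : ℕ) [NeZero N]

lemma qRoot_pow_mul_jInvariant : qRoot N ^ N * jInvariant =
    ModularForm.E₄ ^ 3 * ((fun τ : ℍ => qPochhammer (qRoot 1 τ) (qRoot 1 τ)) ^ 24)⁻¹ := by
  ext τ
  simp only [Pi.mul_apply, Pi.pow_apply, Pi.inv_apply, jInvariant_eq_div, qRoot_one, qRoot_pow_self,
    discriminant_eq_mul_qPochhammer_pow]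
  field_simp [exp_ne_zero]

lemma tendsto_qPochhammer_qRoot_one_pow :
    Tendsto ((fun τ : ℍ => qPochhammer (qRoot 1 τ) (qRoot 1 τ)) ^ 24) atImInfty (𝓝 1) := by
  have hq := tendsto_qRoot 1
  simpa [Pi.pow_def] using
    (((qPochhammer_sub_one_isBigO hq hq).trans_tendsto hq).add_const 1).pow 24

lemma tendsto_qRoot_pow_mul_jInvariant :
    Tendsto (qRoot N ^ N * jInvariant) atImInfty (𝓝 1) := by
  rw [qRoot_pow_mul_jInvariant]
  simpa [Pi.mul_def, Pi.pow_def, Pi.inv_def] using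
    (tendsto_E₄.pow 3).mul (tendsto_qPochhammer_qRoot_one_pow.inv₀ one_ne_zero)

lemma qRoot_one_mem_expansionSubring : qRoot 1 ∈ expansionSubring R (tendsto_qRoot N) := by
  have h : qRoot 1 = qRoot N ^ N := funext fun τ => by
    rw [qRoot_one, Pi.pow_apply, qRoot_pow_self]
  exact h ▸ pow_mem (self_mem_expansionSubring R _) N

lemma qRoot_pow_mul_jInvariant_mem_expansionSubring :
    qRoot N ^ N * jInvariant ∈ expansionSubring R (tendsto_qRoot N) := by
  have hq := self_mem_expansionSubring R (tendsto_qRoot 1)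
  have hP := qPochhammer_mem_expansionSubring hq (tendsto_qRoot 1) hq (tendsto_qRoot 1)
  rw [qRoot_pow_mul_jInvariant]
  exact expansionSubring_mono (qRoot_one_mem_expansionSubring R N)
    (mul_mem (pow_mem (E₄_mem_expansionSubring R) 3) (inv_mem_expansionSubring (pow_mem hP 24)
      tendsto_qPochhammer_qRoot_one_pow one_ne_zero (by simp)))

end jInvariant

/-! ### The `q`-expansion principle in level one -/

lemma exists_eq_const_of_mem_levelOneSubalgebra {f : ℍ → ℂ} (hf : f ∈ levelOneSubalgebra)
    (hb : IsBoundedAtImInfty f) : ∃ c, f = Function.const ℍ c := by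
  have hslash (γ : SL(2, ℤ)) : f ∣[(0 : ℤ)] γ = f := by
    ext τ
    rw [ModularForm.SL_slash_apply, hf.2, neg_zero, zpow_zero, mul_one]
  let g : ModularForm 𝒮ℒ 0 :=
    { toFun := f
      slash_action_eq' := by
        rintro _ ⟨γ, rfl⟩
        exact hslash γ
      holo' := hf.1
      bdd_at_cusps' := fun {c} hc => by
        rw [Subgroup.IsArithmetic.isCusp_iff_isCusp_SL2Z] at hc
        refine (OnePoint.isBoundedAt_iff_forall_SL2Z hc).2 fun γ _ => ?_
        rw [hslash]
        exact hb }
  exact ModularFormClass.levelOne_weight_zero_const g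

lemma tendsto_T_smul_atImInfty :
    Tendsto (fun τ : ℍ => ModularGroup.T • τ) atImInfty atImInfty := by
  have him : Tendsto UpperHalfPlane.im atImInfty atTop := tendsto_comap
  refine tendsto_comap_iff.2 (him.congr fun τ => ?_)
  simpa using (congrArg Complex.im (coe_T_smul τ)).symm

section laurentSubring

variable {R : Subring ℂ} {N : ℕ} [NeZero N] {f : ℍ → ℂ} {m : ℕ}

lemma dvd_of_tendsto_qRoot_pow_mul (hf : ∀ τ, f (ModularGroup.T • τ) = f τ) {c : ℂ} (hc : c ≠ 0)
    (hlim : Tendsto (qRoot N ^ m * f) atImInfty (𝓝 c)) : N ∣ m := by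
  have hζ := Complex.isPrimitiveRoot_exp N (NeZero.ne N)
  rw [← hζ.pow_eq_one_iff_dvd]
  have hT := (hlim.comp tendsto_T_smul_atImInfty).congr fun τ => show _ =
      exp (2 * π * I / N) ^ m * (qRoot N ^ m * f) τ by
    simp only [Function.comp_apply, Pi.mul_apply, Pi.pow_apply, qRoot_T_smul, hf]
    ring
  exact mul_right_cancel₀ hc ((one_mul c).symm ▸ tendsto_nhds_unique (hlim.const_mul _) hT)

lemma qRoot_pow_mul_mem_of_tendsto_zero
    (hf : qRoot N ^ (m + 1) * f ∈ expansionSubring R (tendsto_qRoot N))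
    (hf0 : Tendsto (qRoot N ^ (m + 1) * f) atImInfty (𝓝 0)) :
    qRoot N ^ m * f ∈ expansionSubring R (tendsto_qRoot N) := by
  convert div_mem_expansionSubring (qRoot_ne_zero N) hf hf0 using 1
  ext τ
  simp only [Pi.mul_apply, Pi.pow_apply, Pi.div_apply]
  rw [pow_succ, mul_right_comm, mul_div_cancel_right₀ _ (qRoot_ne_zero N τ)]

lemma exists_qRoot_pow_mul_sub_mem (hf : ∀ τ, f (ModularGroup.T • τ) = f τ)
    (hfm : qRoot N ^ (m + 1) * f ∈ expansionSubring R (tendsto_qRoot N)) :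
    ∃ P : R[X], qRoot N ^ m * (f - aeval jInvariant P) ∈
      expansionSubring R (tendsto_qRoot N) := by
  obtain ⟨c, hc⟩ := exists_tendsto_of_mem_expansionSubring hfm
  rcases eq_or_ne (c : ℂ) 0 with h0 | h0
  · exact ⟨0, by simpa using qRoot_pow_mul_mem_of_tendsto_zero hfm (h0 ▸ hc)⟩
  obtain ⟨k, hk⟩ := dvd_of_tendsto_qRoot_pow_mul hf h0 hc
  have hpole : qRoot N ^ (m + 1) * (f - aeval jInvariant (monomial k c)) =
      qRoot N ^ (m + 1) * f - algebraMap R (ℍ → ℂ) c * (qRoot N ^ N * jInvariant) ^ k := by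
    rw [hk, aeval_monomial, mul_pow, ← pow_mul]
    ring
  refine ⟨monomial k c, qRoot_pow_mul_mem_of_tendsto_zero ?_ ?_⟩ <;> rw [hpole]
  · exact sub_mem hfm (mul_mem (algebraMap_mem_expansionSubring R _ c)
      (pow_mem (qRoot_pow_mul_jInvariant_mem_expansionSubring R N) k))
  · simpa [Pi.sub_def, Pi.mul_def, Pi.pow_def, Algebra.algebraMap_ofSubsemiring_apply] using
      hc.sub (((tendsto_qRoot_pow_mul_jInvariant N).pow k).const_mul (c : ℂ))

theorem mem_adjoin_jInvariant (hf : f ∈ levelOneSubalgebra)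
    (hfR : f ∈ laurentSubring R (tendsto_qRoot N)) : f ∈ Algebra.adjoin R {jInvariant} := by
  obtain ⟨m, hm⟩ := hfR
  induction m generalizing f with
  | zero =>
    rw [pow_zero, one_mul] at hm
    obtain ⟨c, hc⟩ := exists_tendsto_of_mem_expansionSubring hm
    obtain ⟨d, rfl⟩ := exists_eq_const_of_mem_levelOneSubalgebra hf (hc.isBigO_one ℝ)
    obtain rfl : d = c := tendsto_nhds_unique tendsto_const_nhds hc
    exact Subalgebra.algebraMap_mem _ c
  | succ m ih =>
    obtain ⟨P, hP⟩ := exists_qRoot_pow_mul_sub_mem (hf.2 ModularGroup.T) hm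
    have hPj : aeval jInvariant P ∈ Algebra.adjoin R {jInvariant} :=
      aeval_mem_adjoin_singleton R _
    have hPlevel : aeval jInvariant P ∈ levelOneSubalgebra :=
      Algebra.adjoin_singleton_le (S := levelOneSubalgebra.restrictScalars R)
        jInvariant_mem_levelOneSubalgebra hPj
    simpa using add_mem (ih (sub_mem hf hPlevel) hP) hPj

end laurentSubring

/-! ### Powers of Siegel functions at torsion points -/

lemma eq_of_periodic_of_intCast_eq {β : Type*} {f : ℤ → β} {N : ℕ} (hf : Function.Periodic f N)
    {r r' : ℤ} (hr : (r : ZMod N) = r') : f r = f r' := by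
  obtain ⟨k, hk⟩ := (ZMod.intCast_eq_intCast_iff_dvd_sub r r' N).1 hr
  rw [eq_add_of_sub_eq' hk, mul_comm]
  exact (hf.int_mul k r).symm

section siegelUnit

variable (N : ℕ) [NeZero N]

lemma siegel_div_pow_periodic_left (b : ℤ) (τ : ℍ) :
    Function.Periodic (fun r : ℤ => siegel (r / N) (b / N) τ ^ (12 * N)) N := by
  intro r
  have hN : (N : ℂ) ≠ 0 := NeZero.ne _
  have hr : ((r + N : ℤ) : ℝ) / N = r / N + 1 := by
    rw [Int.cast_add, Int.cast_natCast, add_div, div_self (NeZero.ne (N : ℝ))]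
  have hexp : exp (-(12 * (π * I * (b / N : ℝ)))) ^ N = 1 := by
    rw [← exp_nat_mul, exp_eq_one_iff]
    exact ⟨-6 * b, by push_cast; field_simp; ring⟩
  simp only [hr, pow_mul, siegel_add_one_left_pow_twelve, mul_pow _ _ N, hexp, one_mul]

lemma siegel_div_pow_periodic_right (a : ℤ) (τ : ℍ) :
    Function.Periodic (fun s : ℤ => siegel (a / N) (s / N) τ ^ (12 * N)) N := by
  intro s
  have hN : (N : ℂ) ≠ 0 := NeZero.ne _
  have hs : ((s + N : ℤ) : ℝ) / N = s / N + 1 := by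
    rw [Int.cast_add, Int.cast_natCast, add_div, div_self (NeZero.ne (N : ℝ))]
  have hexp : exp (12 * (π * I * (a / N : ℝ))) ^ N = 1 := by
    rw [← exp_nat_mul, exp_eq_one_iff]
    exact ⟨6 * a, by push_cast; field_simp; ring⟩
  simp only [hs, pow_mul, siegel_add_one_right_pow_twelve, mul_pow _ _ N, hexp, one_mul]

/-- The `12 N`-th power of `(1 - ζ_N) / g_{b/N}`, which depends only on `b` modulo `N`; it is
defined through the representatives in `[0, N)`. -/
noncomputable def siegelUnit (b : Fin 2 → ZMod N) (τ : ℍ) : ℂ :=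
  ((1 - exp (2 * π * I / N)) / siegel ((b 0).val / N) ((b 1).val / N) τ) ^ (12 * N)

lemma siegelUnit_intCast (v : Fin 2 → ℤ) (τ : ℍ) : siegelUnit N (Int.cast ∘ v) τ =
    ((1 - exp (2 * π * I / N)) / siegel (v 0 / N) (v 1 / N) τ) ^ (12 * N) := by
  have hval (i : Fin 2) : ((((v i : ZMod N).val : ℕ) : ℤ) : ZMod N) = v i := by simp
  have hleft := eq_of_periodic_of_intCast_eq
    (siegel_div_pow_periodic_left N (v 1 : ZMod N).val τ) (hval 0)
  have hright := eq_of_periodic_of_intCast_eq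
    (siegel_div_pow_periodic_right N (v 0) τ) (hval 1)
  rw [siegelUnit, div_pow, div_pow]
  congr 1
  simpa only [Int.cast_natCast, Function.comp_apply] using hleft.trans hright

lemma siegelUnit_smul (b : Fin 2 → ZMod N) (γ : SL(2, ℤ)) (τ : ℍ) : siegelUnit N b (γ • τ) =
    siegelUnit N (b ᵥ* (γ.map (Int.castRingHom (ZMod N))).1) τ := by
  obtain ⟨v, rfl⟩ : ∃ v : Fin 2 → ℤ, Int.cast ∘ v = b :=
    (ZMod.intCast_surjective.comp_left) b
  have hreal (i : Fin 2) : ((fun j => (v j : ℝ) / N) ᵥ* (γ.map (Int.castRingHom ℝ)).1) i =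
      ((v ᵥ* γ.1) i : ℝ) / N := by
    fin_cases i <;> simp [Matrix.vecMul, dotProduct] <;> ring
  have hmod : (Int.cast ∘ v) ᵥ* (γ.map (Int.castRingHom (ZMod N))).1 = Int.cast ∘ (v ᵥ* γ.1) :=
    funext fun i => (RingHom.map_vecMul (Int.castRingHom (ZMod N)) γ.1 v i).symm
  have h := siegel_smul_pow_twelve τ γ fun j => (v j : ℝ) / N
  rw [hreal, hreal] at h
  rw [hmod, siegelUnit_intCast, siegelUnit_intCast, div_pow, div_pow, pow_mul (siegel _ _ _), h,
    ← pow_mul]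

end siegelUnit

lemma siegel_div_ne_zero {N : ℕ} (hN : 1 < N) {r s : ℕ} (h : IsCoprime (r : ZMod N) (s : ZMod N))
    (τ : ℍ) : siegel (r / N) (s / N) τ ≠ 0 := by
  have : Fact (1 < N) := ⟨hN⟩
  have hN0 : (N : ℝ) ≠ 0 := by positivity
  refine siegel_ne_zero τ ?_
  rintro ⟨m, n, hm, hn⟩
  rw [div_eq_iff hN0] at hm hn
  have hr : (r : ZMod N) = 0 := by
    have : (r : ℤ) = m * N := by exact_mod_cast hm
    simpa using congrArg (Int.cast : ℤ → ZMod N) this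
  have hs : (s : ZMod N) = 0 := by
    have : (s : ℤ) = n * N := by exact_mod_cast hn
    simpa using congrArg (Int.cast : ℤ → ZMod N) this
  exact not_isCoprime_zero_zero (hr ▸ hs ▸ h)

lemma siegelUnit_mem_holomorphicSubalgebra {N : ℕ} [NeZero N] (hN : 1 < N) {b : Fin 2 → ZMod N}
    (hb : IsCoprime (b 0) (b 1)) : siegelUnit N b ∈ holomorphicSubalgebra := by
  have hsiegel : DifferentiableOn ℂ (fun τ : ℂ => ((1 - exp (2 * π * I / N)) /
      siegel ((b 0).val / N) ((b 1).val / N) τ) ^ (12 * N)) {τ | 0 < τ.im} := by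
    refine (((differentiableOn_const _).div (differentiableOn_siegel _ _) fun τ hτ => ?_)).pow _
    exact siegel_div_ne_zero hN (by simpa using hb) ⟨τ, hτ⟩
  refine UpperHalfPlane.mdifferentiable_iff.2 (hsiegel.congr fun τ hτ => ?_)
  simp [siegelUnit, ofComplex_apply_of_im_pos hτ]

/-! ### Expansions of Siegel units at the cusp -/

lemma siegel_div_pow_mul_qRoot_pow {N : ℕ} [NeZero N] {r : ℕ} (hr : r ≤ N) (s : ℕ) (τ : ℍ) :
    siegel (r / N) (s / N) τ ^ (12 * N) * qRoot N τ ^ (6 * r * N) =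
      qRoot N τ ^ (6 * r ^ 2 + N ^ 2) * exp (2 * π * I / N) ^ (6 * r * s) *
        (qPochhammer (exp (2 * π * I / N) ^ s * qRoot N τ ^ r) (qRoot 1 τ) *
          qPochhammer ((exp (2 * π * I / N))⁻¹ ^ s * qRoot N τ ^ (N - r)) (qRoot 1 τ)) ^
        (12 * N) := by
  have hN : (N : ℂ) ≠ 0 := NeZero.ne _
  have hleft : exp (2 * π * I * ((r / N : ℝ) * τ + (s / N : ℝ))) =
      exp (2 * π * I / N) ^ s * qRoot N τ ^ r := by
    rw [qRoot, Function.Periodic.qParam, ← exp_nat_mul, ← exp_nat_mul, ← exp_add]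
    push_cast
    ring_nf
  have hright : exp (2 * π * I * (τ - ((r / N : ℝ) * τ + (s / N : ℝ)))) =
      (exp (2 * π * I / N))⁻¹ ^ s * qRoot N τ ^ (N - r) := by
    rw [mul_sub, exp_sub, hleft, ← qRoot_pow_self N τ, pow_sub₀ _ (qRoot_ne_zero N τ) hr, inv_pow]
    field_simp
  have hpre :
      (-qpow τ (B2 (r / N) / 2) * exp (π * I * (s / N : ℝ) * ((r / N : ℝ) - 1))) ^ (12 * N) *
        qRoot N τ ^ (6 * r * N) =
      qRoot N τ ^ (6 * r ^ 2 + N ^ 2) * exp (2 * π * I / N) ^ (6 * r * s) := by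
    have hEven : Even (12 * N) := .mul_right (by decide) N
    rw [neg_mul, hEven.neg_pow, qpow, B2, qRoot, Function.Periodic.qParam, mul_pow]
    simp only [← exp_nat_mul, ← exp_add]
    rw [exp_eq_exp_iff_exists_int]
    exact ⟨-6 * s, by push_cast; field_simp; ring⟩
  rw [siegel_eq_mul_qPochhammer, hleft, hright, ← qRoot_one, mul_pow _ _ (12 * N),
    mul_right_comm, hpre]

lemma one_sub_div_one_sub_pow_mem {K : Type*} [Field K] {R : Subring K} {ζ : K} {N s : ℕ}
    [NeZero N] (hζ : IsPrimitiveRoot ζ N) (hζR : ζ ∈ R) (hs : s.Coprime N) :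
    (1 - ζ) / (1 - ζ ^ s) ∈ R := by
  obtain ⟨t, -, ht⟩ := (hζ.pow_of_coprime s hs).eq_pow_of_pow_eq_one hζ.pow_eq_one
  rcases eq_or_ne (1 - ζ ^ s) 0 with h | h
  · simp [h]
  · nth_rw 1 [← ht]
    rw [← mul_neg_geom_sum, mul_div_cancel_left₀ _ h]
    exact sum_mem fun i _ => pow_mem (pow_mem hζR s) i

lemma qPochhammer_mul_qRoot_pow_inv_mem {R : Subring ℂ} {N m : ℕ} [NeZero N] {c : ℂ} (hc : c ∈ R)
    (hm : m ≠ 0) : (fun τ => qPochhammer (c * qRoot N τ ^ m) (qRoot 1 τ))⁻¹ ∈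
      expansionSubring R (tendsto_qRoot N) := by
  have ha : (fun τ => c * qRoot N τ ^ m) ∈ expansionSubring R (tendsto_qRoot N) :=
    mul_mem (algebraMap_mem_expansionSubring R _ ⟨c, hc⟩)
      (pow_mem (self_mem_expansionSubring R _) m)
  have ha0 : Tendsto (fun τ => c * qRoot N τ ^ m) atImInfty (𝓝 0) := by
    simpa [hm] using ((tendsto_qRoot N).pow m).const_mul c
  have hlim : Tendsto (fun τ => qPochhammer (c * qRoot N τ ^ m) (qRoot 1 τ)) atImInfty (𝓝 1) := by
    simpa using ((qPochhammer_sub_one_isBigO ha0 (tendsto_qRoot 1)).trans_tendsto ha0).add_const 1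
  exact inv_mem_expansionSubring (qPochhammer_mem_expansionSubring ha ha0
    (qRoot_one_mem_expansionSubring R N) (tendsto_qRoot 1)) hlim one_ne_zero (by simp)

section siegelUnit

variable {R : Subring ℂ} {N : ℕ} [NeZero N]

lemma one_sub_div_qPochhammer_mem (hζR : exp (2 * π * I / N) ∈ R) {r s : ℕ}
    (hs : r = 0 → s.Coprime N) :
    (fun τ => (1 - exp (2 * π * I / N)) /
      qPochhammer (exp (2 * π * I / N) ^ s * qRoot N τ ^ r) (qRoot 1 τ)) ∈
      expansionSubring R (tendsto_qRoot N) := by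
  rcases eq_or_ne r 0 with rfl | hr
  · have hunit := one_sub_div_one_sub_pow_mem
      (Complex.isPrimitiveRoot_exp N (NeZero.ne N)) hζR (hs rfl)
    convert mul_mem (algebraMap_mem_expansionSubring R (tendsto_qRoot N) ⟨_, hunit⟩)
      (qPochhammer_mul_qRoot_pow_inv_mem (pow_mem hζR s) (NeZero.ne N)) using 1
    ext τ
    have hq : ‖qRoot 1 τ‖ < 1 := qRoot_one τ ▸ norm_exp_two_pi_I_lt_one τ
    have hqN : qRoot 1 τ = qRoot N τ ^ N := (qRoot_one τ).trans (qRoot_pow_self N τ).symm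
    rw [pow_zero, mul_one, qPochhammer_eq_one_sub_mul _ hq, ← div_div, div_eq_mul_inv]
    nth_rw 1 [hqN]
    rfl
  · exact mul_mem (algebraMap_mem_expansionSubring R (tendsto_qRoot N) ⟨_, sub_mem R.one_mem hζR⟩)
      (qPochhammer_mul_qRoot_pow_inv_mem (pow_mem hζR s) hr)

lemma qRoot_pow_mul_siegelUnit (b : Fin 2 → ZMod N) (τ : ℍ) :
    qRoot N τ ^ (6 * (b 0).val ^ 2 + N ^ 2) * siegelUnit N b τ =
      qRoot N τ ^ (6 * (b 0).val * N) * (exp (2 * π * I / N))⁻¹ ^ (6 * (b 0).val * (b 1).val) *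
        ((1 - exp (2 * π * I / N)) /
            qPochhammer (exp (2 * π * I / N) ^ (b 1).val * qRoot N τ ^ (b 0).val) (qRoot 1 τ) *
          (qPochhammer ((exp (2 * π * I / N))⁻¹ ^ (b 1).val * qRoot N τ ^ (N - (b 0).val))
            (qRoot 1 τ))⁻¹) ^ (12 * N) := by
  have hx := qRoot_ne_zero N τ
  have h := eq_div_of_mul_eq (pow_ne_zero _ hx)
    (siegel_div_pow_mul_qRoot_pow (ZMod.val_lt (b 0)).le (b 1).val τ)
  rw [siegelUnit, div_pow, h, ← div_eq_mul_inv, div_div, div_pow,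
    inv_pow _ (6 * _ * _)]
  field_simp [exp_ne_zero]

lemma siegelUnit_mem_laurentSubring (hζR : exp (2 * π * I / N) ∈ R) {b : Fin 2 → ZMod N}
    (hb : IsCoprime (b 0) (b 1)) :
    siegelUnit N b ∈ laurentSubring R (tendsto_qRoot N) := by
  have hζ : IsPrimitiveRoot (exp (2 * π * I / N)) N :=
    Complex.isPrimitiveRoot_exp N (NeZero.ne N)
  have hζ_inv : (exp (2 * π * I / N))⁻¹ ∈ R := by
    rw [inv_eq_of_mul_eq_one_right ((mul_pow_sub_one (NeZero.ne N) _).trans hζ.pow_eq_one)]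
    exact pow_mem hζR _
  have hs (h0 : (b 0).val = 0) : (b 1).val.Coprime N := by
    rw [(ZMod.val_eq_zero _).1 h0, isCoprime_zero_left] at hb
    rwa [← ZMod.isUnit_iff_coprime, ZMod.natCast_zmod_val]
  have hquot := mul_mem (one_sub_div_qPochhammer_mem hζR hs)
    (qPochhammer_mul_qRoot_pow_inv_mem (pow_mem hζ_inv (b 1).val)
      (Nat.sub_ne_zero_of_lt (ZMod.val_lt (b 0))))
  have hconst := algebraMap_mem_expansionSubring R (tendsto_qRoot N)
    ⟨_, pow_mem hζ_inv (6 * (b 0).val * (b 1).val)⟩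
  have hpow := pow_mem (self_mem_expansionSubring R (tendsto_qRoot N)) (6 * (b 0).val * N)
  refine ⟨6 * (b 0).val ^ 2 + N ^ 2, ?_⟩
  convert mul_mem (mul_mem hpow hconst) (pow_mem hquot (12 * N)) using 1
  exact funext (qRoot_pow_mul_siegelUnit b)

end siegelUnit

/-! ### Integrality over `ℤ[j]` -/

lemma isIntegral_adjoin_of_mem_adjoin {A R B : Type*} [CommRing A] [CommRing R] [CommRing B]
    [Algebra A R] [Algebra R B] [Algebra A B] [IsScalarTower A R B] [Algebra.IsIntegral A R]
    {s : Set B} {x : B} (hx : x ∈ Algebra.adjoin R s) : IsIntegral (Algebra.adjoin A s) x := by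
  induction hx using Algebra.adjoin_induction with
  | mem x hx =>
    exact isIntegral_algebraMap (x := (⟨x, Algebra.subset_adjoin hx⟩ : Algebra.adjoin A s))
  | algebraMap c => exact (Algebra.IsIntegral.isIntegral (R := A) c).algebraMap.tower_top
  | add x y _ _ hx hy => exact hx.add hy
  | mul x y _ _ hx hy => exact hx.mul hy

lemma exists_polynomials_of_isIntegral_adjoin {A B : Type*} [CommRing A] [CommRing B] [Nontrivial B]
    [Algebra A B] {x y : B} (hy : IsIntegral (Algebra.adjoin A {x}) y) :
    ∃ n : ℕ, 1 ≤ n ∧ ∃ P : ℕ → A[X],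
      y ^ n + ∑ i ∈ Finset.range n, aeval x (P i) * y ^ i = 0 := by
  obtain ⟨p, hp, hpy⟩ := hy
  have hcoeff (i : ℕ) : ∃ P : A[X], aeval x P = p.coeff i :=
    (Algebra.adjoin_singleton_eq_range_aeval A x).le (p.coeff i).2
  choose P hP using hcoeff
  refine ⟨p.natDegree, ?_, P, ?_⟩
  · rw [Nat.one_le_iff_ne_zero, ne_eq, hp.natDegree_eq_zero]
    rintro rfl
    simp at hpy
  · rw [hp.as_sum] at hpy
    simpa [hP, eval₂_finsetSum, Algebra.algebraMap_ofSubsemiring_apply] using hpy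

section prod_X_sub_C

variable {ι A : Type*} [Fintype ι] [CommRing A]

lemma coeff_prod_X_sub_C_mem {S : Subring A} {f : ι → A} (hf : ∀ i, f i ∈ S) (n : ℕ) :
    (∏ i, (X - C (f i))).coeff n ∈ S := by
  have hmap : ∏ i, (X - C (f i)) = (∏ i, (X - C (⟨f i, hf i⟩ : S))).map S.subtype := by
    simp [Polynomial.map_prod]
  rw [hmap, coeff_map]
  exact SetLike.coe_mem _

lemma coeff_prod_X_sub_C_apply {α : Type*} (f : ι → α → A) (n : ℕ) (t : α) :
    (∏ i, (X - C (f i))).coeff n t = (∏ i, (X - C (f i t))).coeff n := by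
  have hmap : (∏ i, (X - C (f i))).map (Pi.evalRingHom (fun _ : α => A) t) =
      ∏ i, (X - C (f i t)) := by
    simp [Polynomial.map_prod]
  rw [← hmap, coeff_map]
  rfl

lemma isIntegral_of_coeff_prod_X_sub_C {R : Type*} [CommRing R] [Algebra R A] {f : ι → A}
    (hf : ∀ n, IsIntegral R ((∏ i, (X - C (f i))).coeff n)) (i : ι) : IsIntegral R (f i) := by
  nontriviality A
  have : Nonempty ι := ⟨i⟩
  have hroot : (∏ i, (X - C (f i))).eval (f i) = 0 := by
    rw [eval_prod]
    exact Finset.prod_eq_zero (Finset.mem_univ i) (by simp)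
  refine .of_aeval_monic_of_isIntegral_coeff (monic_prod_of_monic _ _ fun _ _ => monic_X_sub_C _)
    ?_ (hroot ▸ isIntegral_zero) hf
  rw [natDegree_prod_of_monic _ _ fun _ _ => monic_X_sub_C _]
  simp

end prod_X_sub_C

/-- Vectors of exact order `N` in `(ℤ/N)²`, which are those with coordinates generating the unit
ideal. -/
abbrev PrimitiveVector (N : ℕ) : Type := {b : Fin 2 → ZMod N // IsCoprime (b 0) (b 1)}

noncomputable instance (N : ℕ) [NeZero N] : Fintype (PrimitiveVector N) := Fintype.ofFinite _

section siegelPolynomial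

variable {N : ℕ} [NeZero N]

lemma coeff_prod_X_sub_C_siegelUnit_smul (n : ℕ) (γ : SL(2, ℤ)) (τ : ℍ) :
    (∏ b : PrimitiveVector N, (X - C (siegelUnit N b))).coeff n (γ • τ) =
      (∏ b : PrimitiveVector N, (X - C (siegelUnit N b))).coeff n τ := by
  set δ := γ.map (Int.castRingHom (ZMod N))
  let e (b : PrimitiveVector N) : PrimitiveVector N := ⟨b.1 ᵥ* δ.1, b.2.vecMulSL δ⟩
  have hδ : IsUnit δ.1 := (Matrix.isUnit_iff_isUnit_det _).2 (by simp)
  have he : Function.Bijective e := Finite.injective_iff_bijective.1 fun b c hbc =>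
    Subtype.ext (Matrix.vecMul_injective_of_isUnit hδ (congrArg Subtype.val hbc))
  rw [coeff_prod_X_sub_C_apply, coeff_prod_X_sub_C_apply,
    ← he.prod_comp fun b => X - C (siegelUnit N b τ)]
  simp only [siegelUnit_smul, e, δ]

lemma coeff_prod_X_sub_C_siegelUnit_mem_adjoin {R : Subring ℂ} (hN : 1 < N)
    (hζR : exp (2 * π * I / N) ∈ R) (n : ℕ) :
    (∏ b : PrimitiveVector N, (X - C (siegelUnit N b))).coeff n ∈ Algebra.adjoin R {jInvariant} :=
  mem_adjoin_jInvariant (N := N)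
    ⟨coeff_prod_X_sub_C_mem (S := holomorphicSubalgebra.toSubring)
      (fun b => siegelUnit_mem_holomorphicSubalgebra hN b.2) n,
      coeff_prod_X_sub_C_siegelUnit_smul n⟩
    (coeff_prod_X_sub_C_mem (fun b => siegelUnit_mem_laurentSubring hζR b.2) n)

/-- The ring of all algebraic integers in `ℂ`. -/
abbrev algebraicIntegers : Subring ℂ := (integralClosure ℤ ℂ).toSubring

lemma isIntegral_siegelUnit (hN : 1 < N) {b : Fin 2 → ZMod N} (hb : IsCoprime (b 0) (b 1)) :
    IsIntegral (Algebra.adjoin ℤ {jInvariant}) (siegelUnit N b) := by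
  have hζ : exp (2 * π * I / N) ∈ algebraicIntegers :=
    (Complex.isPrimitiveRoot_exp N (NeZero.ne N)).isIntegral (NeZero.pos N)
  have : Algebra.IsIntegral ℤ algebraicIntegers := integralClosure.AlgebraIsIntegral
  exact isIntegral_of_coeff_prod_X_sub_C (f := fun b : PrimitiveVector N => siegelUnit N b)
    (fun n => isIntegral_adjoin_of_mem_adjoin (R := algebraicIntegers)
      (coeff_prod_X_sub_C_siegelUnit_mem_adjoin hN hζ n)) ⟨b, hb⟩

end siegelPolynomial

lemma isIntegral_one_sub_div_siegel {N : ℕ} (hN : 1 < N) {r s : ℤ}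
    (hrs : IsCoprime (r : ZMod N) (s : ZMod N)) : IsIntegral (Algebra.adjoin ℤ {jInvariant})
      fun τ : ℍ => (1 - exp (2 * π * I / N)) / siegel (r / N) (s / N) τ := by
  have : NeZero N := ⟨by positivity⟩
  refine .of_pow (n := 12 * N) (by positivity) ?_
  convert isIntegral_siegelUnit hN (b := Int.cast ∘ ![r, s]) hrs using 1
  exact funext fun τ => (siegelUnit_intCast N ![r, s] τ).symm

lemma isCoprime_intCast_zmod_of_gcd_coprime {r s : ℤ} {N : ℕ} (h : (Int.gcd r s).Coprime N) :
    IsCoprime (r : ZMod N) (s : ZMod N) := by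
  obtain ⟨u, hu⟩ := ((ZMod.isUnit_iff_coprime _ N).2 h).exists_left_inv
  refine ⟨u * Int.gcdA r s, u * Int.gcdB r s, ?_⟩
  have hbezout := congrArg (Int.cast : ℤ → ZMod N) (Int.gcd_eq_gcd_ab r s)
  push_cast at hbezout
  rw [hbezout] at hu
  linear_combination hu

lemma gcd_coprime_of_forall_le {a₁ a₂ : ℚ} {N : ℕ} (hN : 0 < N) {r s : ℤ} (hr : N * a₁ = r)
    (hs : N * a₂ = s)
    (hmin : ∀ M : ℕ, 0 < M →
      (∃ k : ℤ, (M : ℚ) * a₁ = k) ∧ (∃ k : ℤ, (M : ℚ) * a₂ = k) → N ≤ M) :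
    (Int.gcd r s).Coprime N := by
  refine Nat.coprime_of_dvd fun p hp hrs hpN => ?_
  obtain ⟨M, rfl⟩ := hpN
  obtain ⟨r', rfl⟩ := (Int.natCast_dvd_natCast.2 hrs).trans (Int.gcd_dvd_left r s)
  obtain ⟨s', rfl⟩ := (Int.natCast_dvd_natCast.2 hrs).trans (Int.gcd_dvd_right _ s)
  have hp0 : (p : ℚ) ≠ 0 := by exact_mod_cast hp.ne_zero
  push_cast [mul_assoc] at hr hs
  have hM := Nat.pos_of_mul_pos_left hN
  exact (hmin M hM ⟨⟨r', mul_left_cancel₀ hp0 hr⟩, ⟨s', mul_left_cancel₀ hp0 hs⟩⟩).not_gt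
    (lt_mul_of_one_lt_left hM hp.one_lt)

end SiegelFunction

open SiegelFunction in
theorem stmt_17_general (a₁ a₂ : ℚ) (hnZ : ¬∃ m n : ℤ, a₁ = (m : ℚ) ∧ a₂ = (n : ℚ))
    (N : ℕ) (hNpos : 0 < N)
    (hNa : (∃ k : ℤ, (N : ℚ) * a₁ = (k : ℚ)) ∧ (∃ k : ℤ, (N : ℚ) * a₂ = (k : ℚ)))
    (hNmin : ∀ M : ℕ, 0 < M →
      ((∃ k : ℤ, (M : ℚ) * a₁ = (k : ℚ)) ∧ (∃ k : ℤ, (M : ℚ) * a₂ = (k : ℚ))) → N ≤ M) :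
    (∀ τ : ℂ, 0 < τ.im → siegel (a₁ : ℝ) (a₂ : ℝ) τ ≠ 0) ∧
    ∃ n : ℕ, 1 ≤ n ∧ ∃ P : ℕ → Polynomial ℤ,
      ∀ τ : ℂ, 0 < τ.im →
        ((1 - Complex.exp (2 * Real.pi * I / (N : ℂ))) / siegel (a₁ : ℝ) (a₂ : ℝ) τ) ^ n +
          ∑ i ∈ Finset.range n,
            Polynomial.aeval (jfun τ) (P i) *
              ((1 - Complex.exp (2 * Real.pi * I / (N : ℂ))) / siegel (a₁ : ℝ) (a₂ : ℝ) τ) ^ i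
          = 0 := by
  have hnZ' : ¬∃ m n : ℤ, (a₁ : ℝ) = m ∧ (a₂ : ℝ) = n := by exact_mod_cast hnZ
  refine ⟨fun τ hτ => siegel_ne_zero ⟨τ, hτ⟩ hnZ', ?_⟩
  obtain ⟨⟨r, hr⟩, ⟨s, hs⟩⟩ := hNa
  have hN : 1 < N := by
    refine lt_of_le_of_ne hNpos ?_
    rintro rfl
    exact hnZ ⟨r, s, by simpa using hr, by simpa using hs⟩
  have hN0 : (N : ℝ) ≠ 0 := by positivity
  have ha₁ : (a₁ : ℝ) = r / N := by rw [eq_div_iff hN0, mul_comm]; exact_mod_cast hr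
  have ha₂ : (a₂ : ℝ) = s / N := by rw [eq_div_iff hN0, mul_comm]; exact_mod_cast hs
  have hcoprime :=
    isCoprime_intCast_zmod_of_gcd_coprime (gcd_coprime_of_forall_le hNpos hr hs hNmin)
  obtain ⟨n, hn, P, hP⟩ :=
    exists_polynomials_of_isIntegral_adjoin (isIntegral_one_sub_div_siegel hN hcoprime)
  refine ⟨n, hn, P, fun τ hτ => ?_⟩
  have hPτ := congrFun hP ⟨τ, hτ⟩
  simpa [Polynomial.aeval_pi_apply, jInvariant, ha₁, ha₂] using hPτ

/-- For `a = (a₁,a₂) ∈ ℚ² ∖ ℤ²` with `0 ≤ a₁ < 1` and `N` the exact order of `a` in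
`(ℚ/ℤ)²`, with `ζ_N = e^{2πi/N}`: `g_a` is nonvanishing on `ℍ` and `(1 − ζ_N)·g_a⁻¹` is
integral over `ℤ[j]`. -/
theorem stmt_17 (a₁ a₂ : ℚ) (h0 : 0 ≤ a₁) (h1 : a₁ < 1)
    (hnZ : ¬∃ m n : ℤ, a₁ = (m : ℚ) ∧ a₂ = (n : ℚ))
    (N : ℕ) (hNpos : 0 < N)
    (hNa : (∃ k : ℤ, (N : ℚ) * a₁ = (k : ℚ)) ∧ (∃ k : ℤ, (N : ℚ) * a₂ = (k : ℚ)))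
    (hNmin : ∀ M : ℕ, 0 < M →
      ((∃ k : ℤ, (M : ℚ) * a₁ = (k : ℚ)) ∧ (∃ k : ℤ, (M : ℚ) * a₂ = (k : ℚ))) → N ≤ M) :
    (∀ τ : ℂ, 0 < τ.im → siegel (a₁ : ℝ) (a₂ : ℝ) τ ≠ 0) ∧
    ∃ n : ℕ, 1 ≤ n ∧ ∃ P : ℕ → Polynomial ℤ,
      ∀ τ : ℂ, 0 < τ.im →
        ((1 - Complex.exp (2 * Real.pi * I / (N : ℂ))) / siegel (a₁ : ℝ) (a₂ : ℝ) τ) ^ n +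
          ∑ i ∈ Finset.range n,
            Polynomial.aeval (jfun τ) (P i) *
              ((1 - Complex.exp (2 * Real.pi * I / (N : ℂ))) / siegel (a₁ : ℝ) (a₂ : ℝ) τ) ^ i
          = 0 :=
  stmt_17_general a₁ a₂ hnZ N hNpos hNa hNmin
end

section
/- Let s and t be positive integers with s ≤ t, let M be an s × t matrix with integer entries whose rank (over ℚ) equals s, and let A be a real number such that every entry of M has absolute value at most A. Then there exists a vector b ∈ ℤᵗ such that ∑_{j=1}^t |b_j| ≤ s^{s/2+1}·A^{s−1} and such that all s coordinates of the vector M·b are strictly positive. -/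
/-!
Some `s` columns of `M` form an invertible matrix `N`. By Cramer's rule the integer vector
`c = ± N.cramer 1` satisfies `N *ᵥ c = |det N| • 1`, and extending `c` by zero to the remaining
columns gives `b`. Each entry of `c` is, up to sign, the determinant of `N` with one column replaced
by ones, so Hadamard's inequality bounds it by `√s * (√s * A) ^ (s - 1)`.
-/

open Function WithLp
open scoped Matrix

section Hadamard

variable {ι κ 𝕜 E : Type*} [Fintype ι] [Fintype κ] [DecidableEq κ] [RCLike 𝕜]
  [NormedAddCommGroup E] [InnerProductSpace 𝕜 E]

theorem norm_toBasis_det_le_prod_norm_of_linearOrder [LinearOrder ι]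
    [LocallyFiniteOrderBot ι] (e : OrthonormalBasis ι 𝕜 E) (v : ι → E) :
    ‖e.toBasis.det v‖ ≤ ∏ i, ‖v i‖ := by
  have : FiniteDimensional 𝕜 E := e.toBasis.finiteDimensional_of_finite
  have finrank_eq : Module.finrank 𝕜 E = Fintype.card ι := Module.finrank_eq_card_basis e.toBasis
  let b := InnerProductSpace.gramSchmidtOrthonormalBasis finrank_eq v
  have det_eq : e.toBasis.det v = e.toBasis.det b * b.toBasis.det v := by
    simp only [Module.Basis.det_apply, ← Matrix.det_mul, ← b.coe_toBasis,
      Module.Basis.toMatrix_mul_toMatrix]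
  calc ‖e.toBasis.det v‖ = ∏ i, ‖inner 𝕜 (b i) (v i)‖ := by
        rw [det_eq, norm_mul, e.det_to_matrix_orthonormalBasis, one_mul,
          InnerProductSpace.gramSchmidtOrthonormalBasis_det, norm_prod]
    _ ≤ ∏ i, ‖v i‖ := Finset.prod_le_prod (fun _ _ ↦ norm_nonneg _) fun i _ ↦ by
        simpa only [b.norm_eq_one, one_mul] using norm_inner_le_norm (𝕜 := 𝕜) (b i) (v i)

theorem norm_toBasis_det_le_prod_norm (e : OrthonormalBasis κ 𝕜 E) (v : κ → E) :
    ‖e.toBasis.det v‖ ≤ ∏ i, ‖v i‖ := by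
  let σ := Fintype.equivFin κ
  calc ‖e.toBasis.det v‖ = ‖(e.reindex σ).toBasis.det (v ∘ σ.symm)‖ := by
        rw [e.reindex_toBasis, Module.Basis.det_reindex, comp_assoc, σ.symm_comp_self, comp_id]
    _ ≤ ∏ i, ‖v (σ.symm i)‖ := norm_toBasis_det_le_prod_norm_of_linearOrder _ _
    _ = ∏ i, ‖v i‖ := σ.symm.prod_comp fun i ↦ ‖v i‖

theorem norm_det_le_prod_norm_col (N : Matrix κ κ 𝕜) : ‖N.det‖ ≤ ∏ j, ‖toLp 2 (N.col j)‖ :=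
  norm_toBasis_det_le_prod_norm (EuclideanSpace.basisFun κ 𝕜) fun j ↦ toLp 2 (N.col j)

theorem norm_toLp_two_le_sqrt_card_mul {v : ι → E} {C : ℝ} (hv : ∀ i, ‖v i‖ ≤ C) :
    ‖toLp 2 v‖ ≤ √(Fintype.card ι) * C := by
  cases isEmpty_or_nonempty ι
  · simp [Subsingleton.elim v 0]
  calc ‖toLp 2 v‖ ≤ √(Fintype.card ι) * ‖v‖ := by
        simpa [Real.sqrt_eq_rpow] using (PiLp.lipschitzWith_toLp 2 _).norm_sub_le v 0
    _ ≤ √(Fintype.card ι) * C := by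
        gcongr
        exact (pi_norm_le_iff_of_nonempty v).mpr hv

theorem norm_cramer_le_norm_mul_prod_norm_col (N : Matrix κ κ 𝕜) (v : κ → 𝕜) (k : κ) :
    ‖N.cramer v k‖ ≤ ‖toLp 2 v‖ * ∏ j ∈ Finset.univ.erase k, ‖toLp 2 (N.col j)‖ := by
  rw [Matrix.cramer_apply]
  refine (norm_det_le_prod_norm_col _).trans_eq ?_
  rw [← Finset.mul_prod_erase _ _ (Finset.mem_univ k)]
  have col_self : (N.updateCol k v).col k = v := funext fun _ ↦ Matrix.updateCol_self
  have col_ne (j : κ) (hj : j ∈ Finset.univ.erase k) : (N.updateCol k v).col j = N.col j :=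
    funext fun _ ↦ Matrix.updateCol_ne (Finset.ne_of_mem_erase hj)
  rw [col_self, Finset.prod_congr rfl fun j hj ↦ by rw [col_ne j hj]]

theorem norm_cramer_le_of_norm_le {N : Matrix κ κ 𝕜} {v : κ → 𝕜} {A B : ℝ}
    (hN : ∀ i j, ‖N i j‖ ≤ A) (hv : ∀ i, ‖v i‖ ≤ B) (k : κ) :
    ‖N.cramer v k‖ ≤
      √(Fintype.card κ) * B * (√(Fintype.card κ) * A) ^ (Fintype.card κ - 1) := by
  have : Nonempty κ := ⟨k⟩
  refine (norm_cramer_le_norm_mul_prod_norm_col N v k).trans ?_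
  gcongr
  · exact (norm_nonneg _).trans (norm_toLp_two_le_sqrt_card_mul hv)
  · exact norm_toLp_two_le_sqrt_card_mul hv
  · rw [← Finset.card_univ, ← Finset.card_erase_of_mem (Finset.mem_univ k), ← Finset.prod_const]
    exact Finset.prod_le_prod (fun _ _ ↦ norm_nonneg _) fun j _ ↦
      norm_toLp_two_le_sqrt_card_mul fun i ↦ hN i j

theorem abs_cramer_le_of_abs_le {N : Matrix κ κ ℤ} {v : κ → ℤ} {A B : ℝ}
    (hN : ∀ i j, |(N i j : ℝ)| ≤ A) (hv : ∀ i, |(v i : ℝ)| ≤ B) (k : κ) :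
    |(N.cramer v k : ℝ)| ≤
      √(Fintype.card κ) * B * (√(Fintype.card κ) * A) ^ (Fintype.card κ - 1) := by
  have cast_cramer : (N.cramer v k : ℝ) = (N.map (↑)).cramer (fun i ↦ (v i : ℝ)) k := by
    rw [Matrix.cramer_apply, Matrix.cramer_apply, Int.cast_det, Matrix.map_updateCol]
    rfl
  rw [cast_cramer]
  exact norm_cramer_le_of_norm_le (𝕜 := ℝ) hN hv k

end Hadamard

theorem exists_injective_submatrix_det_ne_zero_of_rank_eq_card {m n K : Type*} [Fintype m]
    [DecidableEq m] [Fintype n] [Field K] {M : Matrix m n K} (hM : M.rank = Fintype.card m) :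
    ∃ f : m → n, Injective f ∧ (M.submatrix id f).det ≠ 0 := by
  obtain ⟨κ, a, ha, hspan, hli⟩ := exists_linearIndependent' K M.col
  have : Fintype κ := Fintype.ofInjective a ha
  have card_eq : Fintype.card m = Fintype.card κ := by
    rw [← finrank_span_eq_card hli, hspan, ← M.rank_eq_finrank_span_cols, hM]
  let e : m ≃ κ := Fintype.equivOfCardEq card_eq
  have isUnit_submatrix : IsUnit (M.submatrix id (a ∘ e)) :=
    Matrix.linearIndependent_cols_iff_isUnit.mp (hli.comp e e.injective)
  exact ⟨a ∘ e, ha.comp e.injective,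
    ((Matrix.isUnit_iff_isUnit_det _).mp isUnit_submatrix).ne_zero⟩

section Extend

variable {ι κ α β : Type*} [Fintype ι] [Fintype κ]

theorem sum_extend_zero_apply [Zero α] [AddCommMonoid β] {f : κ → ι} (hf : Injective f)
    (c : κ → α) {g : ι → α → β} (hg : ∀ i, g i 0 = 0) :
    ∑ i, g i (extend f c 0 i) = ∑ k, g (f k) (c k) := by
  refine (Fintype.sum_of_injective f hf _ _ (fun i hi ↦ ?_) fun k ↦ ?_).symm
  · rw [extend_apply' _ _ _ hi, Pi.zero_apply, hg]
  · rw [hf.extend_apply]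

theorem mulVec_extend_zero {m : Type*} [NonUnitalNonAssocSemiring α] (M : Matrix m ι α) {f : κ → ι}
    (hf : Injective f) (c : κ → α) : M *ᵥ extend f c 0 = M.submatrix id f *ᵥ c := by
  funext i
  exact sum_extend_zero_apply hf c fun j ↦ mul_zero (M i j)

end Extend

theorem exists_mulVec_eq_abs_det_smul {n R : Type*} [Fintype n] [DecidableEq n] [CommRing R]
    [LinearOrder R] (N : Matrix n n R) (v : n → R) :
    ∃ c, N *ᵥ c = |N.det| • v ∧ ∀ k, |c k| = |N.cramer v k| := by
  obtain abs_det | abs_det := abs_choice N.det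
  · exact ⟨N.cramer v, by rw [abs_det, N.mulVec_cramer], fun _ ↦ rfl⟩
  · exact ⟨-N.cramer v, by rw [abs_det, Matrix.mulVec_neg, N.mulVec_cramer, neg_smul],
      fun _ ↦ abs_neg _⟩

theorem exists_pos_mulVec_eq_smul_of_rank_eq_card {m n : Type*} [Fintype m] [Fintype n]
    {M : Matrix m n ℤ} (hM : (M.map ((↑) : ℤ → ℚ)).rank = Fintype.card m) {A B : ℝ}
    (hA : ∀ i j, |(M i j : ℝ)| ≤ A) {v : m → ℤ} (hv : ∀ i, |(v i : ℝ)| ≤ B) :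
    ∃ d > (0 : ℤ), ∃ b : n → ℤ, M *ᵥ b = d • v ∧
      ∑ j, |(b j : ℝ)| ≤ Fintype.card m *
        (√(Fintype.card m) * B * (√(Fintype.card m) * A) ^ (Fintype.card m - 1)) := by
  classical
  obtain ⟨f, hf, det_ne_zero⟩ := exists_injective_submatrix_det_ne_zero_of_rank_eq_card hM
  rw [Matrix.submatrix_map, ← Int.cast_det, Int.cast_ne_zero] at det_ne_zero
  obtain ⟨c, mulVec_c, abs_c⟩ := exists_mulVec_eq_abs_det_smul (M.submatrix id f) v
  refine ⟨|(M.submatrix id f).det|, abs_pos.mpr det_ne_zero, extend f c 0,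
    (mulVec_extend_zero M hf c).trans mulVec_c, ?_⟩
  rw [sum_extend_zero_apply hf c (g := fun _ x ↦ |(x : ℝ)|) fun _ ↦ by simp, ← nsmul_eq_mul]
  refine Finset.sum_le_card_nsmul _ _ _ fun k _ ↦ ?_
  rw [← Int.cast_abs, abs_c, Int.cast_abs]
  exact abs_cramer_le_of_abs_le (fun i j ↦ hA i (f j)) hv k

theorem mul_sqrt_mul_sqrt_mul_pow_pred_eq_rpow {s : ℕ} (hs : 0 < s) (A : ℝ) :
    s * (√s * (√s * A) ^ (s - 1)) = (s : ℝ) ^ ((s : ℝ) / 2 + 1) * A ^ ((s : ℝ) - 1) := by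
  have sqrt_pow : √s * √s ^ (s - 1) = (s : ℝ) ^ ((s : ℝ) / 2) := by
    rw [mul_pow_sub_one hs.ne', Real.sqrt_eq_rpow, ← Real.rpow_mul_natCast s.cast_nonneg,
      one_div_mul_eq_div]
  rw [mul_pow, ← mul_assoc √s, sqrt_pow, Real.rpow_add_one (by positivity), ← Nat.cast_pred hs,
    Real.rpow_natCast]
  ring

/-- Let `M` be an `s × t` integer matrix of rank `s` (over `ℚ`) with entries bounded by `A`
in absolute value. Then there is `b ∈ ℤᵗ` with `∑|b_j| ≤ s^{s/2+1}·A^{s−1}` such that all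
coordinates of `M·b` are strictly positive. -/
theorem stmt_18 (s t : ℕ) (hs : 0 < s) (hst : s ≤ t)
    (M : Matrix (Fin s) (Fin t) ℤ)
    (hrank : (M.map ((↑) : ℤ → ℚ)).rank = s)
    (A : ℝ) (hA : ∀ i j, (|M i j| : ℝ) ≤ A) :
    ∃ b : Fin t → ℤ,
      (∑ j, (|b j| : ℝ)) ≤ (s : ℝ) ^ ((s : ℝ) / 2 + 1) * A ^ ((s : ℝ) - 1) ∧
      ∀ i, 0 < (M.mulVec b) i := by
  obtain ⟨d, d_pos, b, mulVec_b, sum_b⟩ := exists_pos_mulVec_eq_smul_of_rank_eq_card (v := 1)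
    (B := 1) (hrank.trans (Fintype.card_fin s).symm) hA fun _ ↦ by simp
  refine ⟨b, ?_, fun i ↦ ?_⟩
  · rwa [Fintype.card_fin, mul_one, mul_sqrt_mul_sqrt_mul_pow_pred_eq_rpow hs] at sum_b
  · simpa [mulVec_b] using d_pos
end
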